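/- Let a ∈ (0,1) and s* = 1/2 + a/2. There exist b ∈ (0,1/2) and a constant C > 0 such that for all Schwartz functions u, v on ℝ² one has ‖∂ₓ(uv)‖_{Y^{−b}_{−s*, s*}} ≤ C ‖u‖_{Y^{1/2}_{−s*, s*}} ( ‖v‖_{X^{1/2}_{s*}} + ‖v‖_{X^{1/2}_{s*}}^{1/2} ‖v‖_{Y^{1/2}_{−s*, s*}}^{1/2} ) + C ‖v‖_{Y^{1/2}_{−s*, s*}} ( ‖u‖_{X^{1/2}_{s*}} + ‖u‖_{X^{1/2}_{s*}}^{1/2} ‖u‖_{Y^{1/2}_{−s*, s*}}^{1/2} ) + C ‖u‖_{X^{1/2}_{s*}} ‖v‖_{X^{1/2}_{s*}}. -/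

import Mathlib

/-!
On the Fourier side, `∂ₓ` becomes multiplication by `ξ`, products become convolutions, and the
weights `x` and `t` become derivatives in `ξ` and `λ`. Everything is estimated through absolute
values of Fourier transforms, with norms `eX` in `[0, ∞]`; for Schwartz functions these are finite
and agree with `Xnorm` (`Xnorm_eq_toReal`). The exponent is `b = 1/2 - a/16`.

**Placing the weight.** For a fixed output frequency `z`, let `θ` be a smooth function of the ratio
of the first input frequency to that of `z`, vanishing below `1/4` and equal to one above `3/4`.
The derivative representing the weight is kept on the first factor where `θ` lives and is
integrated by parts onto the second factor where `1 - θ` lives (`convolution_by_parts`). The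
weighted factor then always carries a frequency comparable to or larger than the other two (the
region `regP`). Since `∂θ` is of size `1/|ξ|`, the error is a product without weight and without
derivative (`weighted_product_bound`), which `prod_estimate` handles by Cauchy–Schwarz; it produces
the term `‖u‖_X ‖v‖_X`.

**The core estimate** (`core_estimate`) bounds the part over `regP`, with the weighted factor `F`
and the other factor `V` localized to dyadic modulations.
* If `V` has much lower frequency than `F` (`HL_main`), the resonance function
  `ω(ξ₁ + ξ₂) - ω(ξ₁) - ω(ξ₂)` is at least of size `|ξ₁|^{1+a} |ξ₂|` and at most of the size of the
  largest modulation. Schur's test applies, because the derivative `|ξ₁|` splits as the geometric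
  mean of `|ξ₁|^{1+a}`, absorbed by transversality of the modulation strips, and `|ξ₁|^{1-a}`,
  absorbed by the resonance bound, which confines `ξ₂` to a short interval. Only a majorant of `V`
  depending on `λ` alone enters.
* If the frequencies are comparable or bounded (`HH_main`), the resonance bound leaves an integrable
  power of the input frequency to spare, and Cauchy–Schwarz over a modulation strip suffices.

Both cases gain a power of the largest modulation, which makes the dyadic sums converge for `b`
slightly below `1/2`.

**The majorant.** The fundamental theorem of calculus in `ξ`, applied to `χ_j(λ - ω(ξ)) v̂(ξ, λ)²`,
bounds the pieces of `v̂` by functions of `λ` alone (`rchi_mul_le_majG`). As `∂_ξ v̂` is the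
transform of `i x v`, the sum of their `L²` norms is at most a multiple of
`‖v‖_X + ‖v‖_X^{1/2} ‖v‖_Y^{1/2}` (`tsum_majG_le`).
-/

open MeasureTheory Complex

noncomputable section

/-- The dispersive symbol `ω(ξ) = ξ |ξ|^(1+a)`. -/
def disp (a ξ : ℝ) : ℝ := ξ * |ξ| ^ (1 + a)

/-- Fourier transform on `ℝ`, convention `f̂(ξ) = ∫ e^{ixξ} f(x) dx`. -/
def FT1 (f : ℝ → ℂ) (ξ : ℝ) : ℂ :=
  ∫ x : ℝ, Complex.exp (Complex.I * ((x * ξ : ℝ) : ℂ)) * f x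

/-- Spacetime Fourier transform, convention `f̂(ξ,λ) = ∫ e^{i(xξ+tλ)} f(x,t) dx dt`,
for `f : ℝ × ℝ → ℂ` with first coordinate `x` (space) and second `t` (time). -/
def FT2 (f : ℝ × ℝ → ℂ) (ξ lam : ℝ) : ℂ :=
  ∫ p : ℝ × ℝ, Complex.exp (Complex.I * ((p.1 * ξ + p.2 * lam : ℝ) : ℂ)) * f p

/-- The dyadic cutoffs `χ_j`: `χ_0 = χ₀` and `χ_j(z) = χ(2^{-j} z)` for `j ≥ 1`. -/
def chiJ (χ₀ χ : ℝ → ℝ) (j : ℕ) (z : ℝ) : ℝ :=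
  if j = 0 then χ₀ z else χ ((2 : ℝ) ^ (-(j : ℝ)) * z)

/-- Hypotheses on the fixed dyadic cutoffs. -/
structure DyadicCutoffs (χ₀ χ : ℝ → ℝ) : Prop where
  smooth0 : ContDiff ℝ (⊤ : ℕ∞) χ₀
  even0 : ∀ z, χ₀ (-z) = χ₀ z
  mem0 : ∀ z, χ₀ z ∈ Set.Icc (0 : ℝ) 1
  supp0 : ∀ z, 2 < |z| → χ₀ z = 0
  one0 : ∀ z, |z| ≤ 1 → χ₀ z = 1
  smooth1 : ContDiff ℝ (⊤ : ℕ∞) χ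
  even1 : ∀ z, χ (-z) = χ z
  mem1 : ∀ z, χ z ∈ Set.Icc (0 : ℝ) 1
  supp1 : ∀ z, χ z ≠ 0 → 1 / 2 < |z| ∧ |z| < 2
  partition : ∀ z, ∑' j : ℕ, chiJ χ₀ χ j z = 1

/-- A smooth time cutoff supported in `[-1,1]`. -/
structure TimeCutoff (ψ : ℝ → ℝ) : Prop where
  smooth : ContDiff ℝ (⊤ : ℕ∞) ψ
  supp : ∀ t, ψ t ≠ 0 → |t| ≤ 1

/-- The norm `‖f‖_{X^b_s}`. -/
def Xnorm (a : ℝ) (χ₀ χ : ℝ → ℝ) (b s : ℝ) (f : ℝ × ℝ → ℂ) : ℝ :=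
  ∑' j : ℕ, (2 : ℝ) ^ ((j : ℝ) * b) *
    (∫ p : ℝ × ℝ, chiJ χ₀ χ j (p.2 - disp a p.1) * (1 + |p.1|) ^ (2 * s) *
      ‖FT2 f p.1 p.2‖ ^ 2) ^ ((1 : ℝ) / 2)

/-- The norm `‖f‖_{Y^b_{s₀,s₁}} = ‖x·f‖_{X^b_{s₀}} + ‖t·f‖_{X^b_{s₁}}`. -/
def Ynorm (a : ℝ) (χ₀ χ : ℝ → ℝ) (b s₀ s₁ : ℝ) (f : ℝ × ℝ → ℂ) : ℝ :=
  Xnorm a χ₀ χ b s₀ (fun p => (p.1 : ℂ) * f p) +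
    Xnorm a χ₀ χ b s₁ (fun p => (p.2 : ℂ) * f p)

/-- The norm `‖f‖_{Z^b_s} = ‖f‖_{X^b_s} + ‖f‖_{Y^b_{s-2s*,s}}`, where `s* = 1/2 + a/2`. -/
def Znorm (a : ℝ) (χ₀ χ : ℝ → ℝ) (b s : ℝ) (f : ℝ × ℝ → ℂ) : ℝ :=
  Xnorm a χ₀ χ b s f + Ynorm a χ₀ χ b (s - 2 * (1 / 2 + a / 2)) s f

/-- The norm `‖f‖_{X̃^b_s}`. -/
def XtildeNorm (a b s : ℝ) (f : ℝ × ℝ → ℂ) : ℝ :=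
  (∫ p : ℝ × ℝ, (1 + |p.2 - disp a p.1|) ^ (2 * b) * (1 + |p.1|) ^ (2 * s) *
    ‖FT2 f p.1 p.2‖ ^ 2) ^ ((1 : ℝ) / 2)

/-- The Sobolev norm `‖g‖_{H^s} = (∫ (1+|ξ|)^{2s} |ĝ(ξ)|² dξ)^{1/2}`. -/
def Hnorm (s : ℝ) (g : ℝ → ℂ) : ℝ :=
  (∫ ξ : ℝ, (1 + |ξ|) ^ (2 * s) * ‖FT1 g ξ‖ ^ 2) ^ ((1 : ℝ) / 2)

/-- The weighted norm `‖g‖_{F^s} = ‖g‖_{H^s} + ‖x·g‖_{H^{s-2s*}}` (here `sstar = s*`). -/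
def Fnorm (sstar s : ℝ) (g : ℝ → ℂ) : ℝ :=
  Hnorm s g + Hnorm (s - 2 * sstar) (fun x => (x : ℂ) * g x)

/-- The `L^p` norm `(∫ ‖f‖^p)^{1/p}`. -/
def Lpnorm {α : Type*} [MeasureSpace α] {E : Type*} [NormedAddCommGroup E]
    (p : ℝ) (f : α → E) : ℝ :=
  (∫ x, ‖f x‖ ^ p) ^ (1 / p)

/-- The linear propagator `W(t)`, defined via Fourier inversion so that its Fourier
transform in `x` is `e^{itω(ξ)} û₀(ξ)`. -/
def Wgrp (a : ℝ) (u₀ : ℝ → ℂ) (t x : ℝ) : ℂ :=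
  ((1 / (2 * Real.pi) : ℝ) : ℂ) *
    ∫ ξ : ℝ, Complex.exp (-(Complex.I * ((x * ξ : ℝ) : ℂ))) *
      (Complex.exp (Complex.I * ((t * disp a ξ : ℝ) : ℂ)) * FT1 u₀ ξ)

/-- The Fourier multiplier `D^σ` with symbol `|ξ|^σ`, via Fourier inversion. -/
def Dop (σ : ℝ) (g : ℝ → ℂ) (x : ℝ) : ℂ :=
  ((1 / (2 * Real.pi) : ℝ) : ℂ) *
    ∫ ξ : ℝ, Complex.exp (-(Complex.I * ((x * ξ : ℝ) : ℂ))) *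
      (((|ξ| ^ σ : ℝ) : ℂ) * FT1 g ξ)

open scoped ENNReal

/-! ### The dispersion relation -/

lemma disp_neg (a x : ℝ) : disp a (-x) = -disp a x := by
  simp [disp]

lemma disp_hasDerivAt {a : ℝ} (ha : 0 < a) (x : ℝ) :
    HasDerivAt (disp a) ((2 + a) * |x| ^ (1 + a)) x := by
  have h := (hasDerivAt_id x).mul (hasDerivAt_abs_rpow x (p := 1 + a) (by linarith))
  refine h.congr_deriv ?_
  simp only [id]
  rcases eq_or_ne x 0 with rfl | hx
  · simp [Real.zero_rpow (by linarith : (1 + a) ≠ 0)]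
  · have hx' : 0 < |x| := abs_pos.mpr hx
    have : |x| ^ (1 + a) = |x| ^ (1 + a - 2) * |x| ^ (2 : ℝ) := by
      rw [← Real.rpow_add hx']; ring_nf
    rw [this, Real.rpow_two, sq_abs]; ring

lemma disp_continuous {a : ℝ} (ha : 0 < a) : Continuous (disp a) :=
  continuous_iff_continuousAt.mpr fun x => (disp_hasDerivAt ha x).continuousAt

lemma disp_sub_le {a : ℝ} (ha : 0 < a) (ha1 : a < 1) {R x y : ℝ} (hx : |x| ≤ R) (hy : |y| ≤ R) :
    |disp a x - disp a y| ≤ 3 * R ^ (1 + a) * |x - y| := by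
  have := Convex.norm_image_sub_le_of_norm_hasDerivWithin_le (f := disp a)
    (f' := fun x => (2 + a) * |x| ^ (1 + a)) (s := Set.Icc (-R) R) (C := 3 * R ^ (1 + a))
    (x := y) (y := x)
    (fun z _ => (disp_hasDerivAt ha z).hasDerivWithinAt) (fun z hz => by
      have hz' : |z| ≤ R := abs_le.mpr hz
      have h1 : |z| ^ (1 + a) ≤ R ^ (1 + a) :=
        Real.rpow_le_rpow (abs_nonneg _) hz' (by linarith)
      have h0 : 0 ≤ |z| ^ (1 + a) := by positivity
      rw [Real.norm_of_nonneg (by positivity)]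
      nlinarith) (convex_Icc _ _) (abs_le.mp hy) (abs_le.mp hx)
  simpa [Real.norm_eq_abs] using this

lemma disp_sub_ge_aux {a : ℝ} (ha : 0 < a) {r x y : ℝ} (hr : 0 ≤ r) (hy : r ≤ y) (hxy : y ≤ x) :
    r ^ (1 + a) * (x - y) ≤ disp a x - disp a y := by
  have hy0 : 0 ≤ y := hr.trans hy
  have hx0 : 0 ≤ x := hy0.trans hxy
  simp only [disp, abs_of_nonneg hy0, abs_of_nonneg hx0]
  have h1 : r ^ (1 + a) ≤ x ^ (1 + a) := Real.rpow_le_rpow hr (hy.trans hxy) (by linarith)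
  have h2 : y ^ (1 + a) ≤ x ^ (1 + a) := Real.rpow_le_rpow hy0 hxy (by linarith)
  nlinarith [mul_le_mul_of_nonneg_left h2 hy0, mul_le_mul_of_nonneg_right h1 (sub_nonneg.mpr hxy)]

/-- On either half line away from `(-r, r)`, the symbol expands distances by at least
`r ^ (1 + a)`. -/
lemma disp_sub_ge {a : ℝ} (ha : 0 < a) {r x y : ℝ} (hr : 0 ≤ r) (hx : r ≤ |x|) (hy : r ≤ |y|)
    (hs : 0 ≤ x * y) :
    r ^ (1 + a) * |x - y| ≤ |disp a x - disp a y| := by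
  have key : ∀ x y : ℝ, 0 ≤ x → 0 ≤ y → r ≤ x → r ≤ y →
      r ^ (1 + a) * |x - y| ≤ |disp a x - disp a y| := by
    intro x y hx0 hy0 hx hy
    rcases le_total y x with h | h
    · rw [abs_of_nonneg (sub_nonneg.mpr h)]
      exact (disp_sub_ge_aux ha hr hy h).trans (le_abs_self _)
    · rw [abs_sub_comm, abs_of_nonneg (sub_nonneg.mpr h), abs_sub_comm]
      exact (disp_sub_ge_aux ha hr hx h).trans (le_abs_self _)
  rcases le_total 0 x with h0 | h0
  · rcases le_total 0 y with h1 | h1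
    · rw [abs_of_nonneg h0] at hx; rw [abs_of_nonneg h1] at hy
      exact key x y h0 h1 hx hy
    · rcases eq_or_lt_of_le h1 with rfl | h1
      · simp at hy
        have : r = 0 := le_antisymm hy hr
        subst this
        rw [Real.zero_rpow (by linarith)]; simp
      · rcases eq_or_lt_of_le h0 with rfl | h0
        · simp at hx
          have : r = 0 := le_antisymm hx hr
          subst this
          rw [Real.zero_rpow (by linarith)]; simp
        · nlinarith
  · rcases le_total 0 y with h1 | h1
    · rcases eq_or_lt_of_le h1 with rfl | h1
      · simp at hy
        have : r = 0 := le_antisymm hy hr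
        subst this
        rw [Real.zero_rpow (by linarith)]; simp
      · rcases eq_or_lt_of_le h0 with rfl | h0
        · simp at hx
          have : r = 0 := le_antisymm hx hr
          subst this
          rw [Real.zero_rpow (by linarith)]; simp
        · nlinarith
    · rw [abs_of_nonpos h0] at hx; rw [abs_of_nonpos h1] at hy
      have := key (-x) (-y) (by linarith) (by linarith) hx hy
      rw [disp_neg, disp_neg] at this
      rwa [show -x - -y = -(x - y) by ring, abs_neg,
        show -disp a x - -disp a y = -(disp a x - disp a y) by ring, abs_neg] at this

lemma res_pos {a : ℝ} (ha : 0 < a) {x y : ℝ} (hx : 0 ≤ x) (hy : 0 ≤ y) :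
    x * y ^ (1 + a) + y * x ^ (1 + a) ≤ disp a (x + y) - disp a x - disp a y := by
  simp only [disp, abs_of_nonneg hx, abs_of_nonneg hy, abs_of_nonneg (add_nonneg hx hy)]
  have h := Real.add_rpow_le_rpow_add hx hy (p := 1 + a) (by linarith)
  nlinarith [mul_le_mul_of_nonneg_left h hx, mul_le_mul_of_nonneg_left h hy]

/-- Lower bound for the resonance function of three frequencies `x`, `y`, `x + y` in terms of the
absolute values of the two smaller ones, according to which of the three is the largest. -/
lemma res_cases {a : ℝ} (ha : 0 < a) (x y : ℝ) :
    (|x + y| = |x| + |y| ∧ |x| * |y| ^ (1 + a) + |y| * |x| ^ (1 + a) ≤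
        |disp a (x + y) - disp a x - disp a y|) ∨
    (|x| = |x + y| + |y| ∧ |x + y| * |y| ^ (1 + a) + |y| * |x + y| ^ (1 + a) ≤
        |disp a (x + y) - disp a x - disp a y|) ∨
    (|y| = |x + y| + |x| ∧ |x + y| * |x| ^ (1 + a) + |x| * |x + y| ^ (1 + a) ≤
        |disp a (x + y) - disp a x - disp a y|) := by
  -- the statement for `0 ≤ x + y`; the general case follows by oddness
  have key : ∀ x y : ℝ, 0 ≤ x + y →
    (|x + y| = |x| + |y| ∧ |x| * |y| ^ (1 + a) + |y| * |x| ^ (1 + a) ≤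
        |disp a (x + y) - disp a x - disp a y|) ∨
    (|x| = |x + y| + |y| ∧ |x + y| * |y| ^ (1 + a) + |y| * |x + y| ^ (1 + a) ≤
        |disp a (x + y) - disp a x - disp a y|) ∨
    (|y| = |x + y| + |x| ∧ |x + y| * |x| ^ (1 + a) + |x| * |x + y| ^ (1 + a) ≤
        |disp a (x + y) - disp a x - disp a y|) := by
    intro x y hxy
    rcases le_total 0 x with hx | hx
    · rcases le_total 0 y with hy | hy
      · left
        rw [abs_of_nonneg hx, abs_of_nonneg hy, abs_of_nonneg hxy]
        exact ⟨rfl, (res_pos ha hx hy).trans (le_abs_self _)⟩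
      · right; left
        rw [abs_of_nonneg hx, abs_of_nonpos hy, abs_of_nonneg hxy]
        refine ⟨by ring, ?_⟩
        have := res_pos ha hxy (neg_nonneg.mpr hy)
        rw [disp_neg, show x + y + -y = x by ring] at this
        refine this.trans ?_
        rw [abs_sub_comm, abs_sub_comm]
        refine le_trans (le_of_eq ?_) (neg_le_abs _)
        ring
    · right; right
      have hy : 0 ≤ y := by linarith
      rw [abs_of_nonneg hy, abs_of_nonpos hx, abs_of_nonneg hxy]
      refine ⟨by ring, ?_⟩
      have := res_pos ha hxy (neg_nonneg.mpr hx)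
      rw [disp_neg, show x + y + -x = y by ring] at this
      refine this.trans ?_
      refine le_trans (le_of_eq ?_) (neg_le_abs _)
      ring
  rcases le_total 0 (x + y) with h | h
  · exact key x y h
  · have := key (-x) (-y) (by linarith)
    rw [show -x + -y = -(x + y) by ring] at this
    simp only [disp_neg, abs_neg] at this
    rwa [show -disp a (x + y) - -disp a x - -disp a y
      = -(disp a (x + y) - disp a x - disp a y) by ring, abs_neg] at this

lemma res_HL {a : ℝ} (ha : 0 < a) (ha1 : a < 1) {x y : ℝ} (h : |y| ≤ |x| / 8) :
    |x| ^ (1 + a) * |y| ≤ 4 * |disp a (x + y) - disp a x - disp a y| := by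
  have hx := abs_nonneg x
  have hy := abs_nonneg y
  have h2 : (|x| / 2) ^ (1 + a) ≥ |x| ^ (1 + a) / 4 := by
    rw [Real.div_rpow hx (by norm_num)]
    gcongr
    calc (2 : ℝ) ^ (1 + a) ≤ 2 ^ (2 : ℝ) :=
          Real.rpow_le_rpow_of_exponent_le (by norm_num) (by linarith)
      _ = 4 := by norm_num
  have hp : 0 ≤ |x| ^ (1 + a) := by positivity
  rcases res_cases ha x y with ⟨h1, h3⟩ | ⟨h1, h3⟩ | ⟨h1, h3⟩
  · have : 0 ≤ |x| * |y| ^ (1 + a) := by positivity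
    nlinarith [mul_nonneg hy hp]
  · have h4 : |x| / 2 ≤ |x + y| := by linarith
    have h5 : (|x| / 2) ^ (1 + a) ≤ |x + y| ^ (1 + a) :=
      Real.rpow_le_rpow (by positivity) h4 (by linarith)
    have : 0 ≤ |x + y| * |y| ^ (1 + a) := by positivity
    nlinarith [mul_le_mul_of_nonneg_left (h2.trans h5) hy]
  · have h0 := abs_nonneg (x + y)
    have : |x| = 0 := by linarith
    have : |y| = 0 := by linarith
    simp [this]

lemma res_HH {a : ℝ} (ha : 0 < a) (ha1 : a < 1) {x y : ℝ} (h : |x| ≤ 8 * |y|) :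
    |x| ^ (1 + a) * |x + y| ≤ 64 * |disp a (x + y) - disp a x - disp a y| := by
  have hx := abs_nonneg x
  have hy := abs_nonneg y
  have h2 : |x| ^ (1 + a) / 64 ≤ (|x| / 8) ^ (1 + a) := by
    rw [Real.div_rpow hx (by norm_num)]
    gcongr
    calc (8 : ℝ) ^ (1 + a) ≤ 8 ^ (2 : ℝ) :=
          Real.rpow_le_rpow_of_exponent_le (by norm_num) (by linarith)
      _ = 64 := by norm_num
  have h5 : (|x| / 8) ^ (1 + a) ≤ |y| ^ (1 + a) :=
    Real.rpow_le_rpow (by positivity) (by linarith) (by linarith)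
  have hp : 0 ≤ |x| ^ (1 + a) := by positivity
  have h0 := abs_nonneg (x + y)
  rcases res_cases ha x y with ⟨h1, h3⟩ | ⟨h1, h3⟩ | ⟨h1, h3⟩
  · have : 0 ≤ |x| * |y| ^ (1 + a) := by positivity
    nlinarith [mul_nonneg hy hp]
  · have : 0 ≤ |y| * |x + y| ^ (1 + a) := by positivity
    nlinarith [mul_le_mul_of_nonneg_left (h2.trans h5) h0]
  · have : 0 ≤ |x| * |x + y| ^ (1 + a) := by positivity
    nlinarith [mul_nonneg h0 hp]

/-! ### Sublevel sets of expanding functions -/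

lemma volume_le_of_expand {s : Set ℝ} {φ : ℝ → ℝ} {c J m : ℝ} (hm : 0 < m)
    (h1 : ∀ x ∈ s, ∀ y ∈ s, m * |x - y| ≤ |φ x - φ y|) (h2 : ∀ x ∈ s, |φ x - c| ≤ J) :
    volume s ≤ ENNReal.ofReal (2 * J / m) := by
  refine (Real.volume_le_diam s).trans (Metric.ediam_le fun x hx y hy => ?_)
  rw [edist_dist, Real.dist_eq]
  apply ENNReal.ofReal_le_ofReal
  rw [le_div_iff₀ hm]
  have := h1 x hx y hy
  have hx' := abs_le.mp (h2 x hx)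
  have hy' := abs_le.mp (h2 y hy)
  have : |φ x - φ y| ≤ 2 * J := abs_le.mpr ⟨by linarith, by linarith⟩
  linarith

/-- Transversality of a high and a low frequency with fixed sum `k`. -/
lemma expand_sum {a : ℝ} (ha : 0 < a) (ha1 : a < 1) {k x y : ℝ}
    (hx : |x| ≤ |k| / 7) (hy : |y| ≤ |k| / 7) :
    |k| ^ (1 + a) / 20 * |x - y| ≤
      |(disp a x + disp a (k - x)) - (disp a y + disp a (k - y))| := by
  have hk := abs_nonneg k
  have e1 := disp_sub_le ha ha1 hx hy
  have aux : ∀ x : ℝ, |x| ≤ |k| / 7 → 6 / 7 * |k| ≤ |k - x| := fun x hx => by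
    have := abs_sub_abs_le_abs_sub k x
    linarith
  have e2 := disp_sub_ge ha (r := 6 / 7 * |k|) (by positivity) (aux x hx) (aux y hy) (by
    have hx' := abs_le.mp hx
    have hy' := abs_le.mp hy
    rcases le_total 0 k with h | h
    · rw [abs_of_nonneg h] at *
      exact mul_nonneg (by linarith) (by linarith)
    · rw [abs_of_nonpos h] at *
      exact mul_nonneg_of_nonpos_of_nonpos (by linarith) (by linarith))
  rw [show k - x - (k - y) = -(x - y) by ring, abs_neg] at e2
  have e3 : 3 * (|k| / 7) ^ (1 + a) + |k| ^ (1 + a) / 20 ≤ (6 / 7 * |k|) ^ (1 + a) := by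
    rw [Real.div_rpow hk (by norm_num), Real.mul_rpow (by norm_num) hk,
      Real.div_rpow (by norm_num) (by norm_num)]
    have h6 : (6 : ℝ) ≤ 6 ^ (1 + a) := by
      calc (6 : ℝ) = 6 ^ (1 : ℝ) := by simp
        _ ≤ 6 ^ (1 + a) := Real.rpow_le_rpow_of_exponent_le (by norm_num) (by linarith)
    have h7 : (7 : ℝ) ^ (1 + a) ≤ 49 := by
      calc (7 : ℝ) ^ (1 + a) ≤ 7 ^ (2 : ℝ) :=
            Real.rpow_le_rpow_of_exponent_le (by norm_num) (by linarith)
        _ = 49 := by norm_num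
    have h70 : (0 : ℝ) < 7 ^ (1 + a) := by positivity
    have h8 : 3 / (7 : ℝ) ^ (1 + a) + 1 / 20 ≤ 6 ^ (1 + a) / 7 ^ (1 + a) := by
      rw [div_add' _ _ _ h70.ne', div_le_div_iff_of_pos_right h70]
      linarith
    have hp : 0 ≤ |k| ^ (1 + a) := by positivity
    have := mul_le_mul_of_nonneg_right h8 hp
    calc _ = (3 / (7 : ℝ) ^ (1 + a) + 1 / 20) * |k| ^ (1 + a) := by ring
      _ ≤ _ := this
  have e4 : |disp a (k - x) - disp a (k - y)| - |disp a x - disp a y| ≤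
      |(disp a x + disp a (k - x)) - (disp a y + disp a (k - y))| := by
    have := abs_sub_abs_le_abs_sub (disp a (k - x) - disp a (k - y)) (-(disp a x - disp a y))
    rw [abs_neg] at this
    refine this.trans (le_of_eq ?_)
    congr 1; ring
  have := mul_le_mul_of_nonneg_right e3 (abs_nonneg (x - y))
  linarith

/-- Transversality of a high and a low frequency with fixed difference `k`. -/
lemma expand_diff {a : ℝ} (ha : 0 < a) (ha1 : a < 1) {k x y : ℝ}
    (hx : |x| ≤ |k| / 8) (hy : |y| ≤ |k| / 8) :
    |k| ^ (1 + a) / 20 * |x - y| ≤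
      |(disp a (k + x) - disp a x) - (disp a (k + y) - disp a y)| := by
  have hk := abs_nonneg k
  have := expand_sum ha ha1 (k := k) (x := -x) (y := -y) (by rw [abs_neg]; linarith)
    (by rw [abs_neg]; linarith)
  rw [disp_neg, disp_neg, show -x - -y = -(x - y) by ring, abs_neg] at this
  refine this.trans (le_of_eq ?_)
  congr 1
  rw [sub_neg_eq_add, sub_neg_eq_add]; ring

/-! ### Quadratic estimates for nonnegative functions -/

section L2
variable {α β : Type*} [MeasurableSpace α] [MeasurableSpace β]

/-- The `L²` norm of a nonnegative extended-real-valued function. -/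
def eN2 (μ : Measure α) (f : α → ℝ≥0∞) : ℝ≥0∞ := (∫⁻ x, f x ^ 2 ∂μ) ^ (1 / 2 : ℝ)

lemma ennreal_sq_rpow_half (x : ℝ≥0∞) : (x ^ 2) ^ (1 / 2 : ℝ) = x := by
  rw [← ENNReal.rpow_natCast, ← ENNReal.rpow_mul]; simp

lemma ennreal_rpow_half_sq (x : ℝ≥0∞) : (x ^ (1 / 2 : ℝ)) ^ 2 = x := by
  rw [← ENNReal.rpow_natCast, ← ENNReal.rpow_mul]; simp

lemma eN2_sq (μ : Measure α) (f : α → ℝ≥0∞) : eN2 μ f ^ 2 = ∫⁻ x, f x ^ 2 ∂μ :=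
  ennreal_rpow_half_sq _

lemma eN2_mono {μ : Measure α} {f g : α → ℝ≥0∞} (h : ∀ x, f x ≤ g x) : eN2 μ f ≤ eN2 μ g := by
  unfold eN2
  gcongr with x
  exact h x

lemma eN2_const_mul {μ : Measure α} (c : ℝ≥0∞) {f : α → ℝ≥0∞} (hf : Measurable f) :
    eN2 μ (fun x => c * f x) = c * eN2 μ f := by
  unfold eN2
  simp_rw [mul_pow]
  rw [lintegral_const_mul _ (hf.pow_const 2), ENNReal.mul_rpow_of_nonneg _ _ (by norm_num),
    ennreal_sq_rpow_half]

lemma eN2_add_le {μ : Measure α} {f g : α → ℝ≥0∞} (hf : Measurable f) (hg : Measurable g) :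
    eN2 μ (fun x => f x + g x) ≤ eN2 μ f + eN2 μ g := by
  have := ENNReal.lintegral_Lp_add_le (μ := μ) hf.aemeasurable hg.aemeasurable
    (p := 2) (by norm_num)
  simpa [eN2] using this

lemma eN2_finset_sum_le {ι : Type*} {μ : Measure α} (s : Finset ι) {f : ι → α → ℝ≥0∞}
    (hf : ∀ i, Measurable (f i)) :
    eN2 μ (fun x => ∑ i ∈ s, f i x) ≤ ∑ i ∈ s, eN2 μ (f i) := by
  classical
  induction s using Finset.induction_on with
  | empty => simp [eN2]
  | insert i s hi ih =>
    simp only [Finset.sum_insert hi]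
    refine (eN2_add_le (hf i) (Finset.measurable_fun_sum s fun i _ => hf i)).trans ?_
    gcongr

/-- Minkowski's inequality for countable sums. -/
lemma eN2_tsum_le {μ : Measure α} {f : ℕ → α → ℝ≥0∞} (hf : ∀ i, Measurable (f i)) :
    eN2 μ (fun x => ∑' i, f i x) ≤ ∑' i, eN2 μ (f i) := by
  have h1 : ∫⁻ x, (∑' i, f i x) ^ 2 ∂μ =
      ⨆ n : ℕ, ∫⁻ x, (∑ i ∈ Finset.range n, f i x) ^ 2 ∂μ := by
    rw [← lintegral_iSup]
    · congr 1 with x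
      rw [ENNReal.tsum_eq_iSup_nat, ENNReal.iSup_pow]
    · exact fun n => (Finset.measurable_fun_sum _ fun i _ => hf i).pow_const 2
    · intro m n hmn x
      dsimp only
      gcongr
  have h2 : ∫⁻ x, (∑' i, f i x) ^ 2 ∂μ ≤ (∑' i, eN2 μ (f i)) ^ 2 := by
    rw [h1]
    refine iSup_le fun n => ?_
    rw [← eN2_sq]
    gcongr
    exact (eN2_finset_sum_le _ hf).trans (ENNReal.sum_le_tsum _)
  calc eN2 μ (fun x => ∑' i, f i x) ≤ ((∑' i, eN2 μ (f i)) ^ 2) ^ (1 / 2 : ℝ) := by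
        unfold eN2; gcongr; exact h2
    _ = _ := ennreal_sq_rpow_half _

/-- The Cauchy–Schwarz inequality. -/
lemma lintegral_mul_sq_le {μ : Measure α} {f g : α → ℝ≥0∞} (hf : Measurable f)
    (hg : Measurable g) :
    (∫⁻ x, f x * g x ∂μ) ^ 2 ≤ (∫⁻ x, f x ^ 2 ∂μ) * ∫⁻ x, g x ^ 2 ∂μ := by
  have h := ENNReal.lintegral_mul_le_Lp_mul_Lq μ Real.HolderConjugate.two_two
    hf.aemeasurable hg.aemeasurable
  have h2 := pow_le_pow_left' h 2
  simp only [Pi.mul_apply, ENNReal.rpow_ofNat] at h2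
  rw [mul_pow, ennreal_rpow_half_sq, ennreal_rpow_half_sq] at h2
  exact h2

/-- Cauchy–Schwarz with the integrand dominated by a geometric mean. -/
lemma lintegral_sq_le_of_sq_le {μ : Measure α} {k f g : α → ℝ≥0∞} (hf : Measurable f)
    (hg : Measurable g) (h : ∀ x, k x ^ 2 ≤ f x * g x) :
    (∫⁻ x, k x ∂μ) ^ 2 ≤ (∫⁻ x, f x ∂μ) * ∫⁻ x, g x ∂μ := by
  have h1 : ∫⁻ x, k x ∂μ ≤ ∫⁻ x, f x ^ (1 / 2 : ℝ) * g x ^ (1 / 2 : ℝ) ∂μ := by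
    refine lintegral_mono fun x => ?_
    rw [← ENNReal.mul_rpow_of_nonneg _ _ (by norm_num), ← ennreal_sq_rpow_half (k x)]
    gcongr
    exact h x
  refine (pow_le_pow_left' h1 2).trans ?_
  refine (lintegral_mul_sq_le (hf.pow_const _) (hg.pow_const _)).trans (le_of_eq ?_)
  simp_rw [ennreal_rpow_half_sq]

lemma tsum_sqrt_mul_sqrt_le (f g : ℕ → ℝ≥0∞) :
    ∑' i, f i ^ (1 / 2 : ℝ) * g i ^ (1 / 2 : ℝ) ≤
      (∑' i, f i) ^ (1 / 2 : ℝ) * (∑' i, g i) ^ (1 / 2 : ℝ) := by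
  have h := lintegral_sq_le_of_sq_le (μ := Measure.count) (f := f) (g := g)
    (k := fun i => f i ^ (1 / 2 : ℝ) * g i ^ (1 / 2 : ℝ)) (measurable_of_countable _)
    (measurable_of_countable _)
    (fun i => by rw [mul_pow, ennreal_rpow_half_sq, ennreal_rpow_half_sq])
  simp only [lintegral_count] at h
  rw [← ENNReal.mul_rpow_of_nonneg _ _ (by norm_num),
    ← ennreal_sq_rpow_half (∑' i, f i ^ (1 / 2 : ℝ) * g i ^ (1 / 2 : ℝ))]
  gcongr

end L2

/-- Schur's test for the bilinear operator with kernel `k (p, z - p)`: the kernel is dominated by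
the geometric mean of `k₁`, integrable in `p` for fixed `z`, and `k₂`, integrable in `q = z - p` for
fixed `p`. -/
lemma schur_test {k k₁ k₂ : ℝ × ℝ → ℝ × ℝ → ℝ≥0∞}
    (hk₁ : Measurable (Function.uncurry k₁)) (hk₂ : Measurable (Function.uncurry k₂))
    (hk : ∀ p q, k p q ^ 2 ≤ k₁ p q * k₂ p q) {A₁ A₂ : ℝ≥0∞}
    (h₁ : ∀ z, ∫⁻ p, k₁ p (z - p) ≤ A₁) (h₂ : ∀ p, ∫⁻ q, k₂ p q ≤ A₂)
    {f : ℝ × ℝ → ℝ≥0∞} (hf : Measurable f) :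
    ∫⁻ z, (∫⁻ p, k p (z - p) * f p) ^ 2 ≤ A₁ * A₂ * ∫⁻ p, f p ^ 2 := by
  have m1 : Measurable fun x : (ℝ × ℝ) × (ℝ × ℝ) => k₁ x.2 (x.1 - x.2) :=
    hk₁.comp (measurable_snd.prodMk (measurable_fst.sub measurable_snd))
  have m2 : Measurable fun x : (ℝ × ℝ) × (ℝ × ℝ) => k₂ x.2 (x.1 - x.2) :=
    hk₂.comp (measurable_snd.prodMk (measurable_fst.sub measurable_snd))
  have m3 : Measurable fun x : (ℝ × ℝ) × (ℝ × ℝ) => k₂ x.2 (x.1 - x.2) * f x.2 ^ 2 :=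
    m2.mul ((hf.comp measurable_snd).pow_const 2)
  calc ∫⁻ z, (∫⁻ p, k p (z - p) * f p) ^ 2
      ≤ ∫⁻ z, A₁ * ∫⁻ p, k₂ p (z - p) * f p ^ 2 := by
        refine lintegral_mono fun z => ?_
        refine (lintegral_sq_le_of_sq_le (f := fun p => k₁ p (z - p))
          (g := fun p => k₂ p (z - p) * f p ^ 2) (m1.comp measurable_prodMk_left)
          (m3.comp measurable_prodMk_left) fun p => ?_).trans ?_
        · rw [mul_pow, ← mul_assoc]
          gcongr
          exact hk _ _
        · gcongr
          exact h₁ z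
    _ = A₁ * ∫⁻ z, ∫⁻ p, k₂ p (z - p) * f p ^ 2 := by
        rw [lintegral_const_mul _ m3.lintegral_prod_right']
    _ = A₁ * ∫⁻ p, (∫⁻ z, k₂ p (z - p)) * f p ^ 2 := by
        rw [lintegral_lintegral_swap m3.aemeasurable]
        congr 2 with p
        exact lintegral_mul_const _ (m2.comp measurable_prodMk_right)
    _ ≤ A₁ * ∫⁻ p, A₂ * f p ^ 2 := by
        gcongr with p
        rw [lintegral_sub_right_eq_self (fun q => k₂ p q) p]
        exact h₂ p
    _ = _ := by rw [lintegral_const_mul _ (hf.pow_const 2), mul_assoc]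

/-! ### Measures of modulation sets -/

/-- The modulation `λ - ω(ξ)` of a space-time frequency. -/
def modu (a : ℝ) (z : ℝ × ℝ) : ℝ := z.2 - disp a z.1

lemma modu_measurable {a : ℝ} (ha : 0 < a) : Measurable (modu a) :=
  (continuous_snd.sub ((disp_continuous ha).comp continuous_fst)).measurable

/-- A measurable planar set with vertical sections of size at most `m` over a set of abscissas of
size at most `M`. -/
lemma vol_le_vert {S : Set (ℝ × ℝ)} (hS : MeasurableSet S) {T : Set ℝ} {m M : ℝ≥0∞}
    (h1 : ∀ x, volume {y | (x, y) ∈ S} ≤ m) (h2 : ∀ z ∈ S, z.1 ∈ T) (h3 : volume T ≤ M) :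
    volume S ≤ m * M := by
  have hT : MeasurableSet (toMeasurable volume T) := measurableSet_toMeasurable _ _
  rw [Measure.volume_eq_prod, Measure.prod_apply hS]
  calc ∫⁻ x, volume (Prod.mk x ⁻¹' S) ≤ ∫⁻ x, (toMeasurable volume T).indicator (fun _ => m) x := by
        refine lintegral_mono fun x => ?_
        by_cases hx : x ∈ toMeasurable volume T
        · rw [Set.indicator_of_mem hx]; exact h1 x
        · rw [Set.indicator_of_notMem hx]
          have : Prod.mk x ⁻¹' S = ∅ := by
            ext y
            simp only [Set.mem_preimage, Set.mem_empty_iff_false, iff_false]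
            exact fun h => hx (subset_toMeasurable _ _ (h2 _ h))
          simp [this]
    _ = m * volume T := by rw [lintegral_indicator_const hT, measure_toMeasurable]
    _ ≤ m * M := by gcongr

lemma vol_abs_sub_le (c J : ℝ) : volume {y : ℝ | |y - c| ≤ J} ≤ ENNReal.ofReal (2 * J) := by
  have : {y : ℝ | |y - c| ≤ J} = Metric.closedBall c J := by
    ext y; simp [Real.dist_eq]
  rw [this, Real.volume_closedBall]

/-- Integral of a function of the second coordinate over a planar set with small horizontal
sections. -/
lemma lintegral_horiz_le {S : Set (ℝ × ℝ)} (hS : MeasurableSet S) {m : ℝ≥0∞}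
    (h1 : ∀ y, volume {x | (x, y) ∈ S} ≤ m) {g : ℝ → ℝ≥0∞} (hg : Measurable g) :
    ∫⁻ z, S.indicator (fun z => g z.2) z ≤ m * ∫⁻ y, g y := by
  have hm : Measurable (S.indicator (fun z : ℝ × ℝ => g z.2)) :=
    (hg.comp measurable_snd).indicator hS
  rw [Measure.volume_eq_prod, lintegral_prod_symm' _ hm, ← lintegral_const_mul _ hg]
  refine lintegral_mono fun y => ?_
  have : ∀ x, S.indicator (fun z : ℝ × ℝ => g z.2) (x, y) =
      {x | (x, y) ∈ S}.indicator (fun _ => g y) x := fun x => by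
    simp [Set.indicator]
  simp_rw [this]
  have hSy : MeasurableSet {x | (x, y) ∈ S} := measurable_prodMk_right hS
  rw [lintegral_indicator_const hSy, mul_comm]
  gcongr
  exact h1 y

/-- Two transversal modulation constraints cut out a set of size `J₁ J₂ / m`. -/
lemma vol_transversal {S : Set (ℝ × ℝ)} (hS : MeasurableSet S) {φ₁ φ₂ : ℝ → ℝ} {m J₁ J₂ : ℝ}
    (hm : 0 < m) (hJ₁ : 0 ≤ J₁) (hJ₂ : 0 ≤ J₂)
    (h1 : ∀ z ∈ S, |z.2 - φ₁ z.1| ≤ J₁) (h2 : ∀ z ∈ S, |z.2 - φ₂ z.1| ≤ J₂)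
    (hexp : ∀ z ∈ S, ∀ w ∈ S, m * |z.1 - w.1| ≤ |(φ₁ z.1 - φ₂ z.1) - (φ₁ w.1 - φ₂ w.1)|) :
    volume S ≤ ENNReal.ofReal (8 * J₁ * J₂ / m) := by
  have hT : volume (Prod.fst '' S) ≤ ENNReal.ofReal (2 * (J₁ + J₂) / m) := by
    refine volume_le_of_expand (φ := fun x => φ₁ x - φ₂ x) (c := 0) hm ?_ ?_
    · rintro _ ⟨z, hz, rfl⟩ _ ⟨w, hw, rfl⟩
      exact hexp z hz w hw
    · rintro _ ⟨z, hz, rfl⟩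
      have e1 := abs_le.mp (h1 z hz)
      have e2 := abs_le.mp (h2 z hz)
      exact abs_le.mpr ⟨by linarith, by linarith⟩
  have hv : ∀ x, volume {y | (x, y) ∈ S} ≤ ENNReal.ofReal (2 * min J₁ J₂) := by
    intro x
    rcases le_total J₁ J₂ with h | h
    · rw [min_eq_left h]
      have hs : {y | (x, y) ∈ S} ⊆ {y | |y - φ₁ x| ≤ J₁} := fun y hy => h1 _ hy
      exact (measure_mono hs).trans (vol_abs_sub_le (φ₁ x) J₁)
    · rw [min_eq_right h]
      have hs : {y | (x, y) ∈ S} ⊆ {y | |y - φ₂ x| ≤ J₂} := fun y hy => h2 _ hy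
      exact (measure_mono hs).trans (vol_abs_sub_le (φ₂ x) J₂)
  refine (vol_le_vert hS hv (fun z hz => Set.mem_image_of_mem _ hz) hT).trans ?_
  rw [← ENNReal.ofReal_mul (by positivity)]
  apply ENNReal.ofReal_le_ofReal
  rw [← mul_div_assoc]
  refine (div_le_div_iff_of_pos_right hm).mpr ?_
  rcases le_total J₁ J₂ with h | h
  · rw [min_eq_left h]; nlinarith
  · rw [min_eq_right h]; nlinarith

/-! ### The high-low interaction -/

/-- Pairs `(p, q)` of frequencies with `q` much lower than `p`, `p` away from zero, and
modulations of `p`, `q`, `p + q` at most `J₁`, `J₂`, `J₃`. -/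
def HLset (a J₁ J₂ J₃ : ℝ) : Set ((ℝ × ℝ) × (ℝ × ℝ)) :=
  {w | |w.2.1| ≤ |w.1.1| / 8 ∧ 1 ≤ |w.1.1| ∧ |modu a w.1| ≤ J₁ ∧ |modu a w.2| ≤ J₂ ∧
    |modu a (w.1 + w.2)| ≤ J₃}

lemma measurableSet_HLset {a : ℝ} (ha : 0 < a) (J₁ J₂ J₃ : ℝ) :
    MeasurableSet (HLset a J₁ J₂ J₃) := by
  have hμ := modu_measurable ha
  have m1 : Measurable fun w : (ℝ × ℝ) × (ℝ × ℝ) => |w.2.1| := by fun_prop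
  have m2 : Measurable fun w : (ℝ × ℝ) × (ℝ × ℝ) => |w.1.1| := by fun_prop
  have m3 : Measurable fun w : (ℝ × ℝ) × (ℝ × ℝ) => |modu a w.1| := by fun_prop
  have m4 : Measurable fun w : (ℝ × ℝ) × (ℝ × ℝ) => |modu a w.2| := by fun_prop
  have m5 : Measurable fun w : (ℝ × ℝ) × (ℝ × ℝ) => |modu a (w.1 + w.2)| := by fun_prop
  exact (measurableSet_le m1 (m2.div_const 8)).inter ((measurableSet_le measurable_const m2).inter
    ((measurableSet_le m3 measurable_const).inter ((measurableSet_le m4 measurable_const).inter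
    (measurableSet_le m5 measurable_const))))

lemma rpow_le_two_mul {x y e : ℝ} (hy : 0 ≤ y) (h : y ≤ 8 / 7 * x) (he : 0 ≤ e)
    (he2 : e ≤ 2) : y ^ e ≤ 2 * x ^ e := by
  have hx : 0 ≤ x := by linarith
  calc y ^ e ≤ (8 / 7 * x) ^ e := Real.rpow_le_rpow hy h he
    _ = (8 / 7 : ℝ) ^ e * x ^ e := Real.mul_rpow (by norm_num) hx
    _ ≤ (8 / 7 : ℝ) ^ (2 : ℝ) * x ^ e := by
        gcongr
        norm_num
    _ ≤ 2 * x ^ e := by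
        gcongr
        norm_num

lemma lint_le_vol {T : Set (ℝ × ℝ)} (hT : MeasurableSet T) {w : ℝ × ℝ → ℝ} {W m B : ℝ}
    (hW : 0 ≤ W) (hw : ∀ p ∈ T, w p ≤ W) (hv : volume T ≤ ENNReal.ofReal m)
    (hB : W * m ≤ B) : ∫⁻ p, T.indicator (fun p => ENNReal.ofReal (w p)) p ≤ ENNReal.ofReal B := by
  calc ∫⁻ p, T.indicator (fun p => ENNReal.ofReal (w p)) p
      ≤ ∫⁻ p, T.indicator (fun _ => ENNReal.ofReal W) p := by
        refine lintegral_mono fun p => ?_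
        refine Set.indicator_le_indicator' fun hp => ?_
        exact ENNReal.ofReal_le_ofReal (hw p hp)
    _ = ENNReal.ofReal W * volume T := lintegral_indicator_const hT _
    _ ≤ ENNReal.ofReal W * ENNReal.ofReal m := by gcongr
    _ = ENNReal.ofReal (W * m) := (ENNReal.ofReal_mul hW).symm
    _ ≤ _ := ENNReal.ofReal_le_ofReal hB

lemma lint_le_horiz {T : Set (ℝ × ℝ)} (hT : MeasurableSet T) {w : ℝ × ℝ → ℝ} {W m B : ℝ}
    (hW : 0 ≤ W) (hw : ∀ p ∈ T, w p ≤ W)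
    (hv : ∀ y, volume {x | (x, y) ∈ T} ≤ ENNReal.ofReal m)
    (hB : W * m ≤ B) {g : ℝ → ℝ≥0∞} (hg : Measurable g) :
    ∫⁻ p, T.indicator (fun p => ENNReal.ofReal (w p) * g p.2) p ≤
      ENNReal.ofReal B * ∫⁻ y, g y := by
  have hm : Measurable (T.indicator (fun z : ℝ × ℝ => g z.2)) :=
    (hg.comp measurable_snd).indicator hT
  calc ∫⁻ p, T.indicator (fun p => ENNReal.ofReal (w p) * g p.2) p
      ≤ ∫⁻ p, ENNReal.ofReal W * T.indicator (fun p => g p.2) p := by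
        refine lintegral_mono fun p => ?_
        by_cases hp : p ∈ T
        · simp only [Set.indicator_of_mem hp]
          gcongr
          exact hw p hp
        · simp [Set.indicator_of_notMem hp]
    _ = ENNReal.ofReal W * ∫⁻ p, T.indicator (fun p => g p.2) p := lintegral_const_mul _ hm
    _ ≤ ENNReal.ofReal W * (ENNReal.ofReal m * ∫⁻ y, g y) := by
        gcongr
        exact lintegral_horiz_le hT hv hg
    _ = ENNReal.ofReal (W * m) * ∫⁻ y, g y := by rw [← mul_assoc, ENNReal.ofReal_mul hW]
    _ ≤ _ := by gcongr

section HL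
variable {a J₁ J₂ J₃ E : ℝ}

lemma HL_sizes {w : (ℝ × ℝ) × (ℝ × ℝ)} (hw : w ∈ HLset a J₁ J₂ J₃) :
    |w.1.1| ≤ 8 / 7 * |w.1.1 + w.2.1| ∧ |w.1.1 + w.2.1| ≤ 8 / 7 * |w.1.1| ∧
      |w.2.1| ≤ |w.1.1 + w.2.1| / 7 ∧ 0 < |w.1.1 + w.2.1| ∧ 0 ≤ w.1.1 * (w.1.1 + w.2.1) := by
  obtain ⟨h1, h2, -⟩ := hw
  generalize w.1.1 = x at *
  generalize w.2.1 = y at *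
  have h3 : |x| ≤ |x + y| + |y| := by
    have := abs_sub (x + y) y
    simpa using this
  have h4 := abs_add_le x y
  refine ⟨by linarith, by linarith, by linarith, by linarith, ?_⟩
  have h5 : |x * y| ≤ x * x := by
    rw [abs_mul, ← abs_mul_abs_self x]
    nlinarith [abs_nonneg x]
  have := neg_abs_le (x * y)
  nlinarith

/-- Slices of the high-low set for a fixed output frequency. -/
def HLz (a J₁ J₂ J₃ : ℝ) (z : ℝ × ℝ) : Set (ℝ × ℝ) := {p | (p, z - p) ∈ HLset a J₁ J₂ J₃}

/-- Slices of the high-low set for a fixed high input frequency. -/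
def HLp (a J₁ J₂ J₃ : ℝ) (p : ℝ × ℝ) : Set (ℝ × ℝ) := {q | (p, q) ∈ HLset a J₁ J₂ J₃}

lemma measurableSet_HLz (ha : 0 < a) (z : ℝ × ℝ) : MeasurableSet (HLz a J₁ J₂ J₃ z) :=
  (measurable_id.prodMk (measurable_const.sub measurable_id)) (measurableSet_HLset ha J₁ J₂ J₃)

lemma measurableSet_HLp (ha : 0 < a) (p : ℝ × ℝ) : MeasurableSet (HLp a J₁ J₂ J₃ p) :=
  measurable_prodMk_left (measurableSet_HLset ha J₁ J₂ J₃)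

/-- The area of a slice, by transversality of the two input modulation strips. -/
lemma HL_z_vol (ha : 0 < a) (ha1 : a < 1) (hJ₁ : 0 ≤ J₁) (hJ₂ : 0 ≤ J₂) (z : ℝ × ℝ) :
    ∫⁻ p, (HLz a J₁ J₂ J₃ z).indicator (fun p => ENNReal.ofReal (|p.1| ^ (1 + a))) p ≤
      ENNReal.ofReal (1000 * (J₁ * J₂)) := by
  rcases (HLz a J₁ J₂ J₃ z).eq_empty_or_nonempty with h | ⟨p₀, hp₀⟩
  · simp [h]
  have hk : 0 < |z.1| := by simpa using (HL_sizes hp₀).2.2.2.1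
  have hk' : 0 < |z.1| ^ (1 + a) := Real.rpow_pos_of_pos hk _
  refine lint_le_vol (measurableSet_HLz ha z) (W := 2 * |z.1| ^ (1 + a))
    (m := 8 * J₁ * J₂ / (|z.1| ^ (1 + a) / 20)) (by positivity) ?_ ?_ ?_
  · intro p hp
    refine rpow_le_two_mul (abs_nonneg _) ?_ (by linarith) (by linarith)
    simpa using (HL_sizes hp).1
  · refine vol_transversal (measurableSet_HLz ha z) (φ₁ := disp a)
      (φ₂ := fun x => z.2 - disp a (z.1 - x)) (by positivity) hJ₁ hJ₂
      (fun p hp => hp.2.2.1) (fun p hp => ?_) (fun p hp p' hp' => ?_)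
    · have := hp.2.2.2.1
      rw [← abs_neg] at this
      simp only [modu, Prod.fst_sub, Prod.snd_sub] at this
      convert this using 2; ring
    · have e1 : |z.1 - p.1| ≤ |z.1| / 7 := by simpa using (HL_sizes hp).2.2.1
      have e2 : |z.1 - p'.1| ≤ |z.1| / 7 := by simpa using (HL_sizes hp').2.2.1
      have := expand_sum ha ha1 e1 e2
      rw [← abs_neg] at this
      have e3 : -(z.1 - p.1 - (z.1 - p'.1)) = p.1 - p'.1 := by ring
      have e4 : |z.1 - p.1 - (z.1 - p'.1)| = |p.1 - p'.1| := by rw [← abs_neg, e3]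
      rw [abs_neg, e4] at this
      refine this.trans (le_of_eq ?_)
      congr 1
      simp only [sub_sub_cancel]
      ring
  · have : 2 * |z.1| ^ (1 + a) * (8 * J₁ * J₂ / (|z.1| ^ (1 + a) / 20)) = 320 * (J₁ * J₂) := by
      field_simp
      ring
    rw [this]
    have := mul_nonneg hJ₁ hJ₂
    linarith

/-- The bound `hE`, which comes from the resonance function, confines the high input frequency to a
short interval around the output frequency. -/
lemma HL_z_xrange (hE : ∀ w ∈ HLset a J₁ J₂ J₃, |w.1.1| ^ (1 - a) * |w.2.1| ≤ E) (ha : 0 < a)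
    (ha1 : a < 1) {z p : ℝ × ℝ} (hp : p ∈ HLz a J₁ J₂ J₃ z) :
    |p.1 - z.1| ≤ 2 * E / |z.1| ^ (1 - a) := by
  have hk : 0 < |z.1| := by simpa using (HL_sizes hp).2.2.2.1
  have hk' : 0 < |z.1| ^ (1 - a) := Real.rpow_pos_of_pos hk _
  have h1 : |z.1| ^ (1 - a) ≤ 2 * |p.1| ^ (1 - a) := by
    refine rpow_le_two_mul (abs_nonneg _) ?_ (by linarith) (by linarith)
    simpa using (HL_sizes hp).2.1
  have h2 : |p.1| ^ (1 - a) * |z.1 - p.1| ≤ E := hE _ hp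
  rw [le_div_iff₀ hk', abs_sub_comm]
  have := mul_le_mul_of_nonneg_left h1 (abs_nonneg (z.1 - p.1))
  nlinarith

lemma HL_z_low (hE : ∀ w ∈ HLset a J₁ J₂ J₃, |w.1.1| ^ (1 - a) * |w.2.1| ≤ E) (ha : 0 < a)
    (ha1 : a < 1) (hE0 : 0 ≤ E) {g : ℝ → ℝ≥0∞} (hg : Measurable g) (z : ℝ × ℝ) :
    ∫⁻ p, (HLz a J₁ J₂ J₃ z).indicator
      (fun p => ENNReal.ofReal (|p.1| ^ (1 - a)) * g (z.2 - p.2)) p ≤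
      ENNReal.ofReal (1000 * E) * ∫⁻ y, g y := by
  rcases (HLz a J₁ J₂ J₃ z).eq_empty_or_nonempty with h | ⟨p₀, hp₀⟩
  · simp [h]
  have hk : 0 < |z.1| := by simpa using (HL_sizes hp₀).2.2.2.1
  have hk' : 0 < |z.1| ^ (1 - a) := Real.rpow_pos_of_pos hk _
  have hg' : Measurable fun y => g (z.2 - y) := hg.comp (measurable_const.sub measurable_id)
  have := lint_le_horiz (measurableSet_HLz (J₁ := J₁) (J₂ := J₂) (J₃ := J₃) ha z)
    (w := fun p => |p.1| ^ (1 - a)) (W := 2 * |z.1| ^ (1 - a))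
    (m := 2 * (2 * E / |z.1| ^ (1 - a))) (B := 1000 * E) (by positivity) ?_ ?_ ?_ hg'
  · rwa [lintegral_sub_left_eq_self (fun y => g y) z.2] at this
  · intro p hp
    refine rpow_le_two_mul (abs_nonneg _) ?_ (by linarith) (by linarith)
    simpa using (HL_sizes hp).1
  · intro y
    have hs : {x | (x, y) ∈ HLz a J₁ J₂ J₃ z} ⊆ {x | |x - z.1| ≤ 2 * E / |z.1| ^ (1 - a)} :=
      fun x hx => HL_z_xrange hE ha ha1 hx
    exact (measure_mono hs).trans (vol_abs_sub_le _ _)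
  · have : 2 * |z.1| ^ (1 - a) * (2 * (2 * E / |z.1| ^ (1 - a))) = 8 * E := by
      field_simp
      ring
    rw [this]
    linarith

lemma HL_z_box (hE : ∀ w ∈ HLset a J₁ J₂ J₃, |w.1.1| ^ (1 - a) * |w.2.1| ≤ E) (ha : 0 < a)
    (ha1 : a < 1) (hE0 : 0 ≤ E) (hJ₁ : 0 ≤ J₁) (z : ℝ × ℝ) :
    ∫⁻ p, (HLz a J₁ J₂ J₃ z).indicator (fun p => ENNReal.ofReal (|p.1| ^ (1 - a))) p ≤
      ENNReal.ofReal (1000 * (J₁ * E)) := by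
  rcases (HLz a J₁ J₂ J₃ z).eq_empty_or_nonempty with h | ⟨p₀, hp₀⟩
  · simp [h]
  have hk : 0 < |z.1| := by simpa using (HL_sizes hp₀).2.2.2.1
  have hk' : 0 < |z.1| ^ (1 - a) := Real.rpow_pos_of_pos hk _
  refine lint_le_vol (measurableSet_HLz ha z) (W := 2 * |z.1| ^ (1 - a))
    (m := 2 * J₁ * (2 * (2 * E / |z.1| ^ (1 - a)))) (by positivity) ?_ ?_ ?_
  · intro p hp
    refine rpow_le_two_mul (abs_nonneg _) ?_ (by linarith) (by linarith)
    simpa using (HL_sizes hp).1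
  · rw [ENNReal.ofReal_mul (by positivity)]
    refine vol_le_vert (measurableSet_HLz ha z) (fun x => ?_)
      (T := {x | |x - z.1| ≤ 2 * E / |z.1| ^ (1 - a)})
      (fun p hp => HL_z_xrange hE ha ha1 hp) (vol_abs_sub_le _ _)
    have hs : {y | (x, y) ∈ HLz a J₁ J₂ J₃ z} ⊆ {y | |y - disp a x| ≤ J₁} :=
      fun y hy => hy.2.2.1
    exact (measure_mono hs).trans (vol_abs_sub_le _ _)
  · have : 2 * |z.1| ^ (1 - a) * (2 * J₁ * (2 * (2 * E / |z.1| ^ (1 - a)))) = 16 * (J₁ * E) := by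
      field_simp
      ring
    rw [this]
    have := mul_nonneg hJ₁ hE0
    linarith

/-- Horizontal sections of a modulation strip restricted to frequencies of one sign and of size
at least `r`. -/
lemma vol_strip {A : Set ℝ} {r c J k t : ℝ} (ha : 0 < a) (hr : 0 < r)
    (h1 : ∀ x ∈ A, r ≤ |x + t|) (h2 : ∀ x ∈ A, 0 ≤ k * (x + t)) (hk : k ≠ 0)
    (h3 : ∀ x ∈ A, |c - disp a (x + t)| ≤ J) :
    volume A ≤ ENNReal.ofReal (2 * J / r ^ (1 + a)) := by
  refine volume_le_of_expand (φ := fun x => disp a (x + t)) (c := c)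
    (Real.rpow_pos_of_pos hr _) ?_ ?_
  · intro x hx y hy
    have hs : 0 ≤ (x + t) * (y + t) := by
      have := mul_nonneg (h2 x hx) (h2 y hy)
      have hk2 : 0 < k ^ 2 := by positivity
      by_contra hneg
      push Not at hneg
      nlinarith
    have := disp_sub_ge ha hr.le (h1 x hx) (h1 y hy) hs
    simpa using this
  · intro x hx
    rw [abs_sub_comm]
    exact h3 x hx

lemma HL_z_strip (ha : 0 < a) (ha1 : a < 1) (hJ₁ : 0 ≤ J₁) {g : ℝ → ℝ≥0∞} (hg : Measurable g)
    (z : ℝ × ℝ) :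
    ∫⁻ p, (HLz a J₁ J₂ J₃ z).indicator
      (fun p => ENNReal.ofReal (|p.1| ^ (1 + a)) * g (z.2 - p.2)) p ≤
      ENNReal.ofReal (1000 * J₁) * ∫⁻ y, g y := by
  rcases (HLz a J₁ J₂ J₃ z).eq_empty_or_nonempty with h | ⟨p₀, hp₀⟩
  · simp [h]
  have hk : 0 < |z.1| := by simpa using (HL_sizes hp₀).2.2.2.1
  have hk' : 0 < |z.1| ^ (1 + a) := Real.rpow_pos_of_pos hk _
  have hg' : Measurable fun y => g (z.2 - y) := hg.comp (measurable_const.sub measurable_id)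
  have hr : |z.1| ^ (1 + a) ≤ 2 * (7 / 8 * |z.1|) ^ (1 + a) :=
    rpow_le_two_mul (abs_nonneg _) (by linarith) (by linarith) (by linarith)
  have hr' : 0 < (7 / 8 * |z.1|) ^ (1 + a) := by positivity
  have := lint_le_horiz (measurableSet_HLz (J₁ := J₁) (J₂ := J₂) (J₃ := J₃) ha z)
    (w := fun p => |p.1| ^ (1 + a)) (W := 2 * |z.1| ^ (1 + a))
    (m := 2 * J₁ / (7 / 8 * |z.1|) ^ (1 + a)) (B := 1000 * J₁) (by positivity) ?_ ?_ ?_ hg'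
  · rwa [lintegral_sub_left_eq_self (fun y => g y) z.2] at this
  · intro p hp
    refine rpow_le_two_mul (abs_nonneg _) ?_ (by linarith) (by linarith)
    simpa using (HL_sizes hp).1
  · intro y
    refine vol_strip ha (t := 0) (c := y) (k := z.1) (by positivity) ?_ ?_
      (abs_pos.mp hk) ?_
    · intro x hx
      have : |z.1| ≤ 8 / 7 * |x| := by simpa using (HL_sizes hx).2.1
      rw [add_zero]
      linarith
    · intro x hx
      have : 0 ≤ x * z.1 := by simpa using (HL_sizes hx).2.2.2.2
      rw [add_zero]
      linarith
    · intro x hx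
      rw [add_zero]
      exact hx.2.2.1
  · rw [mul_div_assoc', div_le_iff₀ hr']
    nlinarith [mul_le_mul_of_nonneg_left hr hJ₁, mul_nonneg hJ₁ hr'.le]

lemma HL_p_low (hE : ∀ w ∈ HLset a J₁ J₂ J₃, |w.1.1| ^ (1 - a) * |w.2.1| ≤ E) (ha : 0 < a)
    (hE0 : 0 ≤ E) {g : ℝ → ℝ≥0∞} (hg : Measurable g) (p : ℝ × ℝ) :
    ∫⁻ q, (HLp a J₁ J₂ J₃ p).indicator
      (fun q => ENNReal.ofReal (|p.1| ^ (1 - a)) * g q.2) q ≤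
      ENNReal.ofReal (1000 * E) * ∫⁻ y, g y := by
  rcases (HLp a J₁ J₂ J₃ p).eq_empty_or_nonempty with h | ⟨q₀, hq₀⟩
  · simp [h]
  have hk : 0 < |p.1| := lt_of_lt_of_le one_pos hq₀.2.1
  have hk' : 0 < |p.1| ^ (1 - a) := Real.rpow_pos_of_pos hk _
  refine lint_le_horiz (measurableSet_HLp (J₁ := J₁) (J₂ := J₂) (J₃ := J₃) ha p)
    (w := fun _ => |p.1| ^ (1 - a)) (W := |p.1| ^ (1 - a))
    (m := 2 * (E / |p.1| ^ (1 - a))) (B := 1000 * E) (by positivity) (fun _ _ => le_rfl) ?_ ?_ hg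
  · intro y
    have hs : {x | (x, y) ∈ HLp a J₁ J₂ J₃ p} ⊆ {x | |x - 0| ≤ E / |p.1| ^ (1 - a)} := by
      intro x hx
      have := hE _ hx
      simp only [sub_zero, Set.mem_ofPred_eq]
      rw [le_div_iff₀ hk', mul_comm]
      exact this
    exact (measure_mono hs).trans (vol_abs_sub_le _ _)
  · have : |p.1| ^ (1 - a) * (2 * (E / |p.1| ^ (1 - a))) = 2 * E := by
      field_simp
    rw [this]
    linarith

lemma HL_p_vol (ha : 0 < a) (ha1 : a < 1) (hJ₂ : 0 ≤ J₂) (hJ₃ : 0 ≤ J₃) (p : ℝ × ℝ) :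
    ∫⁻ q, (HLp a J₁ J₂ J₃ p).indicator (fun _ => ENNReal.ofReal (|p.1| ^ (1 + a))) q ≤
      ENNReal.ofReal (1000 * (J₂ * J₃)) := by
  rcases (HLp a J₁ J₂ J₃ p).eq_empty_or_nonempty with h | ⟨q₀, hq₀⟩
  · simp [h]
  have hk : 0 < |p.1| := lt_of_lt_of_le one_pos hq₀.2.1
  have hk' : 0 < |p.1| ^ (1 + a) := Real.rpow_pos_of_pos hk _
  refine lint_le_vol (measurableSet_HLp ha p) (W := |p.1| ^ (1 + a))
    (m := 8 * J₂ * J₃ / (|p.1| ^ (1 + a) / 20)) (by positivity) (fun _ _ => le_rfl) ?_ ?_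
  · refine vol_transversal (measurableSet_HLp ha p) (φ₁ := disp a)
      (φ₂ := fun x => disp a (p.1 + x) - p.2) (by positivity) hJ₂ hJ₃
      (fun q hq => hq.2.2.2.1) (fun q hq => ?_) (fun q hq q' hq' => ?_)
    · have := hq.2.2.2.2
      simp only [modu, Prod.fst_add, Prod.snd_add] at this
      convert this using 2; ring
    · have := expand_diff ha ha1 hq.1 hq'.1
      refine this.trans (le_of_eq ?_)
      rw [← abs_neg]
      congr 1
      ring
  · have : |p.1| ^ (1 + a) * (8 * J₂ * J₃ / (|p.1| ^ (1 + a) / 20)) = 160 * (J₂ * J₃) := by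
      field_simp
      ring
    rw [this]
    have := mul_nonneg hJ₂ hJ₃
    linarith

lemma HL_p_box (hE : ∀ w ∈ HLset a J₁ J₂ J₃, |w.1.1| ^ (1 - a) * |w.2.1| ≤ E) (ha : 0 < a)
    (hE0 : 0 ≤ E) (hJ₃ : 0 ≤ J₃) (p : ℝ × ℝ) :
    ∫⁻ q, (HLp a J₁ J₂ J₃ p).indicator (fun _ => ENNReal.ofReal (|p.1| ^ (1 - a))) q ≤
      ENNReal.ofReal (1000 * (J₃ * E)) := by
  rcases (HLp a J₁ J₂ J₃ p).eq_empty_or_nonempty with h | ⟨q₀, hq₀⟩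
  · simp [h]
  have hk : 0 < |p.1| := lt_of_lt_of_le one_pos hq₀.2.1
  have hk' : 0 < |p.1| ^ (1 - a) := Real.rpow_pos_of_pos hk _
  refine lint_le_vol (measurableSet_HLp ha p) (W := |p.1| ^ (1 - a))
    (m := 2 * J₃ * (2 * (E / |p.1| ^ (1 - a)))) (by positivity) (fun _ _ => le_rfl) ?_ ?_
  · rw [ENNReal.ofReal_mul (by positivity)]
    refine vol_le_vert (measurableSet_HLp ha p) (fun x => ?_)
      (T := {x | |x - 0| ≤ E / |p.1| ^ (1 - a)}) (fun q hq => ?_) (vol_abs_sub_le _ _)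
    · have hs : {y | (x, y) ∈ HLp a J₁ J₂ J₃ p} ⊆
          {y | |y - (disp a (p.1 + x) - p.2)| ≤ J₃} := by
        intro y hy
        have := hy.2.2.2.2
        simp only [modu, Prod.fst_add, Prod.snd_add] at this
        simp only [Set.mem_ofPred_eq]
        convert this using 2; ring
      exact (measure_mono hs).trans (vol_abs_sub_le _ _)
    · have := hE _ hq
      simp only [sub_zero, Set.mem_ofPred_eq]
      rw [le_div_iff₀ hk', mul_comm]
      exact this
  · have : |p.1| ^ (1 - a) * (2 * J₃ * (2 * (E / |p.1| ^ (1 - a)))) = 4 * (J₃ * E) := by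
      field_simp
      ring
    rw [this]
    have := mul_nonneg hJ₃ hE0
    linarith

lemma HL_p_strip (ha : 0 < a) (ha1 : a < 1) (hJ₃ : 0 ≤ J₃) {g : ℝ → ℝ≥0∞} (hg : Measurable g)
    (p : ℝ × ℝ) :
    ∫⁻ q, (HLp a J₁ J₂ J₃ p).indicator
      (fun q => ENNReal.ofReal (|p.1| ^ (1 + a)) * g q.2) q ≤
      ENNReal.ofReal (1000 * J₃) * ∫⁻ y, g y := by
  rcases (HLp a J₁ J₂ J₃ p).eq_empty_or_nonempty with h | ⟨q₀, hq₀⟩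
  · simp [h]
  have hk : 0 < |p.1| := lt_of_lt_of_le one_pos hq₀.2.1
  have hk' : 0 < |p.1| ^ (1 + a) := Real.rpow_pos_of_pos hk _
  have hr : |p.1| ^ (1 + a) ≤ 2 * (7 / 8 * |p.1|) ^ (1 + a) :=
    rpow_le_two_mul (abs_nonneg _) (by linarith) (by linarith) (by linarith)
  have hr' : 0 < (7 / 8 * |p.1|) ^ (1 + a) := by positivity
  refine lint_le_horiz (measurableSet_HLp (J₁ := J₁) (J₂ := J₂) (J₃ := J₃) ha p)
    (w := fun _ => |p.1| ^ (1 + a)) (W := |p.1| ^ (1 + a))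
    (m := 2 * J₃ / (7 / 8 * |p.1|) ^ (1 + a)) (B := 1000 * J₃) (by positivity)
    (fun _ _ => le_rfl) ?_ ?_ hg
  · intro y
    refine vol_strip ha (t := p.1) (c := y + p.2) (k := p.1) (by positivity) ?_ ?_
      (abs_pos.mp hk) ?_
    · intro x hx
      have : |p.1| ≤ 8 / 7 * |p.1 + x| := (HL_sizes hx).1
      rw [add_comm x]
      linarith
    · intro x hx
      have : 0 ≤ p.1 * (p.1 + x) := (HL_sizes hx).2.2.2.2
      rwa [add_comm x]
    · intro x hx
      have := hx.2.2.2.2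
      simp only [modu, Prod.fst_add, Prod.snd_add] at this
      rw [add_comm x, add_comm y]
      exact this
  · rw [mul_div_assoc', div_le_iff₀ hr']
    nlinarith [mul_le_mul_of_nonneg_left hr hJ₃, mul_nonneg hJ₃ hr'.le]

end HL

/-- The resonance identity bounds the resonance function by the largest modulation. -/
lemma resonance_le {a J₁ J₂ J₃ : ℝ} {p q : ℝ × ℝ} (h1 : |modu a p| ≤ J₁) (h2 : |modu a q| ≤ J₂)
    (h3 : |modu a (p + q)| ≤ J₃) :
    |disp a (p.1 + q.1) - disp a p.1 - disp a q.1| ≤ 3 * max J₁ (max J₂ J₃) := by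
  have e : disp a (p.1 + q.1) - disp a p.1 - disp a q.1 =
      modu a p + modu a q - modu a (p + q) := by
    simp only [modu, Prod.fst_add, Prod.snd_add]; ring
  rw [e]
  have l1 := abs_le.mp (h1.trans (le_max_left J₁ (max J₂ J₃)))
  have l2 := abs_le.mp (h2.trans ((le_max_left J₂ J₃).trans (le_max_right J₁ _)))
  have l3 := abs_le.mp (h3.trans ((le_max_right J₂ J₃).trans (le_max_right J₁ _)))
  exact abs_le.mpr ⟨by linarith, by linarith⟩

lemma HL_energy {a J₁ J₂ J₃ : ℝ} (ha : 0 < a) (ha1 : a < 1) (hJ₁ : 1 ≤ J₁) :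
    ∀ w ∈ HLset a J₁ J₂ J₃,
      |w.1.1| ^ (1 - a) * |w.2.1| ≤ 12 * (max J₁ (max J₂ J₃)) ^ (1 - a / 4) := by
  intro w hw
  obtain ⟨h1, h2, h3, h4, h5⟩ := hw
  have hr := res_HL ha ha1 h1
  have hm := resonance_le h3 h4 h5
  set M := max J₁ (max J₂ J₃)
  set N := |w.1.1|
  set y := |w.2.1|
  have hM : 1 ≤ M := hJ₁.trans (le_max_left _ _)
  have hy : 0 ≤ y := abs_nonneg _
  have hN : 0 < N := by linarith
  have hyN : y ≤ N := by linarith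
  have h6 : N ^ (1 + a) * y ≤ 12 * M := by linarith
  rcases hy.eq_or_lt with hy0 | hy0
  · rw [← hy0, mul_zero]; positivity
  have e1 : (N ^ (1 + a) * y) ^ (1 - a / 4) ≤ (12 * M) ^ (1 - a / 4) :=
    Real.rpow_le_rpow (by positivity) h6 (by linarith)
  have e2 : (12 * M) ^ (1 - a / 4) ≤ 12 * M ^ (1 - a / 4) := by
    rw [Real.mul_rpow (by norm_num) (by linarith)]
    gcongr
    calc (12 : ℝ) ^ (1 - a / 4) ≤ 12 ^ (1 : ℝ) :=
          Real.rpow_le_rpow_of_exponent_le (by norm_num) (by linarith)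
      _ = 12 := Real.rpow_one _
  refine le_trans ?_ (e1.trans e2)
  rw [Real.mul_rpow (by positivity) hy0.le, ← Real.rpow_mul hN.le]
  have e3 : y = y ^ (1 - a / 4) * y ^ (a / 4) := by
    rw [← Real.rpow_add hy0]; simp
  have e4 : y ^ (a / 4) ≤ N ^ (a / 4) := Real.rpow_le_rpow hy0.le hyN (by linarith)
  have e5 : N ^ (1 - a) * N ^ (a / 4) ≤ N ^ ((1 + a) * (1 - a / 4)) := by
    rw [← Real.rpow_add hN]
    exact Real.rpow_le_rpow_of_exponent_le h2 (by nlinarith)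
  calc N ^ (1 - a) * y = N ^ (1 - a) * (y ^ (1 - a / 4) * y ^ (a / 4)) := by rw [← e3]
    _ ≤ N ^ (1 - a) * (y ^ (1 - a / 4) * N ^ (a / 4)) := by gcongr
    _ = (N ^ (1 - a) * N ^ (a / 4)) * y ^ (1 - a / 4) := by ring
    _ ≤ _ := by gcongr

lemma le_rpow_half_of_sq_le {x y : ℝ≥0∞} (h : x ^ 2 ≤ y) : x ≤ y ^ (1 / 2 : ℝ) := by
  rw [← ennreal_sq_rpow_half x]
  gcongr

/-- The bilinear high-low estimate, with the low factor measured only through a majorant `G`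
depending on its time frequency. -/
lemma HL_main {a J₁ J₂ J₃ : ℝ} (ha : 0 < a) (ha1 : a < 1) (hJ₁ : 1 ≤ J₁) (hJ₂ : 1 ≤ J₂)
    (hJ₃ : 1 ≤ J₃) {f : ℝ × ℝ → ℝ≥0∞} (hf : Measurable f) {G : ℝ → ℝ≥0∞} (hG : Measurable G) :
    ∫⁻ z, (∫⁻ p, (HLset a J₁ J₂ J₃).indicator
        (fun w => ENNReal.ofReal |w.1.1| * G w.2.2) (p, z - p) * f p) ^ 2 ≤
      ENNReal.ofReal (12000000 * (J₁ * J₂ * J₃ * (max J₁ (max J₂ J₃)) ^ (-(a / 4)))) *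
        (∫⁻ y, G y ^ 2) * ∫⁻ p, f p ^ 2 := by
  have hE := HL_energy (J₂ := J₂) (J₃ := J₃) ha ha1 hJ₁
  set M := max J₁ (max J₂ J₃) with hMdef
  have hM : 1 ≤ M := hJ₁.trans (le_max_left _ _)
  set E := 12 * M ^ (1 - a / 4) with hEdef
  have hE0 : 0 ≤ E := by positivity
  have hEM : E = 12 * (M * M ^ (-(a / 4))) := by
    rw [hEdef, sub_eq_add_neg, Real.rpow_add (by linarith), Real.rpow_one]
  have hS := measurableSet_HLset ha J₁ J₂ J₃
  have hg : Measurable fun y => G y ^ 2 := hG.pow_const 2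
  have mk : ∀ e : ℝ, Measurable (Function.uncurry fun p q : ℝ × ℝ => (HLset a J₁ J₂ J₃).indicator
      (fun w => ENNReal.ofReal (|w.1.1| ^ e)) (p, q)) := by
    intro e
    have : Measurable fun w : (ℝ × ℝ) × (ℝ × ℝ) => ENNReal.ofReal (|w.1.1| ^ e) := by fun_prop
    exact this.indicator hS
  have mg : ∀ e : ℝ, Measurable (Function.uncurry fun p q : ℝ × ℝ => (HLset a J₁ J₂ J₃).indicator
      (fun w => ENNReal.ofReal (|w.1.1| ^ e) * G w.2.2 ^ 2) (p, q)) := by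
    intro e
    have : Measurable fun w : (ℝ × ℝ) × (ℝ × ℝ) => ENNReal.ofReal (|w.1.1| ^ e) * G w.2.2 ^ 2 := by
      fun_prop
    exact this.indicator hS
  have hsq : ∀ w ∈ HLset a J₁ J₂ J₃, ENNReal.ofReal |w.1.1| ^ 2 =
      ENNReal.ofReal (|w.1.1| ^ (1 + a)) * ENNReal.ofReal (|w.1.1| ^ (1 - a)) := by
    intro w hw
    have h1 : 0 < |w.1.1| := lt_of_lt_of_le one_pos hw.2.1
    rw [← ENNReal.ofReal_mul (by positivity), ← Real.rpow_add h1,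
      ← ENNReal.ofReal_pow (by positivity)]
    congr 1
    rw [← Real.rpow_natCast]
    norm_num
  have hmax : M = J₁ ∨ M = J₂ ∨ M = J₃ := by
    rcases max_choice J₁ (max J₂ J₃) with h | h
    · exact Or.inl h
    · rcases max_choice J₂ J₃ with h' | h'
      · exact Or.inr (Or.inl (h.trans h'))
      · exact Or.inr (Or.inr (h.trans h'))
  set g := ∫⁻ y, G y ^ 2
  rcases hmax with h | h | h
  · -- the high input carries the largest modulation
    have := schur_test (mg (1 - a)) (mk (1 + a))
      (k := fun p q => (HLset a J₁ J₂ J₃).indicator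
        (fun w => ENNReal.ofReal |w.1.1| * G w.2.2) (p, q)) ?_
      (HL_z_low hE ha ha1 hE0 hg) (HL_p_vol ha ha1 (by linarith) (by linarith)) hf
    · refine this.trans (le_of_eq ?_)
      congr 1
      rw [mul_right_comm, ← ENNReal.ofReal_mul (by positivity)]
      congr 2
      rw [hEM, h]
      ring
    · intro p q
      by_cases hw : (p, q) ∈ HLset a J₁ J₂ J₃
      · simp only [Set.indicator_of_mem hw, mul_pow, hsq _ hw]
        exact le_of_eq (by ring)
      · simp [Set.indicator_of_notMem hw]
  · -- the low input carries the largest modulation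
    have mz : ∀ z : ℝ × ℝ, Measurable fun p : ℝ × ℝ => (p, z - p) := fun z =>
      measurable_id.prodMk (measurable_const.sub measurable_id)
    have hkk : ∀ p q : ℝ × ℝ, ((HLset a J₁ J₂ J₃).indicator
        (fun w => ENNReal.ofReal |w.1.1| * G w.2.2) (p, q)) ^ 2 ≤
        (HLset a J₁ J₂ J₃).indicator (fun w => ENNReal.ofReal (|w.1.1| ^ (1 - a))) (p, q) *
        (HLset a J₁ J₂ J₃).indicator
          (fun w => ENNReal.ofReal (|w.1.1| ^ (1 + a)) * G w.2.2 ^ 2) (p, q) := by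
      intro p q
      by_cases hw : (p, q) ∈ HLset a J₁ J₂ J₃
      · simp only [Set.indicator_of_mem hw, mul_pow, hsq _ hw]
        exact le_of_eq (by ring)
      · simp [Set.indicator_of_notMem hw]
    have mK : Measurable (Function.uncurry fun p q : ℝ × ℝ => (HLset a J₁ J₂ J₃).indicator
        (fun w => ENNReal.ofReal |w.1.1| * G w.2.2) (p, q)) := by
      have : Measurable fun w : (ℝ × ℝ) × (ℝ × ℝ) => ENNReal.ofReal |w.1.1| * G w.2.2 := by
        fun_prop
      exact this.indicator hS
    have i1 : ∀ z : ℝ × ℝ, ∫⁻ p, (HLset a J₁ J₂ J₃).indicator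
        (fun w => ENNReal.ofReal |w.1.1| * G w.2.2) (p, z - p) ≤
        (ENNReal.ofReal (1000 * (J₁ * E)) * (ENNReal.ofReal (1000 * J₁) * g)) ^ (1 / 2 : ℝ) := by
      intro z
      apply le_rpow_half_of_sq_le
      refine (lintegral_sq_le_of_sq_le ((mk (1 - a)).comp (mz z)) ((mg (1 + a)).comp (mz z))
        fun p => hkk p (z - p)).trans ?_
      exact mul_le_mul' (HL_z_box hE ha ha1 hE0 (by linarith) z)
        (HL_z_strip ha ha1 (by linarith) hg z)
    have i2 : ∀ p : ℝ × ℝ, ∫⁻ q, (HLset a J₁ J₂ J₃).indicator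
        (fun w => ENNReal.ofReal |w.1.1| * G w.2.2) (p, q) ≤
        (ENNReal.ofReal (1000 * (J₃ * E)) * (ENNReal.ofReal (1000 * J₃) * g)) ^ (1 / 2 : ℝ) := by
      intro p
      apply le_rpow_half_of_sq_le
      refine (lintegral_sq_le_of_sq_le ((mk (1 - a)).comp measurable_prodMk_left)
        ((mg (1 + a)).comp measurable_prodMk_left) fun q => hkk p q).trans ?_
      exact mul_le_mul' (HL_p_box hE ha hE0 (by linarith) p)
        (HL_p_strip ha ha1 (by linarith) hg p)
    refine (schur_test mK mK (fun p q => le_of_eq (sq _)) i1 i2 hf).trans (le_of_eq ?_)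
    congr 1
    rw [← ENNReal.mul_rpow_of_nonneg _ _ (by norm_num)]
    conv_rhs => rw [← ennreal_sq_rpow_half (ENNReal.ofReal _ * g)]
    congr 1
    rw [mul_pow, ← ENNReal.ofReal_pow (by positivity), ← mul_assoc (ENNReal.ofReal _),
      ← mul_assoc (ENNReal.ofReal _), ← ENNReal.ofReal_mul (by positivity),
      ← ENNReal.ofReal_mul (by positivity), mul_mul_mul_comm, ← ENNReal.ofReal_mul (by positivity),
      ← sq]
    congr 2
    rw [hEM, h]
    ring
  · -- the output carries the largest modulation
    have := schur_test (mk (1 + a)) (mg (1 - a))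
      (k := fun p q => (HLset a J₁ J₂ J₃).indicator
        (fun w => ENNReal.ofReal |w.1.1| * G w.2.2) (p, q)) ?_
      (HL_z_vol ha ha1 (by linarith) (by linarith)) (HL_p_low hE ha hE0 hg) hf
    · refine this.trans (le_of_eq ?_)
      congr 1
      rw [← mul_assoc, ← ENNReal.ofReal_mul (by positivity)]
      congr 2
      rw [hEM, h]
      ring
    · intro p q
      by_cases hw : (p, q) ∈ HLset a J₁ J₂ J₃
      · simp only [Set.indicator_of_mem hw, mul_pow, hsq _ hw]
        exact le_of_eq (by ring)
      · simp [Set.indicator_of_notMem hw]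

/-! ### Interactions of comparable frequencies -/

/-- Pairs `(p, q)` of comparable or of bounded frequencies, with modulations of `p`, `q`, `p + q`
at most `J₁`, `J₂`, `J₃`. -/
def HHset (a J₁ J₂ J₃ : ℝ) : Set ((ℝ × ℝ) × (ℝ × ℝ)) :=
  {w | ((|w.1.1| ≤ 8 * |w.2.1| ∧ |w.2.1| ≤ 8 * |w.1.1|) ∨ (|w.1.1| ≤ 8 ∧ |w.2.1| ≤ 8)) ∧
    |modu a w.1| ≤ J₁ ∧ |modu a w.2| ≤ J₂ ∧ |modu a (w.1 + w.2)| ≤ J₃}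

lemma measurableSet_HHset {a : ℝ} (ha : 0 < a) (J₁ J₂ J₃ : ℝ) :
    MeasurableSet (HHset a J₁ J₂ J₃) := by
  have hμ := modu_measurable ha
  have m1 : Measurable fun w : (ℝ × ℝ) × (ℝ × ℝ) => |w.2.1| := by fun_prop
  have m2 : Measurable fun w : (ℝ × ℝ) × (ℝ × ℝ) => |w.1.1| := by fun_prop
  have m3 : Measurable fun w : (ℝ × ℝ) × (ℝ × ℝ) => |modu a w.1| := by fun_prop
  have m4 : Measurable fun w : (ℝ × ℝ) × (ℝ × ℝ) => |modu a w.2| := by fun_prop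
  have m5 : Measurable fun w : (ℝ × ℝ) × (ℝ × ℝ) => |modu a (w.1 + w.2)| := by fun_prop
  exact (((measurableSet_le m2 (m1.const_mul 8)).inter (measurableSet_le m1 (m2.const_mul 8))).union
    ((measurableSet_le m2 measurable_const).inter (measurableSet_le m1 measurable_const))).inter
    ((measurableSet_le m3 measurable_const).inter ((measurableSet_le m4 measurable_const).inter
    (measurableSet_le m5 measurable_const)))

/-- The multiplier `|ξ| ⟨ξ⟩^{-s*}` of the output frequency. -/
def outWt (a x : ℝ) : ℝ := |x| * (1 + |x|) ^ (-(1 / 2 + a / 2))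

lemma outWt_nonneg (a x : ℝ) : 0 ≤ outWt a x := by unfold outWt; positivity

lemma outWt_sq_le {a : ℝ} (ha : 0 < a) (ha1 : a < 1) (x : ℝ) :
    outWt a x ^ 2 ≤ |x| ^ (1 - a / 4) ∧ outWt a x ^ 2 ≤ |x| ^ 2 := by
  have e : outWt a x ^ 2 = |x| ^ 2 * (1 + |x|) ^ (-(1 + a)) := by
    rw [outWt, mul_pow, ← Real.rpow_natCast ((1 + |x|) ^ _), ← Real.rpow_mul (by positivity)]
    congr 2
    push_cast; ring
  have hle1 : (1 + |x|) ^ (-(1 + a)) ≤ 1 :=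
    Real.rpow_le_one_of_one_le_of_nonpos (by linarith [abs_nonneg x]) (by linarith)
  have h2 : outWt a x ^ 2 ≤ |x| ^ 2 := by
    rw [e]; exact mul_le_of_le_one_right (by positivity) hle1
  refine ⟨?_, h2⟩
  rcases (abs_nonneg x).eq_or_lt with h0 | h0
  · rw [← h0] at h2 ⊢
    rw [Real.zero_rpow (by linarith)]; simpa using h2
  rcases le_total |x| 1 with h | h
  · refine h2.trans ?_
    rw [← Real.rpow_natCast]
    exact Real.rpow_le_rpow_of_exponent_ge h0 h (by push_cast; linarith)
  · rw [e]
    calc |x| ^ 2 * (1 + |x|) ^ (-(1 + a)) ≤ |x| ^ (2 : ℝ) * |x| ^ (-(1 + a)) := by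
          rw [← Real.rpow_natCast]
          push_cast
          gcongr ?_ * ?_
          exact Real.rpow_le_rpow_of_nonpos h0 (by linarith) (by linarith)
      _ = |x| ^ (1 - a) := by rw [← Real.rpow_add h0]; ring_nf
      _ ≤ |x| ^ (1 - a / 4) := Real.rpow_le_rpow_of_exponent_le h (by linarith)

/-- On the comparable-frequency region the multiplier is controlled by the resonance, with an
integrable weight in the input frequency to spare. -/
lemma HH_wt {a J₁ J₂ J₃ : ℝ} (ha : 0 < a) (ha1 : a < 1) (hJ₁ : 1 ≤ J₁)
    {p q : ℝ × ℝ} (hw : (p, q) ∈ HHset a J₁ J₂ J₃) :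
    outWt a (p.1 + q.1) ^ 2 ≤
      20736 * (max J₁ (max J₂ J₃)) ^ (1 - a / 4) * (1 + |p.1|) ^ (-(1 + a / 2)) := by
  obtain ⟨h0, h3, h4, h5⟩ := hw
  have hm := resonance_le h3 h4 h5
  obtain ⟨b1, b2⟩ := outWt_sq_le ha ha1 (p.1 + q.1)
  have htri := abs_add_le p.1 q.1
  simp only at h0
  set M := max J₁ (max J₂ J₃)
  have hM : 1 ≤ M := hJ₁.trans (le_max_left _ _)
  have hM1 : 1 ≤ M ^ (1 - a / 4) := Real.one_le_rpow hM (by linarith)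
  have hp := abs_nonneg p.1
  have low : |p.1| ≤ 8 → |q.1| ≤ 8 → outWt a (p.1 + q.1) ^ 2 ≤
      20736 * M ^ (1 - a / 4) * (1 + |p.1|) ^ (-(1 + a / 2)) := by
    intro h1 h2
    have l1 : (1 / 81 : ℝ) ≤ (1 + |p.1|) ^ (-(1 + a / 2)) := by
      calc (1 / 81 : ℝ) = 9 ^ (-2 : ℝ) := by
            rw [Real.rpow_neg (by norm_num)]; norm_num
        _ ≤ 9 ^ (-(1 + a / 2)) :=
            Real.rpow_le_rpow_of_exponent_le (by norm_num) (by linarith)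
        _ ≤ _ := Real.rpow_le_rpow_of_nonpos (by linarith) (by linarith) (by linarith)
    have l2 : |p.1 + q.1| ^ 2 ≤ 256 := by nlinarith [abs_nonneg (p.1 + q.1)]
    have l3 : 1 / 81 ≤ M ^ (1 - a / 4) * (1 + |p.1|) ^ (-(1 + a / 2)) := by
      calc (1 / 81 : ℝ) = 1 * (1 / 81) := by norm_num
        _ ≤ _ := by gcongr
    nlinarith
  rcases h0 with ⟨h1, h2⟩ | ⟨h1, h2⟩
  · rcases le_total |p.1| 1 with hN | hN
    · exact low (by linarith) (by linarith)
    have hr := res_HH ha ha1 h1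
    set N := |p.1|
    have hN0 : 0 < N := by linarith
    have h6 : |p.1 + q.1| ≤ 192 * M * N ^ (-(1 + a)) := by
      rw [Real.rpow_neg hN0.le, ← div_eq_mul_inv, le_div_iff₀ (by positivity)]
      linarith
    calc outWt a (p.1 + q.1) ^ 2 ≤ |p.1 + q.1| ^ (1 - a / 4) := b1
      _ ≤ (192 * M * N ^ (-(1 + a))) ^ (1 - a / 4) :=
          Real.rpow_le_rpow (abs_nonneg _) h6 (by linarith)
      _ = 192 ^ (1 - a / 4) * M ^ (1 - a / 4) * N ^ (-(1 + a) * (1 - a / 4)) := by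
          rw [Real.mul_rpow (by positivity) (by positivity),
            Real.mul_rpow (by positivity) (by positivity), ← Real.rpow_mul hN0.le]
      _ ≤ 192 * M ^ (1 - a / 4) * (4 * (1 + N) ^ (-(1 + a / 2))) := by
          gcongr
          · calc (192 : ℝ) ^ (1 - a / 4) ≤ 192 ^ (1 : ℝ) :=
                Real.rpow_le_rpow_of_exponent_le (by norm_num) (by linarith)
              _ = 192 := Real.rpow_one _
          · calc N ^ (-(1 + a) * (1 - a / 4)) ≤ N ^ (-(1 + a / 2)) :=
                  Real.rpow_le_rpow_of_exponent_le hN (by nlinarith)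
              _ ≤ ((1 + N) / 2) ^ (-(1 + a / 2)) :=
                  Real.rpow_le_rpow_of_nonpos (by linarith) (by linarith) (by linarith)
              _ = 2 ^ (1 + a / 2) * (1 + N) ^ (-(1 + a / 2)) := by
                  rw [Real.div_rpow (by positivity) (by norm_num),
                    Real.rpow_neg (x := (2 : ℝ)) (by norm_num), div_inv_eq_mul, mul_comm]
              _ ≤ 4 * (1 + N) ^ (-(1 + a / 2)) := by
                  gcongr
                  calc (2 : ℝ) ^ (1 + a / 2) ≤ 2 ^ (2 : ℝ) :=
                        Real.rpow_le_rpow_of_exponent_le (by norm_num) (by linarith)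
                    _ = 4 := by norm_num
      _ ≤ 20736 * M ^ (1 - a / 4) * (1 + N) ^ (-(1 + a / 2)) := by
          have : 0 ≤ M ^ (1 - a / 4) * (1 + N) ^ (-(1 + a / 2)) := by positivity
          nlinarith
  · exact low h1 h2

/-- Integral over a modulation strip of a function of the space frequency. -/
lemma lint_strip {a J : ℝ} (ha : 0 < a) {h : ℝ → ℝ≥0∞} (hh : Measurable h) :
    ∫⁻ p, {p | |modu a p| ≤ J}.indicator (fun p => h p.1) p ≤
      ENNReal.ofReal (2 * J) * ∫⁻ x, h x := by
  have hS : MeasurableSet {p | |modu a p| ≤ J} :=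
    measurableSet_le (by have := modu_measurable ha; fun_prop) measurable_const
  have hm : Measurable ({p | |modu a p| ≤ J}.indicator (fun z : ℝ × ℝ => h z.1)) :=
    (hh.comp measurable_fst).indicator hS
  rw [Measure.volume_eq_prod, lintegral_prod _ hm.aemeasurable, ← lintegral_const_mul _ hh]
  refine lintegral_mono fun x => ?_
  have : ∀ y, {p | |modu a p| ≤ J}.indicator (fun z : ℝ × ℝ => h z.1) (x, y) =
      {y | |y - disp a x| ≤ J}.indicator (fun _ => h x) y := fun y => by
    by_cases hy : |y - disp a x| ≤ J <;> simp [Set.indicator, modu, hy]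
  simp_rw [this]
  have hSx : MeasurableSet {y | |y - disp a x| ≤ J} :=
    measurableSet_le (by fun_prop) measurable_const
  rw [lintegral_indicator_const hSx, mul_comm]
  gcongr
  exact vol_abs_sub_le _ _

/-- The integrable weight in the space frequency. -/
def wtInt (a : ℝ) : ℝ≥0∞ := ∫⁻ x : ℝ, ENNReal.ofReal ((1 + |x|) ^ (-(1 + a / 2)))

lemma wtInt_lt_top {a : ℝ} (ha : 0 < a) : wtInt a < ∞ := by
  have := finite_integral_one_add_norm (E := ℝ) (μ := volume) (r := 1 + a / 2)
    (by simp; linarith)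
  simpa [wtInt] using this

/-- The bilinear estimate for comparable or bounded frequencies: Cauchy–Schwarz over a modulation
strip, with `HH_wt` providing both the gain and integrability along the strip. -/
lemma HH_main {a J₁ J₂ J₃ : ℝ} (ha : 0 < a) (ha1 : a < 1) (hJ₁ : 1 ≤ J₁) (hJ₂ : 1 ≤ J₂)
    (hJ₃ : 1 ≤ J₃) {f g : ℝ × ℝ → ℝ≥0∞} (hf : Measurable f) (hg : Measurable g) :
    ∫⁻ z, (∫⁻ p, (HHset a J₁ J₂ J₃).indicator
        (fun w => ENNReal.ofReal (outWt a (w.1.1 + w.2.1)) * g w.2) (p, z - p) * f p) ^ 2 ≤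
      ENNReal.ofReal (3400000 * (J₁ * J₂ * J₃ * (max J₁ (max J₂ J₃)) ^ (-(a / 4)))) * wtInt a *
        (∫⁻ q, g q ^ 2) * ∫⁻ p, f p ^ 2 := by
  set M := max J₁ (max J₂ J₃) with hMdef
  have hM : 1 ≤ M := hJ₁.trans (le_max_left _ _)
  have hS := measurableSet_HHset ha J₁ J₂ J₃
  have hh : Measurable fun x : ℝ => ENNReal.ofReal ((1 + |x|) ^ (-(1 + a / 2))) := by fun_prop
  have hoW : Measurable (outWt a) := by unfold outWt; fun_prop
  have hEM : M ^ (1 - a / 4) = M * M ^ (-(a / 4)) := by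
    rw [sub_eq_add_neg, Real.rpow_add (by linarith), Real.rpow_one]
  have hMe : 0 ≤ M ^ (-(a / 4)) := by positivity
  refine (schur_test
    (k := fun p q => (HHset a J₁ J₂ J₃).indicator
      (fun w => ENNReal.ofReal (outWt a (w.1.1 + w.2.1)) * g w.2) (p, q))
    (k₁ := fun p q => (HHset a J₁ J₂ J₃).indicator
      (fun w => ENNReal.ofReal (outWt a (w.1.1 + w.2.1)) ^ 2) (p, q))
    (k₂ := fun _ q => g q ^ 2) (A₂ := ∫⁻ q, g q ^ 2)
    (A₁ := ENNReal.ofReal (3400000 * (J₁ * J₂ * J₃ * M ^ (-(a / 4)))) * wtInt a)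
    ?_ ?_ ?_ ?_ (fun _ => le_rfl) hf)
  · have : Measurable fun w : (ℝ × ℝ) × (ℝ × ℝ) =>
        ENNReal.ofReal (outWt a (w.1.1 + w.2.1)) ^ 2 := by fun_prop
    exact this.indicator hS
  · exact (hg.comp measurable_snd).pow_const 2
  · intro p q
    by_cases hw : (p, q) ∈ HHset a J₁ J₂ J₃
    · simp only [Set.indicator_of_mem hw, mul_pow]
      exact le_rfl
    · simp [Set.indicator_of_notMem hw]
  · intro z
    -- the strip carrying the smaller of the two input modulations is integrated
    have c1 : ∫⁻ p, (HHset a J₁ J₂ J₃).indicator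
        (fun w => ENNReal.ofReal (outWt a (w.1.1 + w.2.1)) ^ 2) (p, z - p) ≤
        ENNReal.ofReal (20736 * M ^ (1 - a / 4)) * (ENNReal.ofReal (2 * J₁) * wtInt a) := by
      refine le_trans ?_ (mul_le_mul_right (lint_strip (J := J₁) ha hh) _)
      rw [← lintegral_const_mul' _ _ ENNReal.ofReal_ne_top]
      refine lintegral_mono fun p => ?_
      by_cases hw : (p, z - p) ∈ HHset a J₁ J₂ J₃
      · have hp : p ∈ {p | |modu a p| ≤ J₁} := hw.2.1
        rw [Set.indicator_of_mem hw, Set.indicator_of_mem hp, ← ENNReal.ofReal_mul (by positivity),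
          ← ENNReal.ofReal_pow (outWt_nonneg _ _)]
        exact ENNReal.ofReal_le_ofReal (HH_wt ha ha1 hJ₁ hw)
      · simp [Set.indicator_of_notMem hw]
    have c2 : ∫⁻ p, (HHset a J₁ J₂ J₃).indicator
        (fun w => ENNReal.ofReal (outWt a (w.1.1 + w.2.1)) ^ 2) (p, z - p) ≤
        ENNReal.ofReal (20736 * M ^ (1 - a / 4) * 81) * (ENNReal.ofReal (2 * J₂) * wtInt a) := by
      refine le_trans ?_ (mul_le_mul_right (lint_strip (J := J₂) ha hh) _)
      rw [← lintegral_sub_left_eq_self _ z,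
        ← lintegral_const_mul' _ _ ENNReal.ofReal_ne_top]
      refine lintegral_mono fun p => ?_
      have : (z - p, z - (z - p)) = (z - p, p) := by simp
      simp only [this]
      by_cases hw : (z - p, p) ∈ HHset a J₁ J₂ J₃
      · have hp : p ∈ {p | |modu a p| ≤ J₂} := hw.2.2.1
        rw [Set.indicator_of_mem hw, Set.indicator_of_mem hp, ← ENNReal.ofReal_mul (by positivity),
          ← ENNReal.ofReal_pow (outWt_nonneg _ _)]
        refine ENNReal.ofReal_le_ofReal ((HH_wt ha ha1 hJ₁ hw).trans ?_)
        rw [mul_assoc]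
        rw [mul_assoc _ (81 : ℝ), mul_assoc (20736 : ℝ)]
        gcongr
        have hq : |p.1| ≤ 8 * |(z - p).1| + 8 := by
          have h8 := abs_nonneg (z - p).1
          rcases hw.1 with ⟨-, h⟩ | ⟨-, h⟩ <;> simp only at h <;> linarith
        have hb : (1 + |p.1|) / 9 ≤ 1 + |(z - p).1| := by
          linarith [abs_nonneg (z - p).1]
        calc (1 + |(z - p).1|) ^ (-(1 + a / 2)) ≤ ((1 + |p.1|) / 9) ^ (-(1 + a / 2)) :=
              Real.rpow_le_rpow_of_nonpos (by positivity) hb (by linarith)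
          _ = 9 ^ (1 + a / 2) * (1 + |p.1|) ^ (-(1 + a / 2)) := by
              rw [Real.div_rpow (by positivity) (by norm_num),
                Real.rpow_neg (x := (9 : ℝ)) (by norm_num)]
              field_simp
          _ ≤ 81 * (1 + |p.1|) ^ (-(1 + a / 2)) := by
              gcongr
              calc (9 : ℝ) ^ (1 + a / 2) ≤ 9 ^ (2 : ℝ) :=
                    Real.rpow_le_rpow_of_exponent_le (by norm_num) (by linarith)
                _ = 81 := by norm_num
      · simp [Set.indicator_of_notMem hw]
    have hmax : M = J₁ ∨ M ≤ J₂ * J₃ := by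
      rcases max_choice J₁ (max J₂ J₃) with h | h
      · exact Or.inl h
      · right
        rcases max_choice J₂ J₃ with h' | h'
        · rw [hMdef, h, h']; nlinarith
        · rw [hMdef, h, h']; nlinarith
    rcases hmax with h | h
    · refine c2.trans ?_
      rw [← mul_assoc, ← ENNReal.ofReal_mul (by positivity)]
      refine mul_le_mul_left (ENNReal.ofReal_le_ofReal ?_) _
      rw [hEM, h]
      have : J₁ * J₂ * J₁ ^ (-(a / 4)) ≤ J₁ * J₂ * J₃ * J₁ ^ (-(a / 4)) := by
        refine mul_le_mul_of_nonneg_right ?_ (by positivity)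
        nlinarith [mul_pos (show 0 < J₁ by linarith) (show 0 < J₂ by linarith)]
      have h0 : 0 ≤ J₁ * J₂ * J₁ ^ (-(a / 4)) := by positivity
      nlinarith
    · refine c1.trans ?_
      rw [← mul_assoc, ← ENNReal.ofReal_mul (by positivity)]
      refine mul_le_mul_left (ENNReal.ofReal_le_ofReal ?_) _
      rw [hEM]
      have : M * (J₁ * M ^ (-(a / 4))) ≤ J₂ * J₃ * (J₁ * M ^ (-(a / 4))) := by
        gcongr
      have h0 : 0 ≤ M * (J₁ * M ^ (-(a / 4))) := by positivity
      nlinarith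

/-! ### Dyadic pieces and the extended-valued norms -/

section Cutoffs
variable {χ₀ χ : ℝ → ℝ}

lemma chiJ_mem (hχ : DyadicCutoffs χ₀ χ) (j : ℕ) (z : ℝ) :
    0 ≤ chiJ χ₀ χ j z ∧ chiJ χ₀ χ j z ≤ 1 := by
  unfold chiJ
  split_ifs
  · exact hχ.mem0 z
  · exact hχ.mem1 _

lemma chiJ_contDiff (hχ : DyadicCutoffs χ₀ χ) (j : ℕ) : ContDiff ℝ (⊤ : ℕ∞) (chiJ χ₀ χ j) := by
  unfold chiJ
  split_ifs
  · exact hχ.smooth0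
  · exact hχ.smooth1.comp (contDiff_const.mul contDiff_id)

lemma chiJ_supp (hχ : DyadicCutoffs χ₀ χ) {j : ℕ} {z : ℝ} (h : chiJ χ₀ χ j z ≠ 0) :
    |z| ≤ 2 * 2 ^ j := by
  unfold chiJ at h
  split_ifs at h with hj
  · subst hj
    by_contra hz
    push Not at hz
    exact h (hχ.supp0 z (by simpa using hz))
  · have h2 := (hχ.supp1 _ h).2
    rw [abs_mul, abs_of_pos (by positivity), Real.rpow_neg (by norm_num), Real.rpow_natCast,
      inv_mul_lt_iff₀ (by positivity)] at h2
    linarith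

lemma chiJ_supp_lower (hχ : DyadicCutoffs χ₀ χ) {j : ℕ} (hj : j ≠ 0) {z : ℝ}
    (h : chiJ χ₀ χ j z ≠ 0) : 2 ^ j ≤ 2 * |z| := by
  unfold chiJ at h
  rw [if_neg hj] at h
  have h2 := (hχ.supp1 _ h).1
  rw [abs_mul, abs_of_pos (by positivity), Real.rpow_neg (by norm_num), Real.rpow_natCast,
    lt_inv_mul_iff₀ (by positivity)] at h2
  linarith

lemma tsum_ofReal_chiJ (hχ : DyadicCutoffs χ₀ χ) (z : ℝ) :
    ∑' j, ENNReal.ofReal (chiJ χ₀ χ j z) = 1 := by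
  have h := hχ.partition z
  have hs : Summable fun j => chiJ χ₀ χ j z := by
    by_contra hs
    rw [tsum_eq_zero_of_not_summable hs] at h
    exact zero_ne_one h
  rw [← ENNReal.ofReal_tsum_of_nonneg (fun j => (chiJ_mem hχ j z).1) hs, h, ENNReal.ofReal_one]

/-- The square root of the `j`-th modulation cutoff. -/
def rchi (a : ℝ) (χ₀ χ : ℝ → ℝ) (j : ℕ) (z : ℝ × ℝ) : ℝ≥0∞ :=
  ENNReal.ofReal (chiJ χ₀ χ j (modu a z)) ^ (1 / 2 : ℝ)

/-- The Sobolev weight `⟨ξ⟩^s`. -/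
def wt (s : ℝ) (z : ℝ × ℝ) : ℝ≥0∞ := ENNReal.ofReal ((1 + |z.1|) ^ s)

/-- The `j`-th weighted dyadic piece of `F`. -/
def piece (a : ℝ) (χ₀ χ : ℝ → ℝ) (s : ℝ) (j : ℕ) (F : ℝ × ℝ → ℝ≥0∞) (z : ℝ × ℝ) : ℝ≥0∞ :=
  rchi a χ₀ χ j z * (wt s z * F z)

/-- The `X^b_s` norm on the Fourier side, for nonnegative functions, with values in `[0, ∞]`. -/
def eX (a : ℝ) (χ₀ χ : ℝ → ℝ) (b s : ℝ) (F : ℝ × ℝ → ℝ≥0∞) : ℝ≥0∞ :=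
  ∑' j : ℕ, ENNReal.ofReal ((2 : ℝ) ^ ((j : ℝ) * b)) * eN2 volume (piece a χ₀ χ s j F)

variable {a : ℝ}

lemma rchi_measurable (ha : 0 < a) (hχ : DyadicCutoffs χ₀ χ) (j : ℕ) :
    Measurable (rchi a χ₀ χ j) := by
  have := (chiJ_contDiff hχ j).continuous.measurable
  have := modu_measurable ha
  unfold rchi
  fun_prop

lemma wt_measurable (s : ℝ) : Measurable (wt s) := by unfold wt; fun_prop

lemma piece_measurable (ha : 0 < a) (hχ : DyadicCutoffs χ₀ χ) (s : ℝ) (j : ℕ)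
    {F : ℝ × ℝ → ℝ≥0∞} (hF : Measurable F) : Measurable (piece a χ₀ χ s j F) :=
  (rchi_measurable ha hχ j).mul ((wt_measurable s).mul hF)

lemma rchi_le_one (hχ : DyadicCutoffs χ₀ χ) (j : ℕ) (z : ℝ × ℝ) : rchi a χ₀ χ j z ≤ 1 := by
  unfold rchi
  refine ENNReal.rpow_le_one ?_ (by norm_num)
  rw [← ENNReal.ofReal_one]
  exact ENNReal.ofReal_le_ofReal (chiJ_mem hχ j _).2

lemma one_le_tsum_rchi (hχ : DyadicCutoffs χ₀ χ) (z : ℝ × ℝ) :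
    1 ≤ ∑' j, rchi a χ₀ χ j z := by
  rw [← tsum_ofReal_chiJ hχ (modu a z)]
  refine ENNReal.tsum_le_tsum fun j => ?_
  unfold rchi
  have h1 : ENNReal.ofReal (chiJ χ₀ χ j (modu a z)) ≤ 1 := by
    rw [← ENNReal.ofReal_one]
    exact ENNReal.ofReal_le_ofReal (chiJ_mem hχ j _).2
  conv_lhs => rw [← ENNReal.rpow_one (ENNReal.ofReal _)]
  exact ENNReal.rpow_le_rpow_of_exponent_ge h1 (by norm_num)

lemma le_tsum_rchi_mul (hχ : DyadicCutoffs χ₀ χ) (z : ℝ × ℝ) (c : ℝ≥0∞) :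
    c ≤ ∑' j, rchi a χ₀ χ j z * c := by
  rw [ENNReal.tsum_mul_right]
  exact le_mul_of_one_le_left' (one_le_tsum_rchi hχ z)

lemma rchi_supp (hχ : DyadicCutoffs χ₀ χ) {j : ℕ} {z : ℝ × ℝ} (h : rchi a χ₀ χ j z ≠ 0) :
    |modu a z| ≤ 2 * 2 ^ j := by
  refine chiJ_supp hχ fun h0 => h ?_
  simp [rchi, h0]

/-- Bookkeeping of the dyadic sums in a bilinear estimate: bounds for all dyadic blocks with
geometric gain in the output modulation add up. -/
lemma eX_bilinear_of_blocks {b s : ℝ} {C : ℝ≥0∞} {A B : ℕ → ℝ≥0∞}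
    {T : ℝ × ℝ → ℝ≥0∞} {K : ℕ → ℕ → ℕ → ℝ × ℝ → ℝ≥0∞}
    (hK : ∀ i j k, Measurable (K i j k))
    (hT : ∀ k z, piece a χ₀ χ s k T z ≤ ∑' i, ∑' j, K i j k z)
    (hb : ∀ i j k : ℕ, ENNReal.ofReal ((2 : ℝ) ^ ((k : ℝ) * b)) * eN2 volume (K i j k) ≤
      C * ENNReal.ofReal ((2 : ℝ) ^ (-(a / 16))) ^ k * A i * B j) :
    eX a χ₀ χ b s T ≤ C * (∑' k : ℕ, ENNReal.ofReal ((2 : ℝ) ^ (-(a / 16))) ^ k) *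
      (∑' i, A i) * ∑' j, B j := by
  unfold eX
  set c := ENNReal.ofReal ((2 : ℝ) ^ (-(a / 16)))
  calc _ ≤ ∑' k : ℕ, ∑' i, ∑' j, C * c ^ k * A i * B j := by
        refine ENNReal.tsum_le_tsum fun k => ?_
        calc _ ≤ ENNReal.ofReal ((2 : ℝ) ^ ((k : ℝ) * b)) *
              ∑' i, ∑' j, eN2 volume (K i j k) := by
              gcongr
              refine (eN2_mono (hT k)).trans ?_
              refine (eN2_tsum_le fun i => Measurable.tsum fun j => hK i j k).trans ?_
              exact ENNReal.tsum_le_tsum fun i => eN2_tsum_le fun j => hK i j k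
          _ ≤ _ := by
              rw [← ENNReal.tsum_mul_left]
              refine ENNReal.tsum_le_tsum fun i => ?_
              rw [← ENNReal.tsum_mul_left]
              exact ENNReal.tsum_le_tsum fun j => hb i j k
    _ = _ := by
        simp_rw [ENNReal.tsum_mul_left, ENNReal.tsum_mul_right, ENNReal.tsum_mul_left]
        rw [ENNReal.tsum_mul_right, ENNReal.tsum_mul_left]

lemma tsum_gain_lt_top (ha : 0 < a) :
    ∑' k : ℕ, ENNReal.ofReal ((2 : ℝ) ^ (-(a / 16))) ^ k < ∞ := by
  rw [ENNReal.tsum_geometric, ENNReal.inv_lt_top, tsub_pos_iff_lt, ← ENNReal.ofReal_one]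
  refine (ENNReal.ofReal_lt_ofReal_iff one_pos).mpr ?_
  exact Real.rpow_lt_one_of_one_lt_of_neg (by norm_num) (by linarith)

end Cutoffs

/-! ### The core bilinear estimates -/

/-- The part of frequency space on which the derivative of the product falls on the first factor:
the output and the second input are controlled by the first input. -/
def regP : Set ((ℝ × ℝ) × (ℝ × ℝ)) :=
  {w | |w.1.1 + w.2.1| ≤ 4 * |w.1.1| ∧ |w.2.1| ≤ 3 * |w.1.1|}

lemma measurableSet_regP : MeasurableSet regP := by
  have m1 : Measurable fun w : (ℝ × ℝ) × (ℝ × ℝ) => |w.1.1 + w.2.1| := by fun_prop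
  have m2 : Measurable fun w : (ℝ × ℝ) × (ℝ × ℝ) => |w.1.1| := by fun_prop
  have m3 : Measurable fun w : (ℝ × ℝ) × (ℝ × ℝ) => |w.2.1| := by fun_prop
  exact (measurableSet_le m1 (m2.const_mul 4)).inter (measurableSet_le m3 (m2.const_mul 3))

lemma wt_ratio {x y c s : ℝ} (hx : 0 < x) (hy : 0 < y) (hc : 1 ≤ c) (h1 : x ≤ c * y)
    (h2 : y ≤ c * x) (hs : |s| ≤ 1) : x ^ s ≤ c * y ^ s := by
  have hcs : ∀ t : ℝ, t ≤ 1 → c ^ t ≤ c := fun t ht => by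
    calc c ^ t ≤ c ^ (1 : ℝ) := Real.rpow_le_rpow_of_exponent_le hc ht
      _ = c := Real.rpow_one c
  obtain ⟨l, u⟩ := abs_le.mp hs
  rcases le_total 0 s with h | h
  · calc x ^ s ≤ (c * y) ^ s := Real.rpow_le_rpow hx.le h1 h
      _ = c ^ s * y ^ s := Real.mul_rpow (by linarith) hy.le
      _ ≤ c * y ^ s := by gcongr; exact hcs s u
  · calc x ^ s ≤ (y / c) ^ s :=
          Real.rpow_le_rpow_of_nonpos (by positivity) (by rwa [div_le_iff₀' (by linarith)]) h
      _ = c ^ (-s) * y ^ s := by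
          rw [Real.div_rpow hy.le (by linarith), Real.rpow_neg (by linarith), div_eq_inv_mul]
      _ ≤ c * y ^ s := by gcongr; exact hcs (-s) (by linarith)

lemma wt_HL {a s J₁ J₂ J₃ : ℝ} (hs : |s| ≤ 1) {p q : ℝ × ℝ} (h : (p, q) ∈ HLset a J₁ J₂ J₃) :
    (1 + |p.1 + q.1|) ^ s * |p.1 + q.1| ≤ 200 * (|p.1| * (1 + |p.1|) ^ s) := by
  obtain ⟨h1, h2, -, -, -⟩ := HL_sizes h
  simp only at h1 h2
  have := wt_ratio (x := 1 + |p.1 + q.1|) (y := 1 + |p.1|) (c := 8 / 7) (s := s)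
    (by positivity) (by positivity) (by norm_num) (by linarith) (by linarith) hs
  calc (1 + |p.1 + q.1|) ^ s * |p.1 + q.1| ≤ (8 / 7 * (1 + |p.1|) ^ s) * (8 / 7 * |p.1|) := by
        gcongr
    _ = (64 / 49) * (|p.1| * (1 + |p.1|) ^ s) := by ring
    _ ≤ _ := by gcongr; norm_num

/-- For comparable or bounded frequencies, the Sobolev weight `s` is passed to the first input at the
cost of a weight `s*` on the second, leaving the multiplier `outWt` in the output. -/
lemma wt_HH {a s : ℝ} (ha : 0 < a) (ha1 : a < 1) (hs : s = 1 / 2 + a / 2 ∨ s = -(1 / 2 + a / 2))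
    {x y : ℝ} (h1 : |x + y| ≤ 4 * |x|)
    (h : (|x| ≤ 8 * |y| ∧ |y| ≤ 8 * |x|) ∨ (|x| ≤ 8 ∧ |y| ≤ 8)) :
    (1 + |x + y|) ^ s * |x + y| ≤
      200 * (outWt a (x + y) * ((1 + |y|) ^ (1 / 2 + a / 2) * (1 + |x|) ^ s)) := by
  have hx := abs_nonneg x
  have hy := abs_nonneg y
  have htri := abs_add_le x y
  set σ := 1 / 2 + a / 2
  have hσ : 0 ≤ σ ∧ σ ≤ 1 := ⟨by positivity, by simp only [σ]; linarith⟩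
  have hpow : ∀ {c u v : ℝ}, 1 ≤ c → 0 < u → 0 < v → u ≤ c * v → u ^ σ ≤ c * v ^ σ := by
    intro c u v hc hu hv huv
    calc u ^ σ ≤ (c * v) ^ σ := Real.rpow_le_rpow hu.le huv hσ.1
      _ = c ^ σ * v ^ σ := Real.mul_rpow (by linarith) hv.le
      _ ≤ c ^ (1 : ℝ) * v ^ σ := by
          gcongr
          exact hσ.2
      _ = c * v ^ σ := by rw [Real.rpow_one]
  have hz0 : 0 < 1 + |x + y| := by positivity
  have e1 : (1 + |x + y|) ^ s * |x + y| = outWt a (x + y) * ((1 + |x + y|) ^ (s + σ)) := by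
    rw [outWt, mul_assoc, ← Real.rpow_add hz0, mul_comm]
    congr 2
    ring
  have key : (1 + |x + y|) ^ (s + σ) ≤ 200 * ((1 + |y|) ^ σ * (1 + |x|) ^ s) := by
    rcases hs with hs | hs
    · rw [hs, Real.rpow_add hz0]
      have k1 : (1 + |x + y|) ^ σ ≤ 17 * (1 + |y|) ^ σ :=
        hpow (by norm_num) hz0 (by positivity) (by
          rcases h with ⟨h, h'⟩ | ⟨h, h'⟩ <;> linarith)
      have k2 : (1 + |x + y|) ^ σ ≤ 4 * (1 + |x|) ^ σ :=
        hpow (by norm_num) hz0 (by positivity) (by linarith)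
      calc _ ≤ (17 * (1 + |y|) ^ σ) * (4 * (1 + |x|) ^ σ) := by gcongr
        _ = 68 * ((1 + |y|) ^ σ * (1 + |x|) ^ σ) := by ring
        _ ≤ _ := by gcongr; norm_num
    · have hx0 : 0 < (1 + |x|) ^ σ := by positivity
      rw [hs, neg_add_cancel, Real.rpow_zero, Real.rpow_neg (by positivity), ← div_eq_mul_inv,
        ← mul_div_assoc, le_div_iff₀ hx0, one_mul]
      have k1 : (1 + |x|) ^ σ ≤ 9 * (1 + |y|) ^ σ :=
        hpow (by norm_num) (by positivity) (by positivity) (by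
          rcases h with ⟨h, h'⟩ | ⟨h, h'⟩ <;> linarith)
      have : 0 ≤ (1 + |y|) ^ σ := by positivity
      linarith
  rw [e1]
  calc _ ≤ outWt a (x + y) * (200 * ((1 + |y|) ^ σ * (1 + |x|) ^ s)) :=
        mul_le_mul_of_nonneg_left key (outWt_nonneg _ _)
    _ = _ := by ring

/-- The modulation gain on a dyadic block. -/
lemma block_gain {a c₀ : ℝ} (ha : 0 < a) (hc₀ : 0 ≤ c₀) (i j k : ℕ) :
    ENNReal.ofReal ((2 : ℝ) ^ ((k : ℝ) * -(1 / 2 - a / 16))) *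
      ENNReal.ofReal (c₀ * ((2 * 2 ^ i) * (2 * 2 ^ j) * (2 * 2 ^ k) *
        (max (2 * 2 ^ i) (max (2 * 2 ^ j) (2 * 2 ^ k))) ^ (-(a / 4)))) ^ (1 / 2 : ℝ) ≤
    ENNReal.ofReal (c₀ * 8) ^ (1 / 2 : ℝ) * ENNReal.ofReal ((2 : ℝ) ^ (-(a / 16))) ^ k *
      ENNReal.ofReal ((2 : ℝ) ^ ((i : ℝ) * (1 / 2))) *
      ENNReal.ofReal ((2 : ℝ) ^ ((j : ℝ) * (1 / 2))) := by
  rw [ENNReal.ofReal_rpow_of_nonneg (by positivity) (by norm_num),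
    ENNReal.ofReal_rpow_of_nonneg (by positivity) (by norm_num),
    ← ENNReal.ofReal_pow (by positivity), ← ENNReal.ofReal_mul (by positivity),
    ← ENNReal.ofReal_mul (by positivity), ← ENNReal.ofReal_mul (by positivity),
    ← ENNReal.ofReal_mul (by positivity)]
  apply ENNReal.ofReal_le_ofReal
  have h2 : (0 : ℝ) < 2 := by norm_num
  have hmax : (max (2 * 2 ^ i) (max (2 * 2 ^ j) (2 * 2 ^ k)) : ℝ) ^ (-(a / 4)) ≤
      (2 : ℝ) ^ ((k : ℝ) * -(a / 4)) := by
    rw [Real.rpow_mul h2.le, Real.rpow_natCast]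
    refine Real.rpow_le_rpow_of_nonpos (by positivity) ?_ (by linarith)
    have h1 : (2 : ℝ) ^ k ≤ 2 * 2 ^ k := by
      have : (0 : ℝ) < 2 ^ k := by positivity
      linarith
    exact h1.trans ((le_max_right _ _).trans (le_max_right _ _))
  have e : ∀ n : ℕ, (2 : ℝ) ^ n = (2 : ℝ) ^ (n : ℝ) := fun n => (Real.rpow_natCast 2 n).symm
  calc (2 : ℝ) ^ ((k : ℝ) * -(1 / 2 - a / 16)) *
      (c₀ * ((2 * 2 ^ i) * (2 * 2 ^ j) * (2 * 2 ^ k) *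
        (max (2 * 2 ^ i) (max (2 * 2 ^ j) (2 * 2 ^ k))) ^ (-(a / 4)))) ^ (1 / 2 : ℝ)
      ≤ (2 : ℝ) ^ ((k : ℝ) * -(1 / 2 - a / 16)) *
      (c₀ * ((2 * 2 ^ i) * (2 * 2 ^ j) * (2 * 2 ^ k) *
        (2 : ℝ) ^ ((k : ℝ) * -(a / 4)))) ^ (1 / 2 : ℝ) := by
        gcongr
    _ = (2 : ℝ) ^ ((k : ℝ) * -(1 / 2 - a / 16)) *
        ((c₀ * 8) * (2 : ℝ) ^ ((i : ℝ) + j + k + (k : ℝ) * -(a / 4))) ^ (1 / 2 : ℝ) := by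
        congr 2
        rw [Real.rpow_add h2, Real.rpow_add h2, Real.rpow_add h2, e i, e j, e k]
        ring
    _ = (c₀ * 8) ^ (1 / 2 : ℝ) * (2 : ℝ) ^ (((k : ℝ) * -(1 / 2 - a / 16)) +
        ((i : ℝ) + j + k + (k : ℝ) * -(a / 4)) * (1 / 2)) := by
        rw [Real.mul_rpow (by positivity) (by positivity), ← Real.rpow_mul h2.le,
          Real.rpow_add h2 ((k : ℝ) * -(1 / 2 - a / 16))]
        ring
    _ = (c₀ * 8) ^ (1 / 2 : ℝ) * (2 : ℝ) ^ ((-(a / 16)) * (k : ℝ) + (i : ℝ) * (1 / 2) +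
        (j : ℝ) * (1 / 2)) := by
        congr 2
        ring
    _ = _ := by
        rw [Real.rpow_add h2, Real.rpow_add h2, Real.rpow_mul h2.le, Real.rpow_natCast]
        ring

section Core
variable {χ₀ χ : ℝ → ℝ} {a : ℝ}

lemma outWt_measurable (a : ℝ) : Measurable (outWt a) := by unfold outWt; fun_prop

/-- A high-low dyadic block. -/
def blkHL (a J₁ J₂ J₃ : ℝ) (f : ℝ × ℝ → ℝ≥0∞) (G : ℝ → ℝ≥0∞) (z : ℝ × ℝ) : ℝ≥0∞ :=
  ∫⁻ p, (HLset a J₁ J₂ J₃).indicator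
    (fun w => ENNReal.ofReal |w.1.1| * G w.2.2) (p, z - p) * f p

/-- A dyadic block in which both inputs have comparable or bounded frequencies. -/
def blkHH (a J₁ J₂ J₃ : ℝ) (f g : ℝ × ℝ → ℝ≥0∞) (z : ℝ × ℝ) : ℝ≥0∞ :=
  ∫⁻ p, (HHset a J₁ J₂ J₃).indicator
    (fun w => ENNReal.ofReal (outWt a (w.1.1 + w.2.1)) * g w.2) (p, z - p) * f p

lemma blkHL_integrand_measurable (ha : 0 < a) (J₁ J₂ J₃ : ℝ) {f : ℝ × ℝ → ℝ≥0∞}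
    (hf : Measurable f) {G : ℝ → ℝ≥0∞} (hG : Measurable G) :
    Measurable fun w : (ℝ × ℝ) × (ℝ × ℝ) => (HLset a J₁ J₂ J₃).indicator
      (fun w => ENNReal.ofReal |w.1.1| * G w.2.2) (w.2, w.1 - w.2) * f w.2 := by
  have h : Measurable ((HLset a J₁ J₂ J₃).indicator
      (fun w => ENNReal.ofReal |w.1.1| * G w.2.2)) :=
    Measurable.indicator (by fun_prop) (measurableSet_HLset ha J₁ J₂ J₃)
  fun_prop

lemma blkHH_integrand_measurable (ha : 0 < a) (J₁ J₂ J₃ : ℝ) {f g : ℝ × ℝ → ℝ≥0∞}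
    (hf : Measurable f) (hg : Measurable g) :
    Measurable fun w : (ℝ × ℝ) × (ℝ × ℝ) => (HHset a J₁ J₂ J₃).indicator
      (fun w => ENNReal.ofReal (outWt a (w.1.1 + w.2.1)) * g w.2) (w.2, w.1 - w.2) * f w.2 := by
  have := outWt_measurable a
  have h : Measurable ((HHset a J₁ J₂ J₃).indicator
      (fun w => ENNReal.ofReal (outWt a (w.1.1 + w.2.1)) * g w.2)) :=
    Measurable.indicator (by fun_prop) (measurableSet_HHset ha J₁ J₂ J₃)
  fun_prop

lemma one_le_two_pow (i : ℕ) : (1 : ℝ) ≤ 2 * 2 ^ i := by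
  have : (1 : ℝ) ≤ 2 ^ i := one_le_pow₀ (by norm_num)
  linarith

lemma eN2_blkHL_le (ha : 0 < a) (ha1 : a < 1) (i j k : ℕ) {f : ℝ × ℝ → ℝ≥0∞}
    (hf : Measurable f) {G : ℝ → ℝ≥0∞} (hG : Measurable G) :
    ENNReal.ofReal ((2 : ℝ) ^ ((k : ℝ) * -(1 / 2 - a / 16))) *
      eN2 volume (blkHL a (2 * 2 ^ i) (2 * 2 ^ j) (2 * 2 ^ k) f G) ≤
    ENNReal.ofReal (12000000 * 8) ^ (1 / 2 : ℝ) * ENNReal.ofReal ((2 : ℝ) ^ (-(a / 16))) ^ k *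
      ENNReal.ofReal ((2 : ℝ) ^ ((i : ℝ) * (1 / 2))) *
      ENNReal.ofReal ((2 : ℝ) ^ ((j : ℝ) * (1 / 2))) * (eN2 volume G * eN2 volume f) := by
  have h := HL_main ha ha1 (one_le_two_pow i) (one_le_two_pow j) (one_le_two_pow k) hf hG
  have h2 : eN2 volume (blkHL a (2 * 2 ^ i) (2 * 2 ^ j) (2 * 2 ^ k) f G) ≤ _ :=
    ENNReal.rpow_le_rpow h (by norm_num : (0 : ℝ) ≤ 1 / 2)
  rw [ENNReal.mul_rpow_of_nonneg _ _ (by norm_num),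
    ENNReal.mul_rpow_of_nonneg _ _ (by norm_num)] at h2
  refine (mul_le_mul_right h2 _).trans ?_
  rw [mul_assoc (ENNReal.ofReal _ ^ _), ← mul_assoc]
  exact mul_le_mul_left (block_gain ha (by norm_num) i j k) _

lemma eN2_blkHH_le (ha : 0 < a) (ha1 : a < 1) (i j k : ℕ) {f g : ℝ × ℝ → ℝ≥0∞}
    (hf : Measurable f) (hg : Measurable g) :
    ENNReal.ofReal ((2 : ℝ) ^ ((k : ℝ) * -(1 / 2 - a / 16))) *
      eN2 volume (blkHH a (2 * 2 ^ i) (2 * 2 ^ j) (2 * 2 ^ k) f g) ≤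
    ENNReal.ofReal (3400000 * 8) ^ (1 / 2 : ℝ) * ENNReal.ofReal ((2 : ℝ) ^ (-(a / 16))) ^ k *
      ENNReal.ofReal ((2 : ℝ) ^ ((i : ℝ) * (1 / 2))) *
      ENNReal.ofReal ((2 : ℝ) ^ ((j : ℝ) * (1 / 2))) *
      (wtInt a ^ (1 / 2 : ℝ) * eN2 volume g * eN2 volume f) := by
  have h := HH_main ha ha1 (one_le_two_pow i) (one_le_two_pow j) (one_le_two_pow k) hf hg
  have h2 : eN2 volume (blkHH a (2 * 2 ^ i) (2 * 2 ^ j) (2 * 2 ^ k) f g) ≤ _ :=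
    ENNReal.rpow_le_rpow h (by norm_num : (0 : ℝ) ≤ 1 / 2)
  rw [ENNReal.mul_rpow_of_nonneg _ _ (by norm_num), ENNReal.mul_rpow_of_nonneg _ _ (by norm_num),
    ENNReal.mul_rpow_of_nonneg _ _ (by norm_num)] at h2
  refine (mul_le_mul_right h2 _).trans ?_
  rw [mul_assoc (ENNReal.ofReal _ ^ _), mul_assoc (ENNReal.ofReal _ ^ _), ← mul_assoc, ← mul_assoc]
  rw [mul_assoc _ (wtInt a ^ _ * _)]
  refine (mul_le_mul_left (block_gain ha (by norm_num) i j k) _).trans (le_of_eq ?_)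
  simp only [eN2]

lemma lintegral_tsum_tsum_add {α : Type*} [MeasurableSpace α] {μ : Measure α} {c : ℝ≥0∞}
    {f g : ℕ → ℕ → α → ℝ≥0∞} (hf : ∀ i j, Measurable (f i j)) (hg : ∀ i j, Measurable (g i j)) :
    ∫⁻ x, ∑' i, ∑' j, (c * f i j x + c * g i j x) ∂μ =
      ∑' i, ∑' j, (c * ∫⁻ x, f i j x ∂μ + c * ∫⁻ x, g i j x ∂μ) := by
  rw [lintegral_tsum fun i => by fun_prop]
  congr 1 with i
  rw [lintegral_tsum fun j => by fun_prop]
  congr 1 with j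
  rw [lintegral_add_left ((hf i j).const_mul c), lintegral_const_mul _ (hf i j),
    lintegral_const_mul _ (hg i j)]

/-- The part of the bilinear form in which the first factor carries the derivative. -/
def bilP (F V : ℝ × ℝ → ℝ≥0∞) (z : ℝ × ℝ) : ℝ≥0∞ :=
  ENNReal.ofReal |z.1| * ∫⁻ p, regP.indicator (fun w => F w.1 * V w.2) (p, z - p)

/-- The pointwise bound behind the core estimate: on each dyadic block either the second frequency
is much smaller than the first one, which is then at least one, or the two are comparable or
bounded. -/
lemma block_pointwise (ha : 0 < a) (ha1 : a < 1) (hχ : DyadicCutoffs χ₀ χ) {s : ℝ}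
    (hs : s = 1 / 2 + a / 2 ∨ s = -(1 / 2 + a / 2)) {F V : ℝ × ℝ → ℝ≥0∞} {G : ℕ → ℝ → ℝ≥0∞}
    (hVG : ∀ j q, rchi a χ₀ χ j q * V q ≤ G j q.2) (i j k : ℕ) {p q : ℝ × ℝ}
    (hreg : (p, q) ∈ regP) :
    rchi a χ₀ χ k (p + q) * (wt s (p + q) * (ENNReal.ofReal |p.1 + q.1| *
      ((rchi a χ₀ χ i p * F p) * (rchi a χ₀ χ j q * V q)))) ≤
    200 * ((HLset a (2 * 2 ^ i) (2 * 2 ^ j) (2 * 2 ^ k)).indicator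
        (fun w => ENNReal.ofReal |w.1.1| * G j w.2.2) (p, q) * piece a χ₀ χ s i F p) +
    200 * ((HHset a (2 * 2 ^ i) (2 * 2 ^ j) (2 * 2 ^ k)).indicator
        (fun w => ENNReal.ofReal (outWt a (w.1.1 + w.2.1)) *
          piece a χ₀ χ (1 / 2 + a / 2) j V w.2) (p, q) * piece a χ₀ χ s i F p) := by
  by_cases h0 : rchi a χ₀ χ k (p + q) = 0 ∨ rchi a χ₀ χ i p = 0 ∨ rchi a χ₀ χ j q = 0
  · rcases h0 with h | h | h <;> simp [h]
  push Not at h0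
  have m1 := rchi_supp hχ h0.1
  have m2 := rchi_supp hχ h0.2.1
  have m3 := rchi_supp hχ h0.2.2
  have hs1 : |s| ≤ 1 := by
    rcases hs with h | h <;> rw [h, abs_le] <;> constructor <;> linarith
  have h200 : (200 : ℝ≥0∞) = ENNReal.ofReal 200 := by simp
  obtain ⟨r1, r2⟩ := hreg
  simp only at r1 r2
  by_cases hHL : |q.1| ≤ |p.1| / 8 ∧ 1 ≤ |p.1|
  · have hmem : (p, q) ∈ HLset a (2 * 2 ^ i) (2 * 2 ^ j) (2 * 2 ^ k) :=
      ⟨hHL.1, hHL.2, m2, m3, m1⟩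
    refine le_trans ?_ le_self_add
    rw [Set.indicator_of_mem hmem]
    have hw := ENNReal.ofReal_le_ofReal (wt_HL hs1 hmem)
    rw [ENNReal.ofReal_mul (by positivity), ENNReal.ofReal_mul (by positivity),
      ENNReal.ofReal_mul (by positivity), ← h200] at hw
    calc _ ≤ 1 * (wt s (p + q) * (ENNReal.ofReal |p.1 + q.1| *
        ((rchi a χ₀ χ i p * F p) * G j q.2))) := by
          gcongr
          · exact rchi_le_one hχ k _
          · exact hVG j q
      _ = (wt s (p + q) * ENNReal.ofReal |p.1 + q.1|) * ((rchi a χ₀ χ i p * F p) * G j q.2) := by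
          ring
      _ ≤ (200 * (ENNReal.ofReal |p.1| * wt s p)) * ((rchi a χ₀ χ i p * F p) * G j q.2) :=
          mul_le_mul_left hw _
      _ = _ := by simp only [piece]; ring
  · have hor : (|p.1| ≤ 8 * |q.1| ∧ |q.1| ≤ 8 * |p.1|) ∨ (|p.1| ≤ 8 ∧ |q.1| ≤ 8) := by
      have := abs_nonneg p.1
      by_cases h1 : 1 ≤ |p.1|
      · left
        have : ¬ |q.1| ≤ |p.1| / 8 := fun h => hHL ⟨h, h1⟩
        constructor <;> linarith
      · right
        constructor <;> linarith
    have hmem : (p, q) ∈ HHset a (2 * 2 ^ i) (2 * 2 ^ j) (2 * 2 ^ k) := ⟨hor, m2, m3, m1⟩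
    refine le_trans ?_ le_add_self
    rw [Set.indicator_of_mem hmem]
    have hw := ENNReal.ofReal_le_ofReal (wt_HH ha ha1 hs r1 hor)
    rw [ENNReal.ofReal_mul (by positivity), ENNReal.ofReal_mul (by positivity),
      ENNReal.ofReal_mul (outWt_nonneg _ _), ENNReal.ofReal_mul (by positivity), ← h200] at hw
    calc _ ≤ 1 * (wt s (p + q) * (ENNReal.ofReal |p.1 + q.1| *
        ((rchi a χ₀ χ i p * F p) * (rchi a χ₀ χ j q * V q)))) := by
          gcongr
          exact rchi_le_one hχ k _
      _ = (wt s (p + q) * ENNReal.ofReal |p.1 + q.1|) *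
          ((rchi a χ₀ χ i p * F p) * (rchi a χ₀ χ j q * V q)) := by ring
      _ ≤ (200 * (ENNReal.ofReal (outWt a (p.1 + q.1)) * (wt (1 / 2 + a / 2) q * wt s p))) *
          ((rchi a χ₀ χ i p * F p) * (rchi a χ₀ χ j q * V q)) :=
          mul_le_mul_left hw _
      _ = _ := by simp only [piece]; ring

/-- The constant in the core estimate. -/
def coreC (a : ℝ) : ℝ≥0∞ :=
  200 * (ENNReal.ofReal (12000000 * 8) ^ (1 / 2 : ℝ) +
    ENNReal.ofReal (3400000 * 8) ^ (1 / 2 : ℝ) * wtInt a ^ (1 / 2 : ℝ)) *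
    ∑' k : ℕ, ENNReal.ofReal ((2 : ℝ) ^ (-(a / 16))) ^ k

lemma coreC_lt_top (ha : 0 < a) : coreC a < ∞ := by
  have h1 := wtInt_lt_top ha
  have h2 := tsum_gain_lt_top ha
  have h3 : wtInt a ^ (1 / 2 : ℝ) < ∞ := ENNReal.rpow_lt_top_of_nonneg (by norm_num) h1.ne
  have h4 : ∀ x : ℝ, ENNReal.ofReal x ^ (1 / 2 : ℝ) < ∞ := fun x =>
    ENNReal.rpow_lt_top_of_nonneg (by norm_num) ENNReal.ofReal_ne_top
  unfold coreC
  refine ENNReal.mul_lt_top (ENNReal.mul_lt_top (by norm_num) ?_) h2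
  exact ENNReal.add_lt_top.mpr ⟨h4 _, ENNReal.mul_lt_top (h4 _) h3⟩

/-- The core bilinear estimate: the factor carrying the derivative is placed in the weighted space,
the other one is measured through majorants `G j` depending on the time frequency only and through
its `X^{1/2}_{s*}` norm. -/
theorem core_estimate (ha : 0 < a) (ha1 : a < 1) (hχ : DyadicCutoffs χ₀ χ) {s : ℝ}
    (hs : s = 1 / 2 + a / 2 ∨ s = -(1 / 2 + a / 2)) {F V : ℝ × ℝ → ℝ≥0∞} (hF : Measurable F)
    (hV : Measurable V) {G : ℕ → ℝ → ℝ≥0∞} (hG : ∀ j, Measurable (G j))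
    (hVG : ∀ j q, rchi a χ₀ χ j q * V q ≤ G j q.2) :
    eX a χ₀ χ (-(1 / 2 - a / 16)) s (bilP F V) ≤
      coreC a * eX a χ₀ χ (1 / 2) s F *
        (∑' j : ℕ, ENNReal.ofReal ((2 : ℝ) ^ ((j : ℝ) * (1 / 2))) * eN2 volume (G j) +
          eX a χ₀ χ (1 / 2) (1 / 2 + a / 2) V) := by
  have hpF := fun i => piece_measurable ha hχ s i hF
  have hpV := fun j => piece_measurable ha hχ (1 / 2 + a / 2) j hV
  have mHL := fun i j k : ℕ => blkHL_integrand_measurable ha (2 * 2 ^ i) (2 * 2 ^ j) (2 * 2 ^ k)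
    (hpF i) (hG j)
  have mHH := fun i j k : ℕ => blkHH_integrand_measurable ha (2 * 2 ^ i) (2 * 2 ^ j) (2 * 2 ^ k)
    (hpF i) (hpV j)
  have nHL : ∀ i j k : ℕ, Measurable (blkHL a (2 * 2 ^ i) (2 * 2 ^ j) (2 * 2 ^ k)
      (piece a χ₀ χ s i F) (G j)) := fun i j k => (mHL i j k).lintegral_prod_right'
  have nHH : ∀ i j k : ℕ, Measurable (blkHH a (2 * 2 ^ i) (2 * 2 ^ j) (2 * 2 ^ k)
      (piece a χ₀ χ s i F) (piece a χ₀ χ (1 / 2 + a / 2) j V)) :=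
    fun i j k => (mHH i j k).lintegral_prod_right'
  have hKm : ∀ i j k : ℕ, Measurable fun z =>
      200 * blkHL a (2 * 2 ^ i) (2 * 2 ^ j) (2 * 2 ^ k) (piece a χ₀ χ s i F) (G j) z +
      200 * blkHH a (2 * 2 ^ i) (2 * 2 ^ j) (2 * 2 ^ k) (piece a χ₀ χ s i F)
        (piece a χ₀ χ (1 / 2 + a / 2) j V) z := fun i j k =>
    ((nHL i j k).const_mul _).add ((nHH i j k).const_mul _)
  have main := eX_bilinear_of_blocks (a := a) (χ₀ := χ₀) (χ := χ) (b := -(1 / 2 - a / 16)) (s := s)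
    (T := bilP F V)
    (C := 200 * (ENNReal.ofReal (12000000 * 8) ^ (1 / 2 : ℝ) +
      ENNReal.ofReal (3400000 * 8) ^ (1 / 2 : ℝ) * wtInt a ^ (1 / 2 : ℝ)))
    (A := fun i => ENNReal.ofReal ((2 : ℝ) ^ ((i : ℝ) * (1 / 2))) *
      eN2 volume (piece a χ₀ χ s i F))
    (B := fun j => ENNReal.ofReal ((2 : ℝ) ^ ((j : ℝ) * (1 / 2))) * eN2 volume (G j) +
      ENNReal.ofReal ((2 : ℝ) ^ ((j : ℝ) * (1 / 2))) *
        eN2 volume (piece a χ₀ χ (1 / 2 + a / 2) j V)) hKm ?_ ?_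
  · rw [ENNReal.tsum_add] at main
    exact main
  · intro k z
    have hpt : ∀ p, rchi a χ₀ χ k z * (wt s z * (ENNReal.ofReal |z.1| *
        regP.indicator (fun w => F w.1 * V w.2) (p, z - p))) ≤
        ∑' i : ℕ, ∑' j : ℕ, (200 * ((HLset a (2 * 2 ^ i) (2 * 2 ^ j) (2 * 2 ^ k)).indicator
        (fun w => ENNReal.ofReal |w.1.1| * G j w.2.2) (p, z - p) * piece a χ₀ χ s i F p) +
        200 * ((HHset a (2 * 2 ^ i) (2 * 2 ^ j) (2 * 2 ^ k)).indicator
        (fun w => ENNReal.ofReal (outWt a (w.1.1 + w.2.1)) *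
          piece a χ₀ χ (1 / 2 + a / 2) j V w.2) (p, z - p) * piece a χ₀ χ s i F p)) := by
      intro p
      by_cases hr : (p, z - p) ∈ regP
      · have hz : p + (z - p) = z := by abel
        have hz1 : p.1 + (z - p).1 = z.1 := by simp
        have := fun i j => block_pointwise ha ha1 hχ hs (F := F) hVG i j k hr
        simp only [hz, hz1] at this
        refine le_trans ?_ (ENNReal.tsum_le_tsum fun i => ENNReal.tsum_le_tsum fun j => this i j)
        rw [Set.indicator_of_mem hr]
        simp_rw [ENNReal.tsum_mul_left, ENNReal.tsum_mul_right]
        gcongr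
        · exact le_mul_of_one_le_left' (one_le_tsum_rchi hχ p)
        · exact le_mul_of_one_le_left' (one_le_tsum_rchi hχ _)
      · simp [Set.indicator_of_notMem hr]
    calc piece a χ₀ χ s k (bilP F V) z
        = ∫⁻ p, rchi a χ₀ χ k z * (wt s z * (ENNReal.ofReal |z.1| *
          regP.indicator (fun w => F w.1 * V w.2) (p, z - p))) := by
          have hm : Measurable fun p => regP.indicator (fun w => F w.1 * V w.2) (p, z - p) := by
            have : Measurable (regP.indicator (fun w : (ℝ × ℝ) × (ℝ × ℝ) => F w.1 * V w.2)) :=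
              Measurable.indicator (by fun_prop) measurableSet_regP
            fun_prop
          rw [lintegral_const_mul _ (by fun_prop), lintegral_const_mul _ (by fun_prop),
            lintegral_const_mul _ hm]
          rfl
      _ ≤ _ := lintegral_mono hpt
      _ = _ := by
          have e1 : ∀ i j, Measurable fun p => (HLset a (2 * 2 ^ i) (2 * 2 ^ j) (2 * 2 ^ k)).indicator
              (fun w => ENNReal.ofReal |w.1.1| * G j w.2.2) (p, z - p) * piece a χ₀ χ s i F p :=
            fun i j => (mHL i j k).comp measurable_prodMk_left
          have e2 : ∀ i j, Measurable fun p => (HHset a (2 * 2 ^ i) (2 * 2 ^ j) (2 * 2 ^ k)).indicator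
              (fun w => ENNReal.ofReal (outWt a (w.1.1 + w.2.1)) *
              piece a χ₀ χ (1 / 2 + a / 2) j V w.2) (p, z - p) * piece a χ₀ χ s i F p :=
            fun i j => (mHH i j k).comp measurable_prodMk_left
          exact lintegral_tsum_tsum_add e1 e2
  · intro i j k
    have h1 := eN2_blkHL_le ha ha1 i j k (hpF i) (hG j)
    have h2 := eN2_blkHH_le ha ha1 i j k (hpF i) (hpV j)
    set wk := ENNReal.ofReal ((2 : ℝ) ^ ((k : ℝ) * -(1 / 2 - a / 16)))
    refine (mul_le_mul_right (eN2_add_le ((nHL i j k).const_mul _) ((nHH i j k).const_mul _))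
      _).trans ?_
    rw [eN2_const_mul _ (nHL i j k), eN2_const_mul _ (nHH i j k)]
    set c1 := ENNReal.ofReal (12000000 * 8) ^ (1 / 2 : ℝ)
    set c2 := ENNReal.ofReal (3400000 * 8) ^ (1 / 2 : ℝ)
    set W := wtInt a ^ (1 / 2 : ℝ)
    set γ := ENNReal.ofReal ((2 : ℝ) ^ (-(a / 16))) ^ k
    set wi := ENNReal.ofReal ((2 : ℝ) ^ ((i : ℝ) * (1 / 2)))
    set wj := ENNReal.ofReal ((2 : ℝ) ^ ((j : ℝ) * (1 / 2)))
    set NF := eN2 volume (piece a χ₀ χ s i F)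
    set NV := eN2 volume (piece a χ₀ χ (1 / 2 + a / 2) j V)
    set NG := eN2 volume (G j)
    calc _ ≤ 200 * (c1 * γ * wi * wj * (NG * NF)) + 200 * (c2 * γ * wi * wj * (W * NV * NF)) := by
          refine le_trans (le_of_eq ?_) (add_le_add (mul_le_mul_right h1 200)
            (mul_le_mul_right h2 200))
          ring
      _ ≤ 200 * (c1 * γ * wi * wj * (NG * NF)) + 200 * (c2 * γ * wi * wj * (W * NV * NF)) +
          (200 * (c1 * γ * wi * wj * (NV * NF)) + 200 * (c2 * γ * wi * wj * (W * NG * NF))) :=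
          le_self_add
      _ = _ := by ring

end Core

/-! ### The plain product -/

section Product
variable {χ₀ χ : ℝ → ℝ} {a : ℝ}

lemma wt_mul_wt_neg (s : ℝ) (z : ℝ × ℝ) : wt (-s) z * wt s z = 1 := by
  unfold wt
  rw [← ENNReal.ofReal_mul (by positivity), ← Real.rpow_add (by positivity)]
  simp

lemma one_le_wt {s : ℝ} (hs : 0 ≤ s) (z : ℝ × ℝ) : 1 ≤ wt s z := by
  unfold wt
  rw [← ENNReal.ofReal_one]
  refine ENNReal.ofReal_le_ofReal (Real.one_le_rpow ?_ hs)
  linarith [abs_nonneg z.1]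

lemma wt_neg_le_one {s : ℝ} (hs : 0 ≤ s) (z : ℝ × ℝ) : wt (-s) z ≤ 1 := by
  rw [← wt_mul_wt_neg s z]
  exact le_mul_of_one_le_right' (one_le_wt hs z)

/-- Convolution of nonnegative functions on the plane. -/
def econv (F V : ℝ × ℝ → ℝ≥0∞) (z : ℝ × ℝ) : ℝ≥0∞ := ∫⁻ p, F p * V (z - p)

/-- A dyadic block of a plain product. -/
def blkP (a J : ℝ) (f g : ℝ × ℝ → ℝ≥0∞) (z : ℝ × ℝ) : ℝ≥0∞ :=
  ∫⁻ p, ({q | |modu a q| ≤ J}.indicator (wt (-(1 / 2 + a / 2))) (z - p) * g (z - p)) * f p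

lemma measurableSet_strip (ha : 0 < a) (J : ℝ) : MeasurableSet {p | |modu a p| ≤ J} :=
  measurableSet_le (by have := modu_measurable ha; fun_prop) measurable_const

lemma blkP_sq_le (ha : 0 < a) (J : ℝ) {f g : ℝ × ℝ → ℝ≥0∞} (hf : Measurable f)
    (hg : Measurable g) :
    ∫⁻ z, blkP a J f g z ^ 2 ≤
      (ENNReal.ofReal (2 * J) * wtInt a) * (∫⁻ q, g q ^ 2) * ∫⁻ p, f p ^ 2 := by
  have hind : Measurable ({q | |modu a q| ≤ J}.indicator (wt (-(1 / 2 + a / 2)))) :=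
    (wt_measurable _).indicator (measurableSet_strip ha J)
  refine schur_test
    (k := fun _ q => {q | |modu a q| ≤ J}.indicator (wt (-(1 / 2 + a / 2))) q * g q)
    (k₁ := fun _ q => ({q | |modu a q| ≤ J}.indicator (wt (-(1 / 2 + a / 2))) q) ^ 2)
    (k₂ := fun _ q => g q ^ 2) (by fun_prop) (by fun_prop)
    (fun p q => by rw [mul_pow]) ?_ (fun _ => le_rfl) hf
  intro z
  rw [lintegral_sub_left_eq_self
    (fun q => ({q | |modu a q| ≤ J}.indicator (wt (-(1 / 2 + a / 2))) q) ^ 2) z]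
  refine le_trans (lintegral_mono fun q => ?_) (lint_strip (a := a) (J := J) ha
    (h := fun x => ENNReal.ofReal ((1 + |x|) ^ (-(1 + a / 2)))) (by fun_prop))
  by_cases hq : q ∈ {q | |modu a q| ≤ J}
  · simp only [Set.indicator_of_mem hq, wt]
    rw [← ENNReal.ofReal_pow (by positivity), ← Real.rpow_natCast, ← Real.rpow_mul (by positivity)]
    refine ENNReal.ofReal_le_ofReal (Real.rpow_le_rpow_of_exponent_le ?_ ?_)
    · linarith [abs_nonneg q.1]
    · push_cast; linarith
  · simp [Set.indicator_of_notMem hq]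

/-- The constant in the estimate of a plain product. -/
def prodC (a : ℝ) : ℝ≥0∞ :=
  2 * wtInt a ^ (1 / 2 : ℝ) * ∑' k : ℕ, ENNReal.ofReal ((2 : ℝ) ^ (-(a / 16))) ^ k

lemma prodC_lt_top (ha : 0 < a) : prodC a < ∞ :=
  ENNReal.mul_lt_top (ENNReal.mul_lt_top (by norm_num)
    (ENNReal.rpow_lt_top_of_nonneg (by norm_num) (wtInt_lt_top ha).ne)) (tsum_gain_lt_top ha)

/-- The estimate of a product without weight and without derivative. The weight `s*` makes each
modulation piece of the transform of the second factor integrable. -/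
theorem prod_estimate (ha : 0 < a) (ha1 : a < 1) (hχ : DyadicCutoffs χ₀ χ)
    {F V : ℝ × ℝ → ℝ≥0∞} (hF : Measurable F) (hV : Measurable V) :
    eX a χ₀ χ (-(1 / 2 - a / 16)) (-(1 / 2 + a / 2)) (econv F V) ≤
      prodC a * eX a χ₀ χ (1 / 2) (1 / 2 + a / 2) F * eX a χ₀ χ (1 / 2) (1 / 2 + a / 2) V := by
  have hpF := fun i => piece_measurable ha hχ (1 / 2 + a / 2) i hF
  have hpV := fun j => piece_measurable ha hχ (1 / 2 + a / 2) j hV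
  have hσ : 0 ≤ 1 / 2 + a / 2 := by positivity
  have hind : ∀ J, Measurable ({q | |modu a q| ≤ J}.indicator (wt (-(1 / 2 + a / 2)))) :=
    fun J => (wt_measurable _).indicator (measurableSet_strip ha J)
  have mm : ∀ i j : ℕ, Measurable fun w : (ℝ × ℝ) × (ℝ × ℝ) =>
      ({q | |modu a q| ≤ 2 * 2 ^ j}.indicator (wt (-(1 / 2 + a / 2))) (w.1 - w.2) *
        piece a χ₀ χ (1 / 2 + a / 2) j V (w.1 - w.2)) * piece a χ₀ χ (1 / 2 + a / 2) i F w.2 := by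
    intro i j
    have := hpF i
    have := hpV j
    have := hind (2 * 2 ^ j)
    fun_prop
  refine eX_bilinear_of_blocks (K := fun i j _ => blkP a (2 * 2 ^ j)
    (piece a χ₀ χ (1 / 2 + a / 2) i F) (piece a χ₀ χ (1 / 2 + a / 2) j V))
    (fun i j _ => (mm i j).lintegral_prod_right') ?_ ?_
  · intro k z
    calc piece a χ₀ χ (-(1 / 2 + a / 2)) k (econv F V) z ≤ 1 * (1 * econv F V z) := by
          unfold piece
          gcongr
          · exact rchi_le_one hχ k z
          · exact wt_neg_le_one hσ z
      _ = ∫⁻ p, F p * V (z - p) := by simp [econv]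
      _ ≤ ∫⁻ p, ∑' i, ∑' j : ℕ,
          ({q | |modu a q| ≤ 2 * 2 ^ j}.indicator (wt (-(1 / 2 + a / 2))) (z - p) *
          piece a χ₀ χ (1 / 2 + a / 2) j V (z - p)) * piece a χ₀ χ (1 / 2 + a / 2) i F p := by
          refine lintegral_mono fun p => ?_
          have h1 : F p ≤ ∑' i, piece a χ₀ χ (1 / 2 + a / 2) i F p := by
            refine (le_tsum_rchi_mul (a := a) hχ p (F p)).trans (ENNReal.tsum_le_tsum fun i => ?_)
            unfold piece
            gcongr
            exact le_mul_of_one_le_left' (one_le_wt hσ p)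
          have h2 : V (z - p) ≤ ∑' j : ℕ,
              {q | |modu a q| ≤ 2 * 2 ^ j}.indicator (wt (-(1 / 2 + a / 2))) (z - p) *
              piece a χ₀ χ (1 / 2 + a / 2) j V (z - p) := by
            refine (le_tsum_rchi_mul (a := a) hχ (z - p) (V (z - p))).trans
              (ENNReal.tsum_le_tsum fun j => ?_)
            by_cases h : rchi a χ₀ χ j (z - p) = 0
            · simp [h]
            · have hm : z - p ∈ {q | |modu a q| ≤ 2 * 2 ^ j} := rchi_supp hχ h
              rw [Set.indicator_of_mem hm, piece]
              refine le_of_eq ?_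
              calc _ = rchi a χ₀ χ j (z - p) * ((wt (-(1 / 2 + a / 2)) (z - p) *
                    wt (1 / 2 + a / 2) (z - p)) * V (z - p)) := by rw [wt_mul_wt_neg, one_mul]
                _ = _ := by ring
          simp_rw [ENNReal.tsum_mul_right, ENNReal.tsum_mul_left]
          rw [mul_comm]
          gcongr
      _ = _ := by
          have e : ∀ i j, Measurable fun p =>
              ({q | |modu a q| ≤ 2 * 2 ^ j}.indicator (wt (-(1 / 2 + a / 2))) (z - p) *
              piece a χ₀ χ (1 / 2 + a / 2) j V (z - p)) *
              piece a χ₀ χ (1 / 2 + a / 2) i F p := by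
            intro i j
            have h1 := hpF i
            have h2 := hpV j
            have h3 := hind (2 * 2 ^ j)
            fun_prop
          rw [lintegral_tsum fun i => (Measurable.tsum fun j => e i j).aemeasurable]
          congr 1 with i
          rw [lintegral_tsum fun j => (e i j).aemeasurable]
          rfl
  · intro i j k
    have h2 := blkP_sq_le ha (2 * 2 ^ j) (hpF i) (hpV j)
    replace h2 := ENNReal.rpow_le_rpow h2 (by norm_num : (0 : ℝ) ≤ 1 / 2)
    rw [ENNReal.mul_rpow_of_nonneg _ _ (by norm_num), ENNReal.mul_rpow_of_nonneg _ _ (by norm_num),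
      ENNReal.mul_rpow_of_nonneg _ _ (by norm_num)] at h2
    have two : (2 : ℝ) ^ ((j : ℝ) * (1 / 2)) = ((2 : ℝ) ^ j) ^ (1 / 2 : ℝ) := by
      rw [Real.rpow_mul (by norm_num), Real.rpow_natCast]
    have e1 : ENNReal.ofReal (2 * (2 * 2 ^ j)) ^ (1 / 2 : ℝ) =
        2 * ENNReal.ofReal ((2 : ℝ) ^ ((j : ℝ) * (1 / 2))) := by
      rw [two, ← ENNReal.ofReal_rpow_of_nonneg (by positivity) (by norm_num), ← mul_assoc,
        ENNReal.ofReal_mul (by norm_num), ENNReal.mul_rpow_of_nonneg _ _ (by norm_num)]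
      congr 1
      rw [show ENNReal.ofReal (2 * 2) = 2 ^ 2 by norm_num, ennreal_sq_rpow_half]
    have e2 : ENNReal.ofReal ((2 : ℝ) ^ ((k : ℝ) * -(1 / 2 - a / 16))) ≤
        ENNReal.ofReal ((2 : ℝ) ^ (-(a / 16))) ^ k := by
      rw [← ENNReal.ofReal_pow (by positivity), ← Real.rpow_natCast,
        ← Real.rpow_mul (by norm_num)]
      refine ENNReal.ofReal_le_ofReal (Real.rpow_le_rpow_of_exponent_le (by norm_num) ?_)
      have : (0 : ℝ) ≤ k := by positivity
      nlinarith
    have e3 : 1 ≤ ENNReal.ofReal ((2 : ℝ) ^ ((i : ℝ) * (1 / 2))) := by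
      rw [← ENNReal.ofReal_one]
      exact ENNReal.ofReal_le_ofReal (Real.one_le_rpow (by norm_num) (by positivity))
    rw [e1] at h2
    refine (mul_le_mul' e2 h2).trans ?_
    change _ * (_ * eN2 volume _ * eN2 volume _) ≤ _
    refine (le_mul_of_one_le_left' e3).trans (le_of_eq ?_)
    ring

end Product

/-! ### Majorants depending on the time frequency only -/

section Majorant
variable {χ₀ χ : ℝ → ℝ} {a : ℝ}

/-- A closed set of modulations containing the support of the `j`-th cutoff. -/
def annul (j : ℕ) : Set ℝ := {y | |y| ≤ 2 * 2 ^ j ∧ (j = 0 ∨ (2 : ℝ) ^ j ≤ 2 * |y|)}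

lemma isClosed_annul (j : ℕ) : IsClosed (annul j) := by
  have h1 : IsClosed {y : ℝ | |y| ≤ 2 * 2 ^ j} := isClosed_le continuous_abs continuous_const
  have h2 : IsClosed {y : ℝ | (2 : ℝ) ^ j ≤ 2 * |y|} :=
    isClosed_le continuous_const (continuous_const.mul continuous_abs)
  by_cases hj : j = 0
  · have : annul j = {y : ℝ | |y| ≤ 2 * 2 ^ j} := by ext; simp [annul, hj]
    rwa [this]
  · have : annul j = {y : ℝ | |y| ≤ 2 * 2 ^ j} ∩ {y : ℝ | (2 : ℝ) ^ j ≤ 2 * |y|} := by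
      ext; simp [annul, hj]
    rw [this]
    exact h1.inter h2

lemma chiJ_eq_zero (hχ : DyadicCutoffs χ₀ χ) {j : ℕ} {y : ℝ} (h : y ∉ annul j) :
    chiJ χ₀ χ j y = 0 := by
  by_contra h0
  refine h ⟨chiJ_supp hχ h0, ?_⟩
  by_cases hj : j = 0
  · exact Or.inl hj
  · exact Or.inr (chiJ_supp_lower hχ hj h0)

lemma deriv_chiJ_eq_zero (hχ : DyadicCutoffs χ₀ χ) {j : ℕ} {y : ℝ} (h : y ∉ annul j) :
    deriv (chiJ χ₀ χ j) y = 0 := by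
  have : chiJ χ₀ χ j =ᶠ[nhds y] fun _ => 0 := by
    filter_upwards [(isClosed_annul j).isOpen_compl.mem_nhds h] with x hx
    exact chiJ_eq_zero hχ hx
  rw [this.deriv_eq, deriv_const]

lemma hasCompactSupport_of_abs {f : ℝ → ℝ} (h : ∀ z, 2 < |z| → f z = 0) : HasCompactSupport f :=
  HasCompactSupport.intro (isCompact_closedBall (0 : ℝ) 2) fun x hx => h x (by simpa using hx)

lemma exists_deriv_chiJ_le (hχ : DyadicCutoffs χ₀ χ) :
    ∃ M : ℝ, 0 ≤ M ∧ ∀ (j : ℕ) (y : ℝ), |deriv (chiJ χ₀ χ j) y| ≤ M * (2 ^ j)⁻¹ := by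
  have c0 := hasCompactSupport_of_abs hχ.supp0
  have c1 : HasCompactSupport χ := hasCompactSupport_of_abs fun z hz => by
    by_contra h0
    linarith [(hχ.supp1 z h0).2]
  obtain ⟨M0, h0⟩ := (hχ.smooth0.continuous_deriv (by simp)).bounded_above_of_compact_support c0.deriv
  obtain ⟨M1, h1⟩ := (hχ.smooth1.continuous_deriv (by simp)).bounded_above_of_compact_support c1.deriv
  refine ⟨max M0 M1, ((norm_nonneg _).trans (h0 0)).trans (le_max_left _ _), fun j y => ?_⟩
  by_cases hj : j = 0
  · subst hj
    have : chiJ χ₀ χ 0 = χ₀ := by ext; simp [chiJ]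
    rw [this]
    simpa using Or.inl (h0 y)
  · have : chiJ χ₀ χ j = fun z => χ ((2 : ℝ) ^ (-(j : ℝ)) * z) := by ext; simp [chiJ, hj]
    rw [this, deriv_comp_mul_left, smul_eq_mul, abs_mul, abs_of_pos (by positivity),
      Real.rpow_neg (by norm_num), Real.rpow_natCast, mul_comm]
    gcongr
    exact (h1 _).trans (le_max_right _ _)

lemma annul_overlap (hχ : DyadicCutoffs χ₀ χ) {j j' : ℕ} {z : ℝ × ℝ} (h : modu a z ∈ annul j)
    (h' : rchi a χ₀ χ j' z ≠ 0) : j < j' + 3 := by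
  rcases h.2 with h0 | h0
  · omega
  · have h1 := rchi_supp hχ h'
    have h2 : (2 : ℝ) ^ j ≤ 2 ^ (j' + 2) := by rw [pow_add]; linarith
    have := (pow_le_pow_iff_right₀ (by norm_num : (1 : ℝ) < 2)).mp h2
    omega

/-- The density in `ξ` whose integral controls `χ_j |V|²`. -/
def dens (a : ℝ) (χ₀ χ : ℝ → ℝ) (M : ℝ) (j : ℕ) (V V₁ : ℝ × ℝ → ℂ) (z : ℝ × ℝ) : ℝ≥0∞ :=
  2 * (rchi a χ₀ χ j z ^ 2 * (‖V z‖ₑ * ‖V₁ z‖ₑ)) +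
    ENNReal.ofReal (3 * M * (2 ^ j)⁻¹) *
      ((modu a ⁻¹' annul j).indicator (fun z => wt (1 / 2 + a / 2) z * ‖V z‖ₑ) z) ^ 2

/-- A majorant of the `j`-th piece of `V` that is independent of `ξ`. -/
def majG (a : ℝ) (χ₀ χ : ℝ → ℝ) (M : ℝ) (j : ℕ) (V V₁ : ℝ × ℝ → ℂ) (y : ℝ) : ℝ≥0∞ :=
  (∫⁻ x, dens a χ₀ χ M j V V₁ (x, y)) ^ (1 / 2 : ℝ)

lemma annInd_measurable (ha : 0 < a) (j : ℕ) {V : ℝ × ℝ → ℂ} (hV : Continuous V) :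
    Measurable ((modu a ⁻¹' annul j).indicator (fun z => wt (1 / 2 + a / 2) z * ‖V z‖ₑ)) :=
  ((wt_measurable _).mul hV.measurable.enorm).indicator
    ((isClosed_annul j).measurableSet.preimage (modu_measurable ha))

lemma dens_measurable (ha : 0 < a) (hχ : DyadicCutoffs χ₀ χ) (M : ℝ) (j : ℕ) {V V₁ : ℝ × ℝ → ℂ}
    (hV : Continuous V) (hV₁ : Continuous V₁) : Measurable (dens a χ₀ χ M j V V₁) := by
  have h1 := rchi_measurable ha hχ j
  have h2 := annInd_measurable (a := a) ha j hV
  have h3 := hV.measurable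
  have h4 := hV₁.measurable
  unfold dens
  fun_prop

lemma majG_measurable (ha : 0 < a) (hχ : DyadicCutoffs χ₀ χ) (M : ℝ) (j : ℕ) {V V₁ : ℝ × ℝ → ℂ}
    (hV : Continuous V) (hV₁ : Continuous V₁) : Measurable (majG a χ₀ χ M j V V₁) :=
  (dens_measurable ha hχ M j hV hV₁).lintegral_prod_left'.pow_const _

lemma abs_le_of_disp (ha : 0 < a) {x R : ℝ} (h : |disp a x| ≤ R) : |x| ≤ max 1 R := by
  by_cases h1 : |x| ≤ 1
  · exact h1.trans (le_max_left _ _)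
  · push Not at h1
    refine le_trans ?_ (h.trans (le_max_right _ _))
    rw [disp, abs_mul, abs_of_nonneg (by positivity : 0 ≤ |x| ^ (1 + a))]
    exact le_mul_of_one_le_right (abs_nonneg x) (Real.one_le_rpow h1.le (by linarith))

/-- The fundamental theorem of calculus in `ξ`, applied to `χ_j(λ - ω(ξ)) V(ξ, λ)²`. -/
lemma rchi_mul_le_majG (ha : 0 < a) (ha1 : a < 1) (hχ : DyadicCutoffs χ₀ χ) {M : ℝ} (hM : 0 ≤ M)
    (hMd : ∀ (j : ℕ) (y : ℝ), |deriv (chiJ χ₀ χ j) y| ≤ M * (2 ^ j)⁻¹) {V V₁ : ℝ × ℝ → ℂ}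
    (hV : Continuous V) (hV₁ : Continuous V₁)
    (hd : ∀ x y, HasDerivAt (fun x => V (x, y)) (V₁ (x, y)) x) (j : ℕ) (q : ℝ × ℝ) :
    rchi a χ₀ χ j q * ‖V q‖ₑ ≤ majG a χ₀ χ M j V V₁ q.2 := by
  refine le_rpow_half_of_sq_le ?_
  obtain ⟨x, y⟩ := q
  set c : ℝ → ℝ := fun x => chiJ χ₀ χ j (y - disp a x)
  set c' : ℝ → ℝ := fun x => deriv (chiJ χ₀ χ j) (y - disp a x) * -((2 + a) * |x| ^ (1 + a))
  have hcd : ∀ x, HasDerivAt c (c' x) x := fun x => by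
    have h1 := ((chiJ_contDiff hχ j).differentiable (by simp) (y - disp a x)).hasDerivAt
    exact h1.comp x ((disp_hasDerivAt ha x).const_sub y)
  set h : ℝ → ℂ := fun x => (c x : ℂ) * V (x, y) ^ 2
  have hhd : ∀ x, HasDerivAt h ((c' x : ℂ) * V (x, y) ^ 2 +
      (c x : ℂ) * (2 * V (x, y) * V₁ (x, y))) x := fun x => by
    have := ((hcd x).ofReal_comp).mul ((hd x y).pow 2)
    refine this.congr_deriv ?_
    simp
  have hcc : Continuous c := continuous_iff_continuousAt.mpr fun x => (hcd x).continuousAt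
  have hcc' : Continuous c' := by
    have h1 := (chiJ_contDiff hχ j).continuous_deriv (by simp)
    have h2 := disp_continuous ha
    have h3 : Continuous fun x : ℝ => |x| ^ (1 + a) :=
      continuous_abs.rpow_const fun x => Or.inr (by linarith)
    fun_prop
  have hC1 : ContDiff ℝ 1 h := by
    rw [contDiff_one_iff_deriv]
    refine ⟨fun x => (hhd x).differentiableAt, ?_⟩
    rw [funext fun x => (hhd x).deriv]
    fun_prop
  have hcs : HasCompactSupport h := by
    refine HasCompactSupport.intro
      (isCompact_closedBall (0 : ℝ) (max 1 (|y| + 2 * 2 ^ j))) fun x hx => ?_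
    have : c x = 0 := by
      by_contra h0
      refine hx ?_
      have h1 := chiJ_supp hχ h0
      simp only [Metric.mem_closedBall, dist_zero_right, Real.norm_eq_abs]
      refine abs_le_of_disp ha ?_
      calc |disp a x| = |y - (y - disp a x)| := by congr 1; ring
        _ ≤ |y| + |y - disp a x| := abs_sub _ _
        _ ≤ _ := by linarith
    simp [h, this]
  have hlhs : (rchi a χ₀ χ j (x, y) * ‖V (x, y)‖ₑ) ^ 2 = ‖h x‖ₑ := by
    rw [mul_pow, rchi, ennreal_rpow_half_sq, enorm_mul, enorm_pow]
    congr 1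
    rw [← ofReal_norm, Complex.norm_real, Real.norm_of_nonneg (chiJ_mem hχ j _).1]
    rfl
  rw [hlhs]
  refine (hcs.enorm_le_lintegral_Ici_deriv hC1 x).trans ?_
  refine (setLIntegral_le_lintegral _ _).trans (lintegral_mono fun x => ?_)
  rw [(hhd x).deriv, dens, add_comm]
  refine (enorm_add_le _ _).trans (add_le_add (le_of_eq ?_) ?_)
  · rw [rchi, ennreal_rpow_half_sq]
    simp only [enorm_mul]
    have : ‖(c x : ℂ)‖ₑ = ENNReal.ofReal (chiJ χ₀ χ j (modu a (x, y))) := by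
      rw [← ofReal_norm, Complex.norm_real, Real.norm_of_nonneg (chiJ_mem hχ j _).1]
      rfl
    rw [this, show ‖(2 : ℂ)‖ₑ = 2 by rw [← ofReal_norm]; simp]
    ring
  · by_cases hm : (x, y) ∈ modu a ⁻¹' annul j
    · rw [Set.indicator_of_mem hm, enorm_mul, enorm_pow, mul_pow, ← mul_assoc]
      gcongr
      rw [← ofReal_norm, Complex.norm_real, Real.norm_eq_abs, wt,
        ← ENNReal.ofReal_pow (by positivity), ← ENNReal.ofReal_mul (by positivity)]
      refine ENNReal.ofReal_le_ofReal ?_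
      rw [abs_mul, abs_neg, abs_of_nonneg (by positivity : 0 ≤ (2 + a) * |x| ^ (1 + a)),
        ← Real.rpow_natCast (_ ^ (1 / 2 + a / 2)), ← Real.rpow_mul (by positivity)]
      calc _ ≤ (M * (2 ^ j)⁻¹) * (3 * (1 + |x|) ^ (1 + a)) := by
            gcongr
            · exact hMd j _
            · linarith
            · linarith
        _ = _ := by
            rw [show (1 / 2 + a / 2) * ((2 : ℕ) : ℝ) = 1 + a by push_cast; ring]
            ring
    · have : c' x = 0 := by
        have : y - disp a x ∉ annul j := hm
        simp [c', deriv_chiJ_eq_zero hχ this]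
      simp [this]

lemma eN2_majG_sq (ha : 0 < a) (hχ : DyadicCutoffs χ₀ χ) (M : ℝ) (j : ℕ) {V V₁ : ℝ × ℝ → ℂ}
    (hV : Continuous V) (hV₁ : Continuous V₁) :
    eN2 volume (majG a χ₀ χ M j V V₁) ≤
      2 * (eN2 volume (piece a χ₀ χ (1 / 2 + a / 2) j fun z => ‖V z‖ₑ) ^ (1 / 2 : ℝ) *
        eN2 volume (piece a χ₀ χ (-(1 / 2 + a / 2)) j fun z => ‖V₁ z‖ₑ) ^ (1 / 2 : ℝ)) +
      ENNReal.ofReal (3 * M * (2 ^ j)⁻¹) ^ (1 / 2 : ℝ) *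
        eN2 volume ((modu a ⁻¹' annul j).indicator fun z => wt (1 / 2 + a / 2) z * ‖V z‖ₑ) := by
  have hr := rchi_measurable ha hχ j
  have m1 := hV.measurable
  have m2 := hV₁.measurable
  have m3 := annInd_measurable (a := a) ha j hV
  have hP := piece_measurable ha hχ (1 / 2 + a / 2) j m1.enorm
  have hQ := piece_measurable ha hχ (-(1 / 2 + a / 2)) j m2.enorm
  have e1 : ∫⁻ y, majG a χ₀ χ M j V V₁ y ^ 2 = ∫⁻ z, dens a χ₀ χ M j V V₁ z := by
    simp_rw [majG, ennreal_rpow_half_sq]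
    rw [Measure.volume_eq_prod, lintegral_prod_symm' _ (dens_measurable ha hχ M j hV hV₁)]
  have cs : ∫⁻ z, rchi a χ₀ χ j z ^ 2 * (‖V z‖ₑ * ‖V₁ z‖ₑ) ≤
      eN2 volume (piece a χ₀ χ (1 / 2 + a / 2) j fun z => ‖V z‖ₑ) *
        eN2 volume (piece a χ₀ χ (-(1 / 2 + a / 2)) j fun z => ‖V₁ z‖ₑ) := by
    have h := le_rpow_half_of_sq_le (lintegral_mul_sq_le (μ := volume) hP hQ)
    rw [ENNReal.mul_rpow_of_nonneg _ _ (by norm_num)] at h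
    refine le_trans (le_of_eq (lintegral_congr fun z => ?_)) h
    calc _ = (wt (-(1 / 2 + a / 2)) z * wt (1 / 2 + a / 2) z) *
          (rchi a χ₀ χ j z ^ 2 * (‖V z‖ₑ * ‖V₁ z‖ₑ)) := by rw [wt_mul_wt_neg, one_mul]
      _ = _ := by simp only [piece]; ring
  have e2 : ∫⁻ z, dens a χ₀ χ M j V V₁ z ≤
      2 * (eN2 volume (piece a χ₀ χ (1 / 2 + a / 2) j fun z => ‖V z‖ₑ) *
        eN2 volume (piece a χ₀ χ (-(1 / 2 + a / 2)) j fun z => ‖V₁ z‖ₑ)) +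
      ENNReal.ofReal (3 * M * (2 ^ j)⁻¹) * eN2 volume
        ((modu a ⁻¹' annul j).indicator fun z => wt (1 / 2 + a / 2) z * ‖V z‖ₑ) ^ 2 := by
    unfold dens
    rw [lintegral_add_left (by fun_prop), lintegral_const_mul _ (by fun_prop),
      lintegral_const_mul _ (by fun_prop), eN2_sq]
    gcongr
  rw [eN2, e1]
  refine (ENNReal.rpow_le_rpow e2 (by norm_num)).trans ?_
  refine (ENNReal.rpow_add_le_add_rpow _ _ (by norm_num) (by norm_num)).trans ?_
  simp only [ENNReal.mul_rpow_of_nonneg _ _ (by norm_num : (0 : ℝ) ≤ 1 / 2), ennreal_sq_rpow_half]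
  gcongr
  calc (2 : ℝ≥0∞) ^ (1 / 2 : ℝ) ≤ 2 ^ (1 : ℝ) :=
        ENNReal.rpow_le_rpow_of_exponent_le (by norm_num) (by norm_num)
    _ = 2 := ENNReal.rpow_one _

lemma tsum_annul_le (ha : 0 < a) (hχ : DyadicCutoffs χ₀ χ) {V : ℝ × ℝ → ℂ} (hV : Continuous V) :
    ∑' j, eN2 volume ((modu a ⁻¹' annul j).indicator fun z => wt (1 / 2 + a / 2) z * ‖V z‖ₑ) ≤
      4 * eX a χ₀ χ (1 / 2) (1 / 2 + a / 2) fun z => ‖V z‖ₑ := by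
  set P := fun j' => piece a χ₀ χ (1 / 2 + a / 2) j' fun z => ‖V z‖ₑ
  have hP : ∀ j', Measurable (P j') := fun j' =>
    piece_measurable ha hχ (1 / 2 + a / 2) j' hV.measurable.enorm
  calc _ ≤ ∑' j, ∑' j', if j < j' + 3 then eN2 volume (P j') else 0 := by
        refine ENNReal.tsum_le_tsum fun j => ?_
        have hm : ∀ j', Measurable fun z => if j < j' + 3 then P j' z else 0 := fun j' => by
          split_ifs
          · exact hP j'
          · exact measurable_const
        refine le_trans (eN2_mono (g := fun z => ∑' j', if j < j' + 3 then P j' z else 0)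
          fun z => ?_) ((eN2_tsum_le hm).trans (ENNReal.tsum_le_tsum fun j' => ?_))
        · by_cases hz : z ∈ modu a ⁻¹' annul j
          · rw [Set.indicator_of_mem hz]
            refine (le_tsum_rchi_mul (a := a) hχ z _).trans (ENNReal.tsum_le_tsum fun j' => ?_)
            by_cases h0 : rchi a χ₀ χ j' z = 0
            · simp [h0]
            · rw [if_pos (annul_overlap hχ hz h0)]
              exact le_rfl
          · simp [Set.indicator_of_notMem hz]
        · split_ifs
          · exact le_rfl
          · simp [eN2]
    _ = ∑' j' : ℕ, ∑' j : ℕ, if j < j' + 3 then eN2 volume (P j') else 0 := ENNReal.tsum_comm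
    _ = ∑' j' : ℕ, ((j' + 3 : ℕ) : ℝ≥0∞) * eN2 volume (P j') := by
        congr 1 with j'
        rw [tsum_eq_sum (s := Finset.range (j' + 3)) (fun j hj => if_neg (by simpa using hj))]
        rw [Finset.sum_congr rfl fun j hj => if_pos (Finset.mem_range.mp hj)]
        simp
    _ ≤ ∑' j' : ℕ, 4 * (ENNReal.ofReal ((2 : ℝ) ^ ((j' : ℝ) * (1 / 2))) * eN2 volume (P j')) := by
        refine ENNReal.tsum_le_tsum fun n => ?_
        rw [← mul_assoc]
        gcongr
        rw [show (4 : ℝ≥0∞) = ENNReal.ofReal 4 by simp, ← ENNReal.ofReal_mul (by norm_num),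
          ← ENNReal.ofReal_natCast]
        refine ENNReal.ofReal_le_ofReal ?_
        have hs : (5 / 4 : ℝ) ≤ 2 ^ (1 / 2 : ℝ) := by
          rw [← Real.sqrt_eq_rpow]
          exact Real.le_sqrt_of_sq_le (by norm_num)
        have hb := one_add_mul_le_pow (a := (1 / 4 : ℝ)) (by norm_num) n
        have hp : ((1 + 1 / 4 : ℝ)) ^ n ≤ (2 : ℝ) ^ ((n : ℝ) * (1 / 2)) := by
          rw [mul_comm, Real.rpow_mul (by norm_num), Real.rpow_natCast]
          exact pow_le_pow_left₀ (by norm_num) (by linarith) n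
        push_cast
        linarith
    _ = _ := by rw [ENNReal.tsum_mul_left]; rfl

/-- Summing the majorants: the `L²_λ L^∞_ξ` type bound, with the loss of half a weighted norm. -/
lemma tsum_majG_le (ha : 0 < a) (hχ : DyadicCutoffs χ₀ χ) (M : ℝ) {V V₁ : ℝ × ℝ → ℂ}
    (hV : Continuous V) (hV₁ : Continuous V₁) :
    ∑' j : ℕ, ENNReal.ofReal ((2 : ℝ) ^ ((j : ℝ) * (1 / 2))) *
        eN2 volume (majG a χ₀ χ M j V V₁) ≤
      2 * ((eX a χ₀ χ (1 / 2) (1 / 2 + a / 2) fun z => ‖V z‖ₑ) ^ (1 / 2 : ℝ) *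
        (eX a χ₀ χ (1 / 2) (-(1 / 2 + a / 2)) fun z => ‖V₁ z‖ₑ) ^ (1 / 2 : ℝ)) +
      ENNReal.ofReal (3 * M) ^ (1 / 2 : ℝ) *
        (4 * eX a χ₀ χ (1 / 2) (1 / 2 + a / 2) fun z => ‖V z‖ₑ) := by
  set w : ℕ → ℝ≥0∞ := fun j => ENNReal.ofReal ((2 : ℝ) ^ ((j : ℝ) * (1 / 2)))
  set P := fun j => eN2 volume (piece a χ₀ χ (1 / 2 + a / 2) j fun z => ‖V z‖ₑ)
  set Q := fun j => eN2 volume (piece a χ₀ χ (-(1 / 2 + a / 2)) j fun z => ‖V₁ z‖ₑ)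
  set R := fun j => eN2 volume
    ((modu a ⁻¹' annul j).indicator fun z => wt (1 / 2 + a / 2) z * ‖V z‖ₑ)
  have hw : ∀ j, w j = w j ^ (1 / 2 : ℝ) * w j ^ (1 / 2 : ℝ) := fun j => by
    rw [← ENNReal.rpow_add_of_nonneg _ _ (by norm_num) (by norm_num)]
    norm_num
  have hw2 : ∀ j : ℕ, w j * ENNReal.ofReal (3 * M * (2 ^ j)⁻¹) ^ (1 / 2 : ℝ) =
      ENNReal.ofReal (3 * M) ^ (1 / 2 : ℝ) := fun j => by
    have : w j = ENNReal.ofReal (2 ^ j) ^ (1 / 2 : ℝ) := by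
      rw [ENNReal.ofReal_rpow_of_nonneg (by positivity) (by norm_num), ← Real.rpow_natCast,
        ← Real.rpow_mul (by norm_num)]
    rw [this, ← ENNReal.mul_rpow_of_nonneg _ _ (by norm_num), ← ENNReal.ofReal_mul (by positivity)]
    congr 2
    field_simp
  calc _ ≤ ∑' j, (2 * ((w j * P j) ^ (1 / 2 : ℝ) * (w j * Q j) ^ (1 / 2 : ℝ)) +
        ENNReal.ofReal (3 * M) ^ (1 / 2 : ℝ) * R j) := by
        refine ENNReal.tsum_le_tsum fun j => ?_
        refine (mul_le_mul_right (eN2_majG_sq ha hχ M j hV hV₁) _).trans (le_of_eq ?_)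
        change w j * (2 * (P j ^ (1 / 2 : ℝ) * Q j ^ (1 / 2 : ℝ)) +
          ENNReal.ofReal (3 * M * (2 ^ j)⁻¹) ^ (1 / 2 : ℝ) * R j) = _
        rw [mul_add, ← mul_assoc (w j) (ENNReal.ofReal _ ^ _), hw2,
          ENNReal.mul_rpow_of_nonneg _ _ (by norm_num),
          ENNReal.mul_rpow_of_nonneg _ _ (by norm_num)]
        congr 1
        conv_lhs => rw [hw j]
        ring
    _ = 2 * ∑' j, ((w j * P j) ^ (1 / 2 : ℝ) * (w j * Q j) ^ (1 / 2 : ℝ)) +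
        ENNReal.ofReal (3 * M) ^ (1 / 2 : ℝ) * ∑' j, R j := by
        rw [ENNReal.tsum_add, ENNReal.tsum_mul_left, ENNReal.tsum_mul_left]
    _ ≤ _ := by
        gcongr
        · exact tsum_sqrt_mul_sqrt_le _ _
        · exact tsum_annul_le ha hχ hV

end Majorant

/-! ### The Fourier transform on Schwartz space -/

section FourierSide
open scoped FourierTransform SchwartzMap LineDeriv

/-- The rescaling `(ξ, λ) ↦ (ξ + iλ) / 2π` which turns Mathlib's inverse Fourier transform on the
Euclidean plane `ℂ` into the transform `FT2`. -/
def scaleL : (ℝ × ℝ) ≃L[ℝ] ℂ :=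
  Complex.equivRealProdCLM.symm.trans
    (ContinuousLinearEquiv.smulLeft (Units.mk0 ((2 * Real.pi)⁻¹) (by positivity)))

lemma scaleL_apply (z : ℝ × ℝ) : scaleL z = (2 * Real.pi)⁻¹ • (z.1 + z.2 * I : ℂ) := by
  have h : scaleL z = (2 * Real.pi)⁻¹ • Complex.equivRealProdCLM.symm z := rfl
  rw [h, Complex.equivRealProdCLM_symm_apply]

/-- A Schwartz function on `ℝ × ℝ` read on the Euclidean plane `ℂ`. -/
def toPlane : 𝓢(ℝ × ℝ, ℂ) →L[ℂ] 𝓢(ℂ, ℂ) :=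
  SchwartzMap.compCLMOfContinuousLinearEquiv ℂ Complex.equivRealProdCLM

lemma toPlane_apply (u : 𝓢(ℝ × ℝ, ℂ)) (w : ℂ) : toPlane u w = u (w.re, w.im) := rfl

/-- The transform `FT2` of a Schwartz function, as a Schwartz function. -/
def FTS (u : 𝓢(ℝ × ℝ, ℂ)) : 𝓢(ℝ × ℝ, ℂ) :=
  SchwartzMap.compCLMOfContinuousLinearEquiv ℂ scaleL (𝓕⁻ (toPlane u))

lemma FTS_eq (u : 𝓢(ℝ × ℝ, ℂ)) (z : ℝ × ℝ) : FTS u z = (𝓕⁻ (toPlane u)) (scaleL z) := rfl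

lemma integral_plane {E : Type*} [NormedAddCommGroup E] [NormedSpace ℝ E] (f : ℂ → E) :
    ∫ w : ℂ, f w = ∫ p : ℝ × ℝ, f (p.1 + p.2 * I) := by
  rw [← Complex.volume_preserving_equiv_real_prod.symm.integral_comp'
    (f := Complex.measurableEquivRealProd.symm)]
  congr 1
  ext p
  congr 1
  apply Complex.ext <;> simp [Complex.measurableEquivRealProd]

lemma FTS_apply (u : 𝓢(ℝ × ℝ, ℂ)) (z : ℝ × ℝ) : FTS u z = FT2 (fun p => u p) z.1 z.2 := by
  rw [FTS_eq, SchwartzMap.fourierInv_coe, Real.fourierInv_eq', integral_plane, FT2]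
  congr 1
  ext p
  rw [scaleL_apply, toPlane_apply]
  have : (inner ℝ ((p.1 : ℂ) + p.2 * I) ((2 * Real.pi)⁻¹ • (z.1 + z.2 * I : ℂ)) : ℝ)
      = (2 * Real.pi)⁻¹ * (p.1 * z.1 + p.2 * z.2) := by
    rw [inner_smul_right, Complex.inner]
    simp
    ring
  rw [this]
  have h2 : ((2 * Real.pi * ((2 * Real.pi)⁻¹ * (p.1 * z.1 + p.2 * z.2)) : ℝ) : ℂ) * I
     = I * ((p.1 * z.1 + p.2 * z.2 : ℝ) : ℂ) := by
    rw [mul_inv_cancel_left₀ (by positivity), mul_comm]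
  rw [h2]
  simp

/-- Multiplication by the linear form `p ↦ p.1 * m.1 + p.2 * m.2`. -/
def mulD (m : ℝ × ℝ) (u : 𝓢(ℝ × ℝ, ℂ)) : 𝓢(ℝ × ℝ, ℂ) :=
  SchwartzMap.smulLeftCLM ℂ (fun p : ℝ × ℝ => p.1 * m.1 + p.2 * m.2) u

lemma linForm_temperate (m : ℝ × ℝ) :
    (fun p : ℝ × ℝ => p.1 * m.1 + p.2 * m.2).HasTemperateGrowth := by
  have := ((ContinuousLinearMap.fst ℝ ℝ ℝ).smulRight m.1
    + (ContinuousLinearMap.snd ℝ ℝ ℝ).smulRight m.2).hasTemperateGrowth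
  exact this

lemma mulD_apply (m : ℝ × ℝ) (u : 𝓢(ℝ × ℝ, ℂ)) (p : ℝ × ℝ) :
    mulD m u p = ((p.1 * m.1 + p.2 * m.2 : ℝ) : ℂ) * u p := by
  rw [mulD, SchwartzMap.smulLeftCLM_apply_apply (linForm_temperate m)]
  simp

lemma lineDeriv_FTS (m : ℝ × ℝ) (u : 𝓢(ℝ × ℝ, ℂ)) :
    ∂_{m} (FTS u) = I • FTS (mulD m u) := by
  have h1 : ∂_{m} (FTS u) = SchwartzMap.compCLMOfContinuousLinearEquiv ℂ scaleL
      (∂_{scaleL m} (𝓕⁻ (toPlane u))) := by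
    rw [FTS, SchwartzMap.lineDerivOp_compCLMOfContinuousLinearEquiv]
  have h2 : ((2 * Real.pi * I : ℂ) • SchwartzMap.smulLeftCLM ℂ (inner ℝ · (scaleL m)) (toPlane u))
      = I • toPlane (mulD m u) := by
    ext w
    have ht : (fun x : ℂ => (inner ℝ x (scaleL m) : ℝ)).HasTemperateGrowth := by fun_prop
    rw [smul_apply, smul_apply, SchwartzMap.smulLeftCLM_apply_apply ht,
      toPlane_apply, toPlane_apply, mulD_apply, scaleL_apply, inner_smul_right, Complex.inner]
    have hpi : (Real.pi : ℂ) ≠ 0 := by exact_mod_cast Real.pi_ne_zero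
    simp
    field_simp
  rw [h1, SchwartzMap.lineDerivOp_fourierInv_eq, h2, FourierTransform.fourierInv_smul, map_smul]
  rfl

lemma FTS_lineDeriv (m : ℝ × ℝ) (u : 𝓢(ℝ × ℝ, ℂ)) :
    FTS (∂_{m} u) = -(I • mulD m (FTS u)) := by
  have h1 : toPlane (∂_{m} u) = ∂_{(m.1 + m.2 * I : ℂ)} (toPlane u) := by
    rw [toPlane, SchwartzMap.lineDerivOp_compCLMOfContinuousLinearEquiv]
    congr
    ext <;> simp
  ext z
  have ht : (fun x : ℂ => (inner ℝ x (m.1 + m.2 * I : ℂ) : ℝ)).HasTemperateGrowth := by fun_prop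
  rw [FTS_eq, h1, SchwartzMap.fourierInv_lineDerivOp_eq, neg_apply,
    smul_apply, smul_apply,
    SchwartzMap.smulLeftCLM_apply_apply ht, mulD_apply, FTS_eq, scaleL_apply,
    real_inner_smul_left, Complex.inner]
  have hpi : (Real.pi : ℂ) ≠ 0 := by exact_mod_cast Real.pi_ne_zero
  simp
  field_simp

/-- The pointwise product of Schwartz functions. -/
def mulS (u v : 𝓢(ℝ × ℝ, ℂ)) : 𝓢(ℝ × ℝ, ℂ) :=
  SchwartzMap.pairing (ContinuousLinearMap.mul ℂ ℂ) u v

lemma mulS_apply (u v : 𝓢(ℝ × ℝ, ℂ)) (p : ℝ × ℝ) : mulS u v p = u p * v p := by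
  simp [mulS]

lemma mulD_mulS (m : ℝ × ℝ) (u v : 𝓢(ℝ × ℝ, ℂ)) : mulD m (mulS u v) = mulS (mulD m u) v := by
  ext p; simp only [mulD_apply, mulS_apply]; ring

/-- The convolution theorem; the factor comes from the normalisation of `FT2`. -/
lemma FTS_mulS (u v : 𝓢(ℝ × ℝ, ℂ)) (z : ℝ × ℝ) :
    FTS (mulS u v) z = ((2 * Real.pi)⁻¹ ^ 2 : ℝ) • ∫ p : ℝ × ℝ, FTS u p * FTS v (z - p) := by
  have h1 : toPlane (mulS u v)
      = SchwartzMap.pairing (ContinuousLinearMap.mul ℂ ℂ) (toPlane u) (toPlane v) := by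
    ext w; simp [toPlane_apply, mulS_apply]
  have h2 : 𝓕⁻ (toPlane (mulS u v))
      = SchwartzMap.convolution (ContinuousLinearMap.mul ℂ ℂ) (𝓕⁻ (toPlane u))
        (𝓕⁻ (toPlane v)) := by
    have h := congrArg (fun f : 𝓢(ℂ, ℂ) => 𝓕⁻ f) (SchwartzMap.fourier_convolution
      (ContinuousLinearMap.mul ℂ ℂ) (𝓕⁻ (toPlane u)) (𝓕⁻ (toPlane v)))
    simp only [FourierTransform.fourierInv_fourier_eq,
      FourierTransform.fourier_fourierInv_eq] at h
    rw [h1, h]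
  rw [FTS_eq, h2, SchwartzMap.convolution_apply, MeasureTheory.convolution_def]
  set H : ℂ → ℂ := fun t => (𝓕⁻ (toPlane u)) t * (𝓕⁻ (toPlane v)) (scaleL z - t) with hH
  have h3 := Measure.integral_comp_smul (volume : Measure ℂ) H ((2 * Real.pi)⁻¹)
  have h4 : ∫ w : ℂ, H w = ((2 * Real.pi)⁻¹ ^ 2 : ℝ) • ∫ w : ℂ, H ((2 * Real.pi)⁻¹ • w) := by
    rw [h3, Complex.finrank_real_complex, smul_smul, abs_of_pos (by positivity),
      mul_inv_cancel₀ (by positivity), one_smul]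
  have h5 : ∫ w : ℂ, H ((2 * Real.pi)⁻¹ • w) = ∫ p : ℝ × ℝ, FTS u p * FTS v (z - p) := by
    rw [integral_plane]
    congr 1
    ext p
    rw [← scaleL_apply, hH, FTS_eq, FTS_eq, map_sub]
  rw [← h5, ← h4]
  rfl

end FourierSide

/-! ### Distributing the weight over the product -/

section Pointwise
open scoped SchwartzMap LineDeriv

lemma exists_deriv_smoothTransition_le :
    ∃ D, 0 ≤ D ∧ ∀ y, |deriv Real.smoothTransition y| ≤ D := by
  have hc : Continuous (deriv Real.smoothTransition) :=
    (Real.smoothTransition.contDiff (n := 1)).continuous_deriv (by norm_num)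
  obtain ⟨D, hD⟩ := (isCompact_Icc (a := (0 : ℝ)) (b := 1)).exists_bound_of_continuousOn
    hc.continuousOn
  refine ⟨|D|, abs_nonneg _, fun y => ?_⟩
  by_cases hy : y ∈ Set.Icc (0 : ℝ) 1
  · exact (hD y hy).trans (le_abs_self _)
  · have h0 : deriv Real.smoothTransition y = 0 := by
      rw [Set.mem_Icc, not_and_or, not_le, not_le] at hy
      rcases hy with hy | hy
      · have : Real.smoothTransition =ᶠ[nhds y] fun _ => 0 := by
          filter_upwards [Iio_mem_nhds hy] with x hx
          exact Real.smoothTransition.zero_of_nonpos (le_of_lt hx)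
        rw [this.deriv_eq]; simp
      · have : Real.smoothTransition =ᶠ[nhds y] fun _ => 1 := by
          filter_upwards [Ioi_mem_nhds hy] with x hx
          exact Real.smoothTransition.one_of_one_le (le_of_lt hx)
        rw [this.deriv_eq]; simp
    rw [h0, abs_zero]
    exact abs_nonneg _

lemma FTS_hasLineDerivAt (m : ℝ × ℝ) (u : 𝓢(ℝ × ℝ, ℂ)) (p : ℝ × ℝ) :
    HasLineDerivAt ℝ (FTS u) (I * FTS (mulD m u) p) p m := by
  have h := ((FTS u).hasFDerivAt p).hasLineDerivAt m
  rw [← SchwartzMap.lineDerivOp_apply_eq_fderiv, lineDeriv_FTS] at h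
  exact h

lemma integrable_bdd_mul_FTS (u v : 𝓢(ℝ × ℝ, ℂ)) (z : ℝ × ℝ) {θ : ℝ × ℝ → ℝ}
    (hθ : Continuous θ) {K : ℝ} (hK : ∀ p, |θ p| ≤ K) :
    Integrable (fun p => ((θ p : ℂ) * FTS v (z - p)) * FTS u p) := by
  refine Integrable.bdd_mul (c := K * SchwartzMap.seminorm ℂ 0 0 (FTS v)) (FTS u).integrable ?_ ?_
  · have := (FTS v).continuous
    exact Continuous.aestronglyMeasurable (by fun_prop)
  · refine Filter.Eventually.of_forall fun p => ?_
    rw [norm_mul, Complex.norm_real]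
    exact mul_le_mul (hK p) (SchwartzMap.norm_le_seminorm ℂ _ _) (norm_nonneg _)
      ((abs_nonneg _).trans (hK p))

/-- Integration by parts: on the support of `1 - θ`, the derivative of the transform of the first
factor is moved to the second one. -/
lemma convolution_by_parts (u v : 𝓢(ℝ × ℝ, ℂ)) (z m : ℝ × ℝ) {θ θ' : ℝ × ℝ → ℝ}
    (hθ : Continuous θ) (hθ' : Continuous θ') {K K' : ℝ} (hK : ∀ p, |θ p| ≤ K)
    (hK' : ∀ p, |θ' p| ≤ K') (hd : ∀ p, HasLineDerivAt ℝ θ (θ' p) p m) :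
    ∫ p, FTS (mulD m u) p * FTS v (z - p) =
      (∫ p, ((θ p : ℂ) * FTS v (z - p)) * FTS (mulD m u) p)
      - I * (∫ p, ((θ' p : ℂ) * FTS v (z - p)) * FTS u p)
      + ∫ p, (((1 - θ p : ℝ) : ℂ) * FTS (mulD m v) (z - p)) * FTS u p := by
  have hθ1 : Continuous (fun p => 1 - θ p) := continuous_const.sub hθ
  have hK1 : ∀ p, |1 - θ p| ≤ 1 + K := fun p => by
    have h1 := abs_sub (1 : ℝ) (θ p)
    have h2 := hK p
    rw [abs_one] at h1
    linarith
  have i1 := integrable_bdd_mul_FTS u v z hθ' hK'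
  have i2 := integrable_bdd_mul_FTS u (mulD m v) z hθ1 hK1
  have i3 := integrable_bdd_mul_FTS (mulD m u) v z hθ1 hK1
  have i4 := integrable_bdd_mul_FTS u v z hθ1 hK1
  have i5 := integrable_bdd_mul_FTS (mulD m u) v z hθ hK
  have key := integral_bilinear_hasLineDerivAt_right_eq_neg_left_of_integrable
    (μ := (volume : Measure (ℝ × ℝ))) (v := m) (B := ContinuousLinearMap.mul ℝ ℂ)
    (f := fun p => ((1 - θ p : ℝ) : ℂ) * FTS v (z - p))
    (f' := fun p => -((θ' p : ℂ) * FTS v (z - p))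
      - I * (((1 - θ p : ℝ) : ℂ) * FTS (mulD m v) (z - p)))
    (g := FTS u) (g' := fun p => I * FTS (mulD m u) p)
    (by
      refine (i1.neg.sub (i2.const_mul I)).congr (Filter.Eventually.of_forall fun p => ?_)
      simp only [Pi.sub_apply, Pi.neg_apply, ContinuousLinearMap.mul_apply']
      ring)
    (by
      refine (i3.const_mul I).congr (Filter.Eventually.of_forall fun p => ?_)
      simp only [ContinuousLinearMap.mul_apply']
      ring)
    (by simpa using i4)
    (fun p _ => by
      have h1 : HasDerivAt (fun t : ℝ => ((1 - θ (p + t • m) : ℝ) : ℂ)) ((-(θ' p) : ℝ) : ℂ) 0 := by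
        have h := hd p
        exact (HasDerivAt.const_sub 1 h).ofReal_comp
      have h2 : HasDerivAt (fun t : ℝ => FTS v (z - (p + t • m)))
          (-(I * FTS (mulD m v) (z - p))) 0 := by
        have h : HasDerivAt (fun t : ℝ => FTS v (z - p + t • m)) (I * FTS (mulD m v) (z - p)) 0 :=
          FTS_hasLineDerivAt m v (z - p)
        have h' : HasDerivAt (fun t : ℝ => FTS v (z - p + t • m)) (I * FTS (mulD m v) (z - p))
          (-(0 : ℝ)) := by rwa [neg_zero]
        have h3 := h'.scomp (0 : ℝ) (hasDerivAt_neg (0 : ℝ))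
        have h4 : (fun t : ℝ => FTS v (z - (p + t • m)))
            = (fun t : ℝ => FTS v (z - p + t • m)) ∘ Neg.neg := by
          ext t
          simp only [Function.comp_apply]
          congr 1
          module
        rw [h4]
        exact h3.congr_deriv (by simp)
      have h3 := h1.mul h2
      refine HasDerivAt.congr_deriv h3 ?_
      rw [zero_smul, add_zero]
      push_cast
      ring)
    (fun p _ => FTS_hasLineDerivAt m u p)
  simp only [ContinuousLinearMap.mul_apply'] at key
  have e1 : ∫ p, ((1 - θ p : ℝ) : ℂ) * FTS v (z - p) * (I * FTS (mulD m u) p)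
      = I * ∫ p, (((1 - θ p : ℝ) : ℂ) * FTS v (z - p)) * FTS (mulD m u) p := by
    rw [← integral_const_mul]; congr 1; ext p; ring
  have e2 : ∫ p, (-((θ' p : ℂ) * FTS v (z - p))
      - I * (((1 - θ p : ℝ) : ℂ) * FTS (mulD m v) (z - p))) * FTS u p
      = -(∫ p, ((θ' p : ℂ) * FTS v (z - p)) * FTS u p)
        - I * ∫ p, (((1 - θ p : ℝ) : ℂ) * FTS (mulD m v) (z - p)) * FTS u p := by
    rw [← integral_const_mul, ← integral_neg]
    refine Eq.trans ?_ (integral_sub i1.neg (i2.const_mul I))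
    congr 1; ext p; ring
  have e3 : ∫ p, FTS (mulD m u) p * FTS v (z - p)
      = (∫ p, ((θ p : ℂ) * FTS v (z - p)) * FTS (mulD m u) p)
        + ∫ p, (((1 - θ p : ℝ) : ℂ) * FTS v (z - p)) * FTS (mulD m u) p := by
    rw [← integral_add i5 i3]
    congr 1; ext p; push_cast; ring
  rw [e1, e2] at key
  rw [e3]
  set A := ∫ p, (((1 - θ p : ℝ) : ℂ) * FTS v (z - p)) * FTS (mulD m u) p
  set B := ∫ p, ((θ' p : ℂ) * FTS v (z - p)) * FTS u p
  set Cc := ∫ p, (((1 - θ p : ℝ) : ℂ) * FTS (mulD m v) (z - p)) * FTS u p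
  have hA : A = -I * (I * A) := by linear_combination A * I_mul_I
  rw [hA, key]
  linear_combination (-Cc) * I_mul_I

/-- The weighted transform of a product, on the Fourier side: the weight falls on a
factor whose frequency dominates the other two, up to an error without weight and without
derivative. -/
lemma weighted_product_bound {D : ℝ}
    (hD : ∀ y, |deriv Real.smoothTransition y| ≤ D) (u v : 𝓢(ℝ × ℝ, ℂ)) (z m : ℝ × ℝ) :
    ENNReal.ofReal |z.1| * ‖FTS (mulD m (mulS u v)) z‖ₑ ≤
      bilP (fun p => ‖FTS (mulD m u) p‖ₑ) (fun p => ‖FTS v p‖ₑ) z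
      + bilP (fun p => ‖FTS (mulD m v) p‖ₑ) (fun p => ‖FTS u p‖ₑ) z
      + ENNReal.ofReal (2 * D * |m.1|) * econv (fun p => ‖FTS u p‖ₑ) (fun p => ‖FTS v p‖ₑ) z := by
  by_cases hz : z.1 = 0
  · simp [hz]
  -- `θ` vanishes for `p.1 / z.1 ≤ 1/4` and equals one for `p.1 / z.1 ≥ 3/4`.
  set θ : ℝ × ℝ → ℝ := fun p => Real.smoothTransition (2 * p.1 / z.1 - 1 / 2) with hθdef
  set θ' : ℝ × ℝ → ℝ := fun p => deriv Real.smoothTransition (2 * p.1 / z.1 - 1 / 2)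
    * (2 * m.1 / z.1) with hθ'def
  have hc : Continuous (deriv Real.smoothTransition) :=
    (Real.smoothTransition.contDiff (n := 1)).continuous_deriv (by norm_num)
  have hlin : Continuous (fun p : ℝ × ℝ => 2 * p.1 / z.1 - 1 / 2) := by fun_prop
  have hθ : Continuous θ := Real.smoothTransition.continuous.comp hlin
  have hθ' : Continuous θ' := (hc.comp hlin).mul continuous_const
  have hθ0 : ∀ p, 0 ≤ θ p := fun p => Real.smoothTransition.nonneg _
  have hθ1 : ∀ p, θ p ≤ 1 := fun p => Real.smoothTransition.le_one _
  have hK : ∀ p, |θ p| ≤ 1 := fun p => by rw [abs_of_nonneg (hθ0 p)]; exact hθ1 p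
  have hK' : ∀ p, |θ' p| ≤ 2 * D * |m.1| / |z.1| := fun p => by
    rw [hθ'def]
    simp only [abs_mul, abs_div, abs_two]
    calc _ ≤ D * (2 * |m.1| / |z.1|) := by gcongr; exact hD _
      _ = _ := by ring
  have hd : ∀ p, HasLineDerivAt ℝ θ (θ' p) p m := fun p => by
    have h1 : HasDerivAt (fun t : ℝ => 2 * (p.1 + t * m.1) / z.1 - 1 / 2) (2 * m.1 / z.1) 0 := by
      have := (((((hasDerivAt_id (0 : ℝ)).mul_const m.1).const_add p.1).const_mul 2).div_const
        z.1).sub_const (1 / 2)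
      simpa using this
    have h2 : HasDerivAt Real.smoothTransition
        (deriv Real.smoothTransition (2 * p.1 / z.1 - 1 / 2))
        (2 * (p.1 + 0 * m.1) / z.1 - 1 / 2) := by
      rw [zero_mul, add_zero]
      exact ((Real.smoothTransition.contDiff (n := 1)).differentiable (by norm_num) _).hasDerivAt
    exact h2.comp (0 : ℝ) h1
  have hpar := convolution_by_parts u v z m hθ hθ' hK hK' hd
  have hreg1 : ∀ p : ℝ × ℝ, θ p ≠ 0 → (p, z - p) ∈ regP := fun p hp => by
    have h1 : 0 < 2 * p.1 / z.1 - 1 / 2 := by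
      by_contra h
      exact hp (Real.smoothTransition.zero_of_nonpos (not_lt.1 h))
    obtain ⟨r, hr⟩ : ∃ r, p.1 = r * z.1 := ⟨p.1 / z.1, by field_simp⟩
    have h2 : 1 / 4 < r := by
      rw [hr, ← mul_assoc, mul_div_assoc, div_self hz] at h1
      linarith
    simp only [regP, Set.mem_ofPred_eq, Prod.fst_sub]
    have e1 : p.1 + (z.1 - p.1) = z.1 := by ring
    have e2 : z.1 - p.1 = (1 - r) * z.1 := by rw [hr]; ring
    rw [e1, e2, hr, abs_mul, abs_mul, abs_of_pos (by linarith : 0 < r)]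
    have h3 : |1 - r| ≤ 3 * r := abs_le.2 ⟨by linarith, by linarith⟩
    have := abs_nonneg z.1
    constructor <;> nlinarith
  have hreg2 : ∀ p : ℝ × ℝ, 1 - θ p ≠ 0 → (z - p, p) ∈ regP := fun p hp => by
    have h1 : 2 * p.1 / z.1 - 1 / 2 < 1 := by
      by_contra h
      refine hp ?_
      simp only [hθdef]
      rw [Real.smoothTransition.one_of_one_le (not_lt.1 h), sub_self]
    obtain ⟨r, hr⟩ : ∃ r, p.1 = r * z.1 := ⟨p.1 / z.1, by field_simp⟩
    have h2 : r < 3 / 4 := by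
      rw [hr, ← mul_assoc, mul_div_assoc, div_self hz] at h1
      linarith
    simp only [regP, Set.mem_ofPred_eq, Prod.fst_sub]
    have e1 : z.1 - p.1 + p.1 = z.1 := by ring
    have e2 : z.1 - p.1 = (1 - r) * z.1 := by rw [hr]; ring
    rw [e1, e2, hr, abs_mul, abs_mul, abs_of_pos (by linarith : 0 < 1 - r)]
    have h3 : |r| ≤ 3 * (1 - r) := abs_le.2 ⟨by linarith, by linarith⟩
    have := abs_nonneg z.1
    constructor <;> nlinarith
  have hre : ∀ x : ℝ, ‖(x : ℂ)‖ₑ = ENNReal.ofReal |x| := fun x => by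
    rw [← ofReal_norm, Complex.norm_real, Real.norm_eq_abs]
  have b1 : ENNReal.ofReal |z.1| * ‖∫ p, ((θ p : ℂ) * FTS v (z - p)) * FTS (mulD m u) p‖ₑ
      ≤ bilP (fun p => ‖FTS (mulD m u) p‖ₑ) (fun p => ‖FTS v p‖ₑ) z := by
    unfold bilP
    gcongr
    refine (enorm_integral_le_lintegral_enorm _).trans (lintegral_mono fun p => ?_)
    by_cases hp : θ p = 0
    · simp [hp]
    · rw [Set.indicator_of_mem (hreg1 p hp), enorm_mul, enorm_mul, hre]
      have : ENNReal.ofReal |θ p| ≤ 1 := ENNReal.ofReal_le_one.2 (hK p)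
      calc _ ≤ 1 * ‖FTS v (z - p)‖ₑ * ‖FTS (mulD m u) p‖ₑ := by gcongr
        _ = _ := by rw [one_mul, mul_comm]
  have b2 : ENNReal.ofReal |z.1| * ‖∫ p, (((1 - θ p : ℝ) : ℂ) * FTS (mulD m v) (z - p))
        * FTS u p‖ₑ
      ≤ bilP (fun p => ‖FTS (mulD m v) p‖ₑ) (fun p => ‖FTS u p‖ₑ) z := by
    unfold bilP
    rw [← lintegral_sub_left_eq_self _ z]
    gcongr
    refine (enorm_integral_le_lintegral_enorm _).trans (lintegral_mono fun p => ?_)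
    by_cases hp : 1 - θ p = 0
    · simp [hp]
    · simp only [sub_sub_cancel]
      rw [Set.indicator_of_mem (hreg2 p hp), enorm_mul, enorm_mul, hre]
      have : ENNReal.ofReal |1 - θ p| ≤ 1 := ENNReal.ofReal_le_one.2 (by
        rw [abs_of_nonneg (by linarith [hθ1 p])]; linarith [hθ0 p])
      calc _ ≤ 1 * ‖FTS (mulD m v) (z - p)‖ₑ * ‖FTS u p‖ₑ := by gcongr
        _ = _ := by rw [one_mul]
  have b3 : ENNReal.ofReal |z.1| * ‖I * ∫ p, ((θ' p : ℂ) * FTS v (z - p)) * FTS u p‖ₑ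
      ≤ ENNReal.ofReal (2 * D * |m.1|) * econv (fun p => ‖FTS u p‖ₑ) (fun p => ‖FTS v p‖ₑ) z := by
    have hI : ‖I‖ₑ = 1 := by rw [← ofReal_norm]; simp
    rw [enorm_mul, hI, one_mul]
    refine (mul_le_mul_right (enorm_integral_le_lintegral_enorm _) _).trans ?_
    unfold econv
    rw [← lintegral_const_mul' _ _ ENNReal.ofReal_ne_top,
      ← lintegral_const_mul' _ _ ENNReal.ofReal_ne_top]
    refine lintegral_mono fun p => ?_
    rw [enorm_mul, enorm_mul, hre]
    have h1 : |z.1| * |θ' p| ≤ 2 * D * |m.1| := by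
      have := hK' p
      rwa [le_div_iff₀ (abs_pos.2 hz), mul_comm] at this
    calc _ = ENNReal.ofReal (|z.1| * |θ' p|) * (‖FTS u p‖ₑ * ‖FTS v (z - p)‖ₑ) := by
          rw [ENNReal.ofReal_mul (abs_nonneg _)]; ring
      _ ≤ _ := by gcongr
  rw [mulD_mulS, FTS_mulS]
  have hsc : ‖((2 * Real.pi)⁻¹ ^ 2 : ℝ) • ∫ p : ℝ × ℝ, FTS (mulD m u) p * FTS v (z - p)‖ₑ
      ≤ ‖∫ p : ℝ × ℝ, FTS (mulD m u) p * FTS v (z - p)‖ₑ := by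
    rw [enorm_smul]
    have h1 : ‖((2 * Real.pi)⁻¹ ^ 2 : ℝ)‖ₑ ≤ 1 := by
      rw [← ofReal_norm, ENNReal.ofReal_le_one, Real.norm_eq_abs,
        abs_of_nonneg (by positivity)]
      have : (2 * Real.pi)⁻¹ ≤ 1 := inv_le_one_of_one_le₀ (by linarith [Real.pi_gt_three])
      exact pow_le_one₀ (by positivity) this
    calc _ ≤ 1 * ‖∫ p : ℝ × ℝ, FTS (mulD m u) p * FTS v (z - p)‖ₑ := by gcongr
      _ = _ := one_mul _
  refine (mul_le_mul_right hsc _).trans ?_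
  rw [hpar]
  calc _ ≤ ENNReal.ofReal |z.1| * (‖∫ p, ((θ p : ℂ) * FTS v (z - p)) * FTS (mulD m u) p‖ₑ
        + ‖I * ∫ p, ((θ' p : ℂ) * FTS v (z - p)) * FTS u p‖ₑ
        + ‖∫ p, (((1 - θ p : ℝ) : ℂ) * FTS (mulD m v) (z - p)) * FTS u p‖ₑ) := by
        gcongr
        refine (enorm_add_le _ _).trans ?_
        gcongr
        exact enorm_sub_le
    _ ≤ _ := by
        rw [mul_add, mul_add, add_right_comm]
        exact add_le_add (add_le_add b1 b2) b3

lemma enorm_FTS_mulS_le (u v : 𝓢(ℝ × ℝ, ℂ)) (z : ℝ × ℝ) :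
    ‖FTS (mulS u v) z‖ₑ ≤ econv (fun p => ‖FTS u p‖ₑ) (fun p => ‖FTS v p‖ₑ) z := by
  rw [FTS_mulS, enorm_smul]
  have h1 : ‖((2 * Real.pi)⁻¹ ^ 2 : ℝ)‖ₑ ≤ 1 := by
    rw [← ofReal_norm, ENNReal.ofReal_le_one, Real.norm_eq_abs,
      abs_of_nonneg (by positivity)]
    have : (2 * Real.pi)⁻¹ ≤ 1 := inv_le_one_of_one_le₀ (by linarith [Real.pi_gt_three])
    exact pow_le_one₀ (by positivity) this
  calc _ ≤ 1 * ‖∫ p : ℝ × ℝ, FTS u p * FTS v (z - p)‖ₑ := by gcongr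
    _ = ‖∫ p : ℝ × ℝ, FTS u p * FTS v (z - p)‖ₑ := one_mul _
    _ ≤ _ := (enorm_integral_le_lintegral_enorm _).trans (by simp only [enorm_mul]; rfl)

end Pointwise

/-! ### Comparison of the extended-real norms with `Xnorm` -/

section Conversion
open scoped SchwartzMap
variable {χ₀ χ : ℝ → ℝ} {a : ℝ}

lemma eX_mono {b s : ℝ} {F G : ℝ × ℝ → ℝ≥0∞} (h : ∀ z, F z ≤ G z) :
    eX a χ₀ χ b s F ≤ eX a χ₀ χ b s G := by
  unfold eX
  gcongr with j
  refine eN2_mono fun z => ?_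
  unfold piece
  gcongr
  exact h z

lemma eX_add_le (ha : 0 < a) (hχ : DyadicCutoffs χ₀ χ) {b s : ℝ} {F G : ℝ × ℝ → ℝ≥0∞}
    (hF : Measurable F) (hG : Measurable G) :
    eX a χ₀ χ b s (fun z => F z + G z) ≤ eX a χ₀ χ b s F + eX a χ₀ χ b s G := by
  unfold eX
  rw [← ENNReal.tsum_add]
  gcongr with j
  rw [← mul_add]
  gcongr
  refine le_trans (eN2_mono fun z => ?_)
    (eN2_add_le (piece_measurable ha hχ s j hF) (piece_measurable ha hχ s j hG))
  unfold piece
  rw [mul_add, mul_add]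

lemma eX_const_mul (ha : 0 < a) (hχ : DyadicCutoffs χ₀ χ) {b s : ℝ} (c : ℝ≥0∞)
    {F : ℝ × ℝ → ℝ≥0∞} (hF : Measurable F) :
    eX a χ₀ χ b s (fun z => c * F z) = c * eX a χ₀ χ b s F := by
  unfold eX
  rw [← ENNReal.tsum_mul_left]
  congr 1
  ext j
  rw [mul_left_comm, ← eN2_const_mul c (piece_measurable ha hχ s j hF)]
  congr 2
  ext z
  unfold piece
  ring

lemma bilP_measurable {F V : ℝ × ℝ → ℝ≥0∞} (hF : Measurable F) (hV : Measurable V) :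
    Measurable (bilP F V) := by
  unfold bilP
  refine Measurable.mul (by fun_prop) ?_
  have h : Measurable (regP.indicator (fun w : (ℝ × ℝ) × (ℝ × ℝ) => F w.1 * V w.2)) :=
    Measurable.indicator (by fun_prop) measurableSet_regP
  refine Measurable.lintegral_prod_right' (f := fun q : (ℝ × ℝ) × (ℝ × ℝ) =>
    regP.indicator (fun w => F w.1 * V w.2) (q.2, q.1 - q.2)) ?_
  exact h.comp (by fun_prop)

lemma econv_measurable {F V : ℝ × ℝ → ℝ≥0∞} (hF : Measurable F) (hV : Measurable V) :
    Measurable (econv F V) := by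
  unfold econv
  exact Measurable.lintegral_prod_right' (f := fun q : (ℝ × ℝ) × (ℝ × ℝ) =>
    F q.2 * V (q.1 - q.2)) (by fun_prop)

lemma abs_modu_le (ha : 0 < a) (ha1 : a < 1) (z : ℝ × ℝ) : |modu a z| ≤ 2 * (1 + ‖z‖) ^ 3 := by
  have h1 : |z.1| ≤ ‖z‖ := norm_fst_le z
  have h2 : |z.2| ≤ ‖z‖ := norm_snd_le z
  have h0 : 0 ≤ ‖z‖ := norm_nonneg z
  have h3 : |disp a z.1| ≤ (1 + ‖z‖) ^ 3 := by
    rw [disp, abs_mul, abs_of_nonneg (a := |z.1| ^ (1 + a)) (by positivity)]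
    have h4 : |z.1| ^ (1 + a) ≤ (1 + ‖z‖) ^ (2 : ℝ) := by
      calc |z.1| ^ (1 + a) ≤ (1 + ‖z‖) ^ (1 + a) :=
            Real.rpow_le_rpow (abs_nonneg _) (by linarith) (by linarith)
        _ ≤ _ := Real.rpow_le_rpow_of_exponent_le (by linarith) (by linarith)
    rw [Real.rpow_two] at h4
    calc |z.1| * |z.1| ^ (1 + a) ≤ (1 + ‖z‖) * (1 + ‖z‖) ^ 2 := by
          gcongr; linarith
      _ = _ := by ring
  have h5 : ‖z‖ ≤ (1 + ‖z‖) ^ 3 := by nlinarith [sq_nonneg ‖z‖, pow_nonneg h0 3]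
  have := abs_sub z.2 (disp a z.1)
  unfold modu
  linarith

/-- The norms used in the argument are finite on the transform of a Schwartz function. -/
lemma eX_schwartz_lt_top (ha : 0 < a) (ha1 : a < 1) (hχ : DyadicCutoffs χ₀ χ) {b s : ℝ}
    (hb : b ≤ 1 / 2) (hs : s ≤ 1) (G : 𝓢(ℝ × ℝ, ℂ)) :
    eX a χ₀ χ b s (fun p => ‖G p‖ₑ) < ∞ := by
  obtain ⟨K, hK0, hK⟩ : ∃ K, 0 ≤ K ∧ ∀ z, (1 + ‖z‖) ^ 6 * ‖G z‖ ≤ K := by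
    refine ⟨2 ^ 6 * ((Finset.Iic (6, 0)).sup fun m => SchwartzMap.seminorm ℂ m.1 m.2) G,
      by positivity, fun z => ?_⟩
    have := SchwartzMap.one_add_le_sup_seminorm_apply (𝕜 := ℂ) (m := (6, 0)) (k := 6) (n := 0)
      le_rfl le_rfl G z
    simpa using this
  set H : ℝ × ℝ → ℝ≥0∞ := fun z => ENNReal.ofReal (((1 + ‖z‖) ^ 2)⁻¹) with hH
  have hHm : Measurable H := by fun_prop
  have hHfin : eN2 volume H < ∞ := by
    unfold eN2
    refine ENNReal.rpow_lt_top_of_nonneg (by norm_num) (ne_of_lt ?_)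
    have h := finite_integral_one_add_norm (E := ℝ × ℝ) (μ := volume) (r := 4) (by
      simp; norm_num)
    refine lt_of_le_of_lt (lintegral_mono fun z => ?_) h
    rw [hH]
    have h0 : 0 ≤ ‖z‖ := norm_nonneg z
    simp only
    rw [← ENNReal.ofReal_pow (by positivity)]
    apply ENNReal.ofReal_le_ofReal
    rw [Real.rpow_neg (by positivity), show (4 : ℝ) = ((4 : ℕ) : ℝ) by norm_num,
      Real.rpow_natCast, inv_pow, ← pow_mul]
  have hpiece : ∀ j z, piece a χ₀ χ s j (fun p => ‖G p‖ₑ) z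
      ≤ ENNReal.ofReal (4 * K * (2 ^ j)⁻¹) * H z := fun j z => by
    by_cases h0 : rchi a χ₀ χ j z = 0
    · simp [piece, h0]
    have hz0 : 0 ≤ ‖z‖ := norm_nonneg z
    have h1 : chiJ χ₀ χ j (modu a z) ≠ 0 := fun h => h0 (by simp [rchi, h])
    have h2 : (2 : ℝ) ^ j ≤ 4 * (1 + ‖z‖) ^ 3 := by
      by_cases hj : j = 0
      · rw [hj, pow_zero]
        have : 1 ≤ (1 + ‖z‖) ^ 3 := one_le_pow₀ (by linarith)
        linarith
      · have := chiJ_supp_lower hχ hj h1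
        have := abs_modu_le ha ha1 z
        linarith
    have h3 : (1 + |z.1|) ^ s ≤ 1 + ‖z‖ := by
      calc (1 + |z.1|) ^ s ≤ (1 + |z.1|) ^ (1 : ℝ) :=
            Real.rpow_le_rpow_of_exponent_le (by linarith [abs_nonneg z.1]) hs
        _ = 1 + |z.1| := Real.rpow_one _
        _ ≤ _ := by have : |z.1| ≤ ‖z‖ := norm_fst_le z
                    linarith
    unfold piece wt
    calc _ ≤ 1 * (ENNReal.ofReal (1 + ‖z‖) * ‖G z‖ₑ) := by
          gcongr
          exact rchi_le_one hχ j z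
      _ = ENNReal.ofReal ((1 + ‖z‖) * ‖G z‖) := by
          rw [one_mul, ENNReal.ofReal_mul (by positivity), ofReal_norm]
      _ ≤ ENNReal.ofReal (4 * K * (2 ^ j)⁻¹ * ((1 + ‖z‖) ^ 2)⁻¹) := by
          apply ENNReal.ofReal_le_ofReal
          rw [← div_eq_mul_inv, ← div_eq_mul_inv, le_div_iff₀ (by positivity),
            le_div_iff₀ (by positivity)]
          have h4 := hK z
          calc (1 + ‖z‖) * ‖G z‖ * (1 + ‖z‖) ^ 2 * 2 ^ j
              ≤ (1 + ‖z‖) * ‖G z‖ * (1 + ‖z‖) ^ 2 * (4 * (1 + ‖z‖) ^ 3) := by gcongr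
            _ = 4 * ((1 + ‖z‖) ^ 6 * ‖G z‖) := by ring
            _ ≤ _ := by gcongr
      _ = _ := ENNReal.ofReal_mul (by positivity)
  have hterm : ∀ j : ℕ, ENNReal.ofReal ((2 : ℝ) ^ ((j : ℝ) * b))
      * eN2 volume (piece a χ₀ χ s j (fun p => ‖G p‖ₑ))
      ≤ (ENNReal.ofReal (4 * K) * eN2 volume H) * ENNReal.ofReal ((2 : ℝ) ^ (-(1 / 2 : ℝ))) ^ j :=
    fun j => by
    calc _ ≤ ENNReal.ofReal ((2 : ℝ) ^ ((j : ℝ) * (1 / 2)))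
          * (ENNReal.ofReal (4 * K * (2 ^ j)⁻¹) * eN2 volume H) := by
          gcongr
          · norm_num
          · rw [← eN2_const_mul _ hHm]
            exact eN2_mono (hpiece j)
      _ = _ := by
          have e : (2 : ℝ) ^ ((j : ℝ) * (1 / 2)) * (2 ^ j)⁻¹ = ((2 : ℝ) ^ (-(1 / 2 : ℝ))) ^ j := by
            rw [← Real.rpow_natCast 2 j, ← Real.rpow_neg (by norm_num),
              ← Real.rpow_add (by norm_num), ← Real.rpow_natCast, ← Real.rpow_mul (by norm_num)]
            congr 1
            ring
          rw [ENNReal.ofReal_mul (by positivity), ← ENNReal.ofReal_pow (by positivity), ← e,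
            ENNReal.ofReal_mul (p := (2 : ℝ) ^ ((j : ℝ) * (1 / 2))) (by positivity)]
          ring
  unfold eX
  refine lt_of_le_of_lt (ENNReal.tsum_le_tsum hterm) ?_
  rw [ENNReal.tsum_mul_left]
  refine ENNReal.mul_lt_top (ENNReal.mul_lt_top ENNReal.ofReal_lt_top hHfin) ?_
  rw [ENNReal.tsum_geometric, ENNReal.inv_lt_top, tsub_pos_iff_lt, ← ENNReal.ofReal_one]
  refine (ENNReal.ofReal_lt_ofReal_iff one_pos).mpr ?_
  exact Real.rpow_lt_one_of_one_lt_of_neg (by norm_num) (by norm_num)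

/-- On Schwartz functions neither the integrals nor the series in `Xnorm` take junk values. -/
lemma Xnorm_eq_toReal (ha : 0 < a) (ha1 : a < 1) (hχ : DyadicCutoffs χ₀ χ) {b s : ℝ}
    (hb : b ≤ 1 / 2) (hs : s ≤ 1) (u : 𝓢(ℝ × ℝ, ℂ)) :
    Xnorm a χ₀ χ b s (fun p => u p) = (eX a χ₀ χ b s (fun p => ‖FTS u p‖ₑ)).toReal := by
  have hfin := eX_schwartz_lt_top ha ha1 hχ hb hs (FTS u)
  unfold eX at hfin ⊢
  rw [ENNReal.tsum_toReal_eq (fun j => ENNReal.ne_top_of_tsum_ne_top hfin.ne j), Xnorm]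
  congr 1
  ext j
  rw [ENNReal.toReal_mul, ENNReal.toReal_ofReal (by positivity)]
  congr 1
  unfold eN2
  rw [← ENNReal.toReal_rpow]
  congr 1
  have hc0 : Continuous (fun p : ℝ × ℝ => chiJ χ₀ χ j (p.2 - disp a p.1)) := by
    have h1 := disp_continuous ha
    have h2 := (chiJ_contDiff hχ j).continuous
    fun_prop
  have hFc : Continuous (fun p : ℝ × ℝ => FT2 (fun p => u p) p.1 p.2) := by
    have : (fun p : ℝ × ℝ => FT2 (fun p => u p) p.1 p.2) = FTS u := by
      ext p; rw [FTS_apply]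
    rw [this]
    exact (FTS u).continuous
  rw [integral_eq_lintegral_of_nonneg_ae]
  · congr 1
    refine lintegral_congr fun p => ?_
    have hp1 : 0 < 1 + |p.1| := by positivity
    rw [← FTS_apply, ENNReal.ofReal_mul (mul_nonneg (chiJ_mem hχ j _).1 (by positivity)),
      ENNReal.ofReal_mul (chiJ_mem hχ j _).1, piece, mul_pow, mul_pow, rchi,
      ennreal_rpow_half_sq, wt, ← ENNReal.ofReal_pow (by positivity),
      ENNReal.ofReal_pow (by positivity) 2, ofReal_norm, mul_assoc, ← Real.rpow_natCast _ 2,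
      ← Real.rpow_mul hp1.le]
    congr 4
    push_cast
    ring
  · refine Filter.Eventually.of_forall fun p => ?_
    exact mul_nonneg (mul_nonneg (chiJ_mem hχ j _).1 (by positivity)) (by positivity)
  · have hw : Measurable (fun p : ℝ × ℝ => (1 + |p.1|) ^ (2 * s)) := by fun_prop
    exact ((hc0.measurable.mul hw).mul (hFc.norm.pow 2).measurable).aestronglyMeasurable

end Conversion

/-! ### The bilinear estimate -/

section Assembly
open scoped SchwartzMap LineDeriv FourierTransform
variable {χ₀ χ : ℝ → ℝ} {a : ℝ}

/-- The derivative `∂ₓ(uv)` as a Schwartz function. -/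
def dprod (u v : 𝓢(ℝ × ℝ, ℂ)) : 𝓢(ℝ × ℝ, ℂ) := ∂_{((1 : ℝ), (0 : ℝ))} (mulS u v)

lemma lineDeriv_hasLineDerivAt (m : ℝ × ℝ) (w : 𝓢(ℝ × ℝ, ℂ)) (p : ℝ × ℝ) :
    HasLineDerivAt ℝ w ((∂_{m} w) p) p m := by
  have h := (w.hasFDerivAt p).hasLineDerivAt m
  rwa [← SchwartzMap.lineDerivOp_apply_eq_fderiv] at h

lemma dprod_apply (u v : 𝓢(ℝ × ℝ, ℂ)) (p : ℝ × ℝ) :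
    dprod u v p = deriv (fun x => u (x, p.2) * v (x, p.2)) p.1 := by
  have h : HasDerivAt (fun t : ℝ => mulS u v (p + t • ((1 : ℝ), (0 : ℝ)))) (dprod u v p) 0 :=
    lineDeriv_hasLineDerivAt _ _ p
  have h' : HasDerivAt (fun t : ℝ => mulS u v (p + t • ((1 : ℝ), (0 : ℝ)))) (dprod u v p)
      (p.1 - p.1) := by rwa [sub_self]
  have h2 := h'.comp_sub_const p.1 p.1
  have e : (fun x : ℝ => mulS u v (p + (x - p.1) • ((1 : ℝ), (0 : ℝ))))
      = fun x => u (x, p.2) * v (x, p.2) := by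
    ext x
    have : p + (x - p.1) • ((1 : ℝ), (0 : ℝ)) = (x, p.2) := by ext <;> simp
    rw [this, mulS_apply]
  rw [e] at h2
  exact h2.deriv.symm

lemma FTS_add (u v : 𝓢(ℝ × ℝ, ℂ)) : FTS (u + v) = FTS u + FTS v := by
  simp only [FTS, map_add, FourierTransform.fourierInv_add]

lemma FTS_smul (c : ℂ) (u : 𝓢(ℝ × ℝ, ℂ)) : FTS (c • u) = c • FTS u := by
  simp only [FTS, map_smul, FourierTransform.fourierInv_smul]

/-- The commutator of a linear weight and `∂ₓ` is a constant. -/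
lemma mulD_dprod (m : ℝ × ℝ) (u v : 𝓢(ℝ × ℝ, ℂ)) :
    mulD m (dprod u v) = ∂_{((1 : ℝ), (0 : ℝ))} (mulD m (mulS u v))
      + (-(m.1 : ℂ)) • mulS u v := by
  ext p
  rw [add_apply, smul_apply, mulD_apply]
  have h1 : HasDerivAt (fun t : ℝ => mulD m (mulS u v) (p + t • ((1 : ℝ), (0 : ℝ))))
      ((∂_{((1 : ℝ), (0 : ℝ))} (mulD m (mulS u v))) p) 0 := lineDeriv_hasLineDerivAt _ _ p
  have h2 : HasDerivAt (fun t : ℝ => mulS u v (p + t • ((1 : ℝ), (0 : ℝ)))) (dprod u v p) 0 :=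
    lineDeriv_hasLineDerivAt _ _ p
  have h3 : HasDerivAt (fun t : ℝ => (((p.1 + t) * m.1 + p.2 * m.2 : ℝ) : ℂ)) ((m.1 : ℝ) : ℂ) 0 := by
    have : HasDerivAt (fun t : ℝ => (p.1 + t) * m.1 + p.2 * m.2) m.1 0 := by
      simpa using ((((hasDerivAt_id (0 : ℝ)).const_add p.1).mul_const m.1).add_const (p.2 * m.2))
    exact this.ofReal_comp
  have h4 := h3.mul h2
  have e : (fun t : ℝ => mulD m (mulS u v) (p + t • ((1 : ℝ), (0 : ℝ))))
      = (fun t : ℝ => (((p.1 + t) * m.1 + p.2 * m.2 : ℝ) : ℂ))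
        * (fun t : ℝ => mulS u v (p + t • ((1 : ℝ), (0 : ℝ)))) := by
    ext t
    rw [mulD_apply, Pi.mul_apply]
    simp
  rw [e] at h1
  have h5 := h1.unique h4
  rw [h5]
  simp only [zero_smul, add_zero, smul_eq_mul]
  ring

lemma enorm_FTS_mulD_dprod_le {D : ℝ} (hD0 : 0 ≤ D)
    (hD : ∀ y, |deriv Real.smoothTransition y| ≤ D) (u v : 𝓢(ℝ × ℝ, ℂ)) (z m : ℝ × ℝ) :
    ‖FTS (mulD m (dprod u v)) z‖ₑ ≤
      bilP (fun p => ‖FTS (mulD m u) p‖ₑ) (fun p => ‖FTS v p‖ₑ) z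
      + bilP (fun p => ‖FTS (mulD m v) p‖ₑ) (fun p => ‖FTS u p‖ₑ) z
      + ENNReal.ofReal ((2 * D + 1) * |m.1|)
        * econv (fun p => ‖FTS u p‖ₑ) (fun p => ‖FTS v p‖ₑ) z := by
  have hre : ∀ x : ℝ, ‖(x : ℂ)‖ₑ = ENNReal.ofReal |x| := fun x => by
    rw [← ofReal_norm, Complex.norm_real, Real.norm_eq_abs]
  have hI : ‖I‖ₑ = 1 := by rw [← ofReal_norm]; simp
  rw [mulD_dprod, FTS_add, FTS_smul, FTS_lineDeriv, add_apply, smul_apply, neg_apply, smul_apply,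
    mulD_apply]
  simp only [mul_one, mul_zero, add_zero]
  refine (enorm_add_le _ _).trans ?_
  rw [enorm_neg, enorm_smul, enorm_smul, enorm_mul, enorm_neg, hI, one_mul, hre, hre]
  have e : ENNReal.ofReal ((2 * D + 1) * |m.1|)
      = ENNReal.ofReal (2 * D * |m.1|) + ENNReal.ofReal |m.1| := by
    rw [← ENNReal.ofReal_add (by positivity) (by positivity)]
    congr 1
    ring
  rw [e, add_mul, ← add_assoc]
  exact add_le_add (weighted_product_bound hD u v z m)
    (mul_le_mul_right (enorm_FTS_mulS_le u v z) _)

/-- The constant in the bound of the low-frequency factor. -/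
def lowC (M : ℝ) : ℝ≥0∞ := 2 + (ENNReal.ofReal (3 * M) ^ (1 / 2 : ℝ) * 4 + 1)

lemma lowC_lt_top (M : ℝ) : lowC M < ∞ := by
  unfold lowC
  have : ENNReal.ofReal (3 * M) ^ (1 / 2 : ℝ) < ∞ :=
    ENNReal.rpow_lt_top_of_nonneg (by norm_num) ENNReal.ofReal_ne_top
  finiteness

lemma low_factor_le (ha : 0 < a) (hχ : DyadicCutoffs χ₀ χ) {M : ℝ} (v : 𝓢(ℝ × ℝ, ℂ)) :
    (∑' j : ℕ, ENNReal.ofReal ((2 : ℝ) ^ ((j : ℝ) * (1 / 2)))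
        * eN2 volume (majG a χ₀ χ M j (FTS v) (fun p => I * FTS (mulD (1, 0) v) p)))
      + eX a χ₀ χ (1 / 2) (1 / 2 + a / 2) (fun p => ‖FTS v p‖ₑ)
    ≤ lowC M * (eX a χ₀ χ (1 / 2) (1 / 2 + a / 2) (fun p => ‖FTS v p‖ₑ)
      + (eX a χ₀ χ (1 / 2) (1 / 2 + a / 2) (fun p => ‖FTS v p‖ₑ)) ^ (1 / 2 : ℝ)
        * (eX a χ₀ χ (1 / 2) (-(1 / 2 + a / 2)) (fun p => ‖FTS (mulD (1, 0) v) p‖ₑ))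
          ^ (1 / 2 : ℝ)) := by
  have hI : ‖I‖ₑ = 1 := by rw [← ofReal_norm]; simp
  have h := tsum_majG_le ha hχ M (FTS v).continuous
    (V₁ := fun p => I * FTS (mulD (1, 0) v) p)
    (continuous_const.mul (FTS (mulD (1, 0) v)).continuous)
  simp only [enorm_mul, hI, one_mul] at h
  set x := eX a χ₀ χ (1 / 2) (1 / 2 + a / 2) (fun p => ‖FTS v p‖ₑ)
  set q := x ^ (1 / 2 : ℝ) * (eX a χ₀ χ (1 / 2) (-(1 / 2 + a / 2))
    (fun p => ‖FTS (mulD (1, 0) v) p‖ₑ)) ^ (1 / 2 : ℝ)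
  set k := ENNReal.ofReal (3 * M) ^ (1 / 2 : ℝ)
  calc _ ≤ 2 * q + k * (4 * x) + x := by gcongr
    _ = 2 * q + (k * 4 + 1) * x := by ring
    _ ≤ lowC M * q + lowC M * x := by
        gcongr
        · exact le_self_add
        · exact le_add_self
    _ = _ := by ring

/-- The bilinear estimate for one weight `m`, before specialising to `x` and `t`. -/
lemma weighted_estimate (ha : 0 < a) (ha1 : a < 1) (hχ : DyadicCutoffs χ₀ χ) {D M : ℝ}
    (hD0 : 0 ≤ D) (hD : ∀ y, |deriv Real.smoothTransition y| ≤ D) (hM : 0 ≤ M)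
    (hMd : ∀ j y, |deriv (chiJ χ₀ χ j) y| ≤ M * (2 ^ j)⁻¹) {s : ℝ}
    (hs : s = 1 / 2 + a / 2 ∨ s = -(1 / 2 + a / 2)) (m : ℝ × ℝ) (u v : 𝓢(ℝ × ℝ, ℂ)) :
    eX a χ₀ χ (-(1 / 2 - a / 16)) s (fun p => ‖FTS (mulD m (dprod u v)) p‖ₑ) ≤
      coreC a * lowC M * (eX a χ₀ χ (1 / 2) s (fun p => ‖FTS (mulD m u) p‖ₑ)
        * (eX a χ₀ χ (1 / 2) (1 / 2 + a / 2) (fun p => ‖FTS v p‖ₑ)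
        + (eX a χ₀ χ (1 / 2) (1 / 2 + a / 2) (fun p => ‖FTS v p‖ₑ)) ^ (1 / 2 : ℝ)
        * (eX a χ₀ χ (1 / 2) (-(1 / 2 + a / 2)) (fun p => ‖FTS (mulD (1, 0) v) p‖ₑ))
          ^ (1 / 2 : ℝ)))
      + coreC a * lowC M * (eX a χ₀ χ (1 / 2) s (fun p => ‖FTS (mulD m v) p‖ₑ)
        * (eX a χ₀ χ (1 / 2) (1 / 2 + a / 2) (fun p => ‖FTS u p‖ₑ)
        + (eX a χ₀ χ (1 / 2) (1 / 2 + a / 2) (fun p => ‖FTS u p‖ₑ)) ^ (1 / 2 : ℝ)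
        * (eX a χ₀ χ (1 / 2) (-(1 / 2 + a / 2)) (fun p => ‖FTS (mulD (1, 0) u) p‖ₑ))
          ^ (1 / 2 : ℝ)))
      + ENNReal.ofReal ((2 * D + 1) * |m.1|) * eX a χ₀ χ (-(1 / 2 - a / 16)) s
          (econv (fun p => ‖FTS u p‖ₑ) (fun p => ‖FTS v p‖ₑ)) := by
  have hmeas : ∀ w : 𝓢(ℝ × ℝ, ℂ), Measurable (fun p => ‖FTS w p‖ₑ) := fun w =>
    (FTS w).continuous.enorm.measurable
  have core : ∀ u v : 𝓢(ℝ × ℝ, ℂ), eX a χ₀ χ (-(1 / 2 - a / 16)) s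
      (bilP (fun p => ‖FTS (mulD m u) p‖ₑ) (fun p => ‖FTS v p‖ₑ)) ≤
      coreC a * lowC M * (eX a χ₀ χ (1 / 2) s (fun p => ‖FTS (mulD m u) p‖ₑ)
        * (eX a χ₀ χ (1 / 2) (1 / 2 + a / 2) (fun p => ‖FTS v p‖ₑ)
        + (eX a χ₀ χ (1 / 2) (1 / 2 + a / 2) (fun p => ‖FTS v p‖ₑ)) ^ (1 / 2 : ℝ)
        * (eX a χ₀ χ (1 / 2) (-(1 / 2 + a / 2)) (fun p => ‖FTS (mulD (1, 0) v) p‖ₑ))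
          ^ (1 / 2 : ℝ))) := fun u v => by
    have hV := (FTS v).continuous
    have hV₁ : Continuous (fun p => I * FTS (mulD (1, 0) v) p) :=
      continuous_const.mul (FTS (mulD (1, 0) v)).continuous
    have hd : ∀ x y, HasDerivAt (fun x => FTS v (x, y)) (I * FTS (mulD (1, 0) v) (x, y)) x := by
      intro x y
      have h : HasDerivAt (fun t : ℝ => FTS v ((x, y) + t • ((1 : ℝ), (0 : ℝ))))
        (I * FTS (mulD (1, 0) v) (x, y)) 0 := FTS_hasLineDerivAt (1, 0) v (x, y)
      have h' : HasDerivAt (fun t : ℝ => FTS v ((x, y) + t • ((1 : ℝ), (0 : ℝ))))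
        (I * FTS (mulD (1, 0) v) (x, y)) (x - x) := by rwa [sub_self]
      have h2 := h'.comp_sub_const x x
      have e : (fun x' : ℝ => FTS v ((x, y) + (x' - x) • ((1 : ℝ), (0 : ℝ))))
          = fun x' => FTS v (x', y) := by
        ext x'
        congr 1
        ext <;> simp
      rwa [e] at h2
    refine (core_estimate ha ha1 hχ hs (hmeas (mulD m u)) (hmeas v)
      (fun j => majG_measurable ha hχ M j hV hV₁)
      (fun j q => rchi_mul_le_majG ha ha1 hχ hM hMd hV hV₁ hd j q)).trans ?_
    refine (mul_le_mul_right (low_factor_le ha hχ v) _).trans (le_of_eq ?_)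
    ring
  have m1 := bilP_measurable (hmeas (mulD m u)) (hmeas v)
  have m2 := bilP_measurable (hmeas (mulD m v)) (hmeas u)
  have m3 := econv_measurable (hmeas u) (hmeas v)
  refine (eX_mono fun z => enorm_FTS_mulD_dprod_le hD0 hD u v z m).trans ?_
  refine (eX_add_le ha hχ (m1.add m2) (m3.const_mul _)).trans ?_
  rw [eX_const_mul ha hχ _ m3]
  gcongr
  exact (eX_add_le ha hχ m1 m2).trans (add_le_add (core u v) (core v u))

end Assembly

theorem statement9 (a : ℝ) (ha : a ∈ Set.Ioo (0 : ℝ) 1)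
    (χ₀ χ : ℝ → ℝ) (hχ : DyadicCutoffs χ₀ χ) :
    ∃ b ∈ Set.Ioo (0 : ℝ) (1 / 2), ∃ C > 0,
      ∀ u v : SchwartzMap (ℝ × ℝ) ℂ,
        Ynorm a χ₀ χ (-b) (-(1 / 2 + a / 2)) (1 / 2 + a / 2)
            (fun p : ℝ × ℝ => deriv (fun x => u (x, p.2) * v (x, p.2)) p.1) ≤
          C * Ynorm a χ₀ χ (1 / 2) (-(1 / 2 + a / 2)) (1 / 2 + a / 2) (fun p => u p) *
              (Xnorm a χ₀ χ (1 / 2) (1 / 2 + a / 2) (fun p => v p) +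
                Xnorm a χ₀ χ (1 / 2) (1 / 2 + a / 2) (fun p => v p) ^ ((1 : ℝ) / 2) *
                  Ynorm a χ₀ χ (1 / 2) (-(1 / 2 + a / 2)) (1 / 2 + a / 2)
                    (fun p => v p) ^ ((1 : ℝ) / 2)) +
            C * Ynorm a χ₀ χ (1 / 2) (-(1 / 2 + a / 2)) (1 / 2 + a / 2) (fun p => v p) *
              (Xnorm a χ₀ χ (1 / 2) (1 / 2 + a / 2) (fun p => u p) +
                Xnorm a χ₀ χ (1 / 2) (1 / 2 + a / 2) (fun p => u p) ^ ((1 : ℝ) / 2) *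
                  Ynorm a χ₀ χ (1 / 2) (-(1 / 2 + a / 2)) (1 / 2 + a / 2)
                    (fun p => u p) ^ ((1 : ℝ) / 2)) +
            C * Xnorm a χ₀ χ (1 / 2) (1 / 2 + a / 2) (fun p => u p) *
              Xnorm a χ₀ χ (1 / 2) (1 / 2 + a / 2) (fun p => v p) := by
  obtain ⟨ha0, ha1⟩ := ha
  obtain ⟨D, hD0, hD⟩ := exists_deriv_smoothTransition_le
  obtain ⟨M, hM, hMd⟩ := exists_deriv_chiJ_le hχ
  set C₀ : ℝ≥0∞ := coreC a * lowC M + ENNReal.ofReal (2 * D + 1) * prodC a with hC₀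
  have hC₀fin : C₀ ≠ ∞ := by
    have h1 := coreC_lt_top ha0
    have h2 := lowC_lt_top M
    have h3 := prodC_lt_top ha0
    exact (ENNReal.add_lt_top.2 ⟨ENNReal.mul_lt_top h1 h2,
      ENNReal.mul_lt_top ENNReal.ofReal_lt_top h3⟩).ne
  refine ⟨1 / 2 - a / 16, ⟨by linarith, by linarith⟩, C₀.toReal + 1, by positivity,
    fun u v => ?_⟩
  have hX : ∀ w : SchwartzMap (ℝ × ℝ) ℂ, Xnorm a χ₀ χ (1 / 2) (1 / 2 + a / 2) (fun p => w p)
      = (eX a χ₀ χ (1 / 2) (1 / 2 + a / 2) (fun p => ‖FTS w p‖ₑ)).toReal := fun w =>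
    Xnorm_eq_toReal ha0 ha1 hχ le_rfl (by linarith) w
  have hXfin : ∀ w : SchwartzMap (ℝ × ℝ) ℂ,
      eX a χ₀ χ (1 / 2) (1 / 2 + a / 2) (fun p => ‖FTS w p‖ₑ) ≠ ∞ := fun w =>
    (eX_schwartz_lt_top ha0 ha1 hχ le_rfl (by linarith) (FTS w)).ne
  have hXfin' : ∀ w : SchwartzMap (ℝ × ℝ) ℂ,
      eX a χ₀ χ (1 / 2) (-(1 / 2 + a / 2)) (fun p => ‖FTS w p‖ₑ) ≠ ∞ := fun w =>
    (eX_schwartz_lt_top ha0 ha1 hχ le_rfl (by linarith) (FTS w)).ne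
  have hY : ∀ (b : ℝ), b ≤ 1 / 2 → ∀ w : SchwartzMap (ℝ × ℝ) ℂ,
      Ynorm a χ₀ χ b (-(1 / 2 + a / 2)) (1 / 2 + a / 2) (fun p => w p)
      = (eX a χ₀ χ b (-(1 / 2 + a / 2)) (fun p => ‖FTS (mulD (1, 0) w) p‖ₑ)
        + eX a χ₀ χ b (1 / 2 + a / 2) (fun p => ‖FTS (mulD (0, 1) w) p‖ₑ)).toReal := by
    intro b hb w
    rw [ENNReal.toReal_add
      (eX_schwartz_lt_top ha0 ha1 hχ hb (by linarith) _).ne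
      (eX_schwartz_lt_top ha0 ha1 hχ hb (by linarith) _).ne,
      ← Xnorm_eq_toReal ha0 ha1 hχ hb (by linarith),
      ← Xnorm_eq_toReal ha0 ha1 hχ hb (by linarith), Ynorm]
    simp only [mulD_apply, mul_one, mul_zero, add_zero, zero_add]
  have hL : (fun p : ℝ × ℝ => deriv (fun x => u (x, p.2) * v (x, p.2)) p.1)
      = fun p => dprod u v p := by
    ext p; rw [dprod_apply]
  rw [hL, hY _ (by linarith), hY _ le_rfl, hY _ le_rfl, hX, hX]
  have hx := weighted_estimate ha0 ha1 hχ hD0 hD hM hMd (Or.inr rfl) (1, 0) u v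
  have ht := weighted_estimate ha0 ha1 hχ hD0 hD hM hMd (Or.inl rfl) (0, 1) u v
  have hp := prod_estimate ha0 ha1 hχ (FTS u).continuous.enorm.measurable
    (FTS v).continuous.enorm.measurable
  simp only [abs_one, mul_one, abs_zero, mul_zero, ENNReal.ofReal_zero, zero_mul, add_zero] at hx ht
  set xU := eX a χ₀ χ (1 / 2) (1 / 2 + a / 2) (fun p => ‖FTS u p‖ₑ) with hxU
  set xV := eX a χ₀ χ (1 / 2) (1 / 2 + a / 2) (fun p => ‖FTS v p‖ₑ) with hxV
  set yU := eX a χ₀ χ (1 / 2) (-(1 / 2 + a / 2)) (fun p => ‖FTS (mulD (1, 0) u) p‖ₑ) with hyU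
  set yV := eX a χ₀ χ (1 / 2) (-(1 / 2 + a / 2)) (fun p => ‖FTS (mulD (1, 0) v) p‖ₑ) with hyV
  set tU := eX a χ₀ χ (1 / 2) (1 / 2 + a / 2) (fun p => ‖FTS (mulD (0, 1) u) p‖ₑ) with htU
  set tV := eX a χ₀ χ (1 / 2) (1 / 2 + a / 2) (fun p => ‖FTS (mulD (0, 1) v) p‖ₑ) with htV
  set YU := yU + tU with hYU
  set YV := yV + tV with hYV
  have key : eX a χ₀ χ (-(1 / 2 - a / 16)) (-(1 / 2 + a / 2))
        (fun p => ‖FTS (mulD (1, 0) (dprod u v)) p‖ₑ)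
      + eX a χ₀ χ (-(1 / 2 - a / 16)) (1 / 2 + a / 2)
        (fun p => ‖FTS (mulD (0, 1) (dprod u v)) p‖ₑ)
      ≤ C₀ * (YU * (xV + xV ^ (1 / 2 : ℝ) * YV ^ (1 / 2 : ℝ))
        + YV * (xU + xU ^ (1 / 2 : ℝ) * YU ^ (1 / 2 : ℝ)) + xU * xV) := by
    set k := coreC a * lowC M
    have e1 : xV ^ (1 / 2 : ℝ) * yV ^ (1 / 2 : ℝ) ≤ xV ^ (1 / 2 : ℝ) * YV ^ (1 / 2 : ℝ) := by
      gcongr; exact le_self_add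
    have e2 : xU ^ (1 / 2 : ℝ) * yU ^ (1 / 2 : ℝ) ≤ xU ^ (1 / 2 : ℝ) * YU ^ (1 / 2 : ℝ) := by
      gcongr; exact le_self_add
    calc _ ≤ (k * (yU * (xV + xV ^ (1 / 2 : ℝ) * YV ^ (1 / 2 : ℝ)))
          + k * (yV * (xU + xU ^ (1 / 2 : ℝ) * YU ^ (1 / 2 : ℝ)))
          + ENNReal.ofReal (2 * D + 1) * (prodC a * xU * xV))
          + (k * (tU * (xV + xV ^ (1 / 2 : ℝ) * YV ^ (1 / 2 : ℝ)))
          + k * (tV * (xU + xU ^ (1 / 2 : ℝ) * YU ^ (1 / 2 : ℝ)))) := by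
          refine add_le_add (hx.trans ?_) (ht.trans ?_)
          · gcongr
          · gcongr
      _ = k * (YU * (xV + xV ^ (1 / 2 : ℝ) * YV ^ (1 / 2 : ℝ))
          + YV * (xU + xU ^ (1 / 2 : ℝ) * YU ^ (1 / 2 : ℝ)))
          + ENNReal.ofReal (2 * D + 1) * prodC a * (xU * xV) := by
          rw [hYU, hYV]; ring
      _ ≤ C₀ * (YU * (xV + xV ^ (1 / 2 : ℝ) * YV ^ (1 / 2 : ℝ))
          + YV * (xU + xU ^ (1 / 2 : ℝ) * YU ^ (1 / 2 : ℝ))) + C₀ * (xU * xV) := by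
          gcongr
          · exact le_self_add
          · exact le_add_self
      _ = _ := by ring
  have fxU : xU ≠ ∞ := hXfin _
  have fxV : xV ≠ ∞ := hXfin _
  have fYU : YU ≠ ∞ := ENNReal.add_ne_top.2 ⟨hXfin' _, hXfin _⟩
  have fYV : YV ≠ ∞ := ENNReal.add_ne_top.2 ⟨hXfin' _, hXfin _⟩
  have rp : ∀ y : ℝ≥0∞, y ≠ ∞ → y ^ (1 / 2 : ℝ) ≠ ∞ := fun y hy =>
    ENNReal.rpow_ne_top_of_nonneg (by norm_num) hy
  have f1 : xV + xV ^ (1 / 2 : ℝ) * YV ^ (1 / 2 : ℝ) ≠ ∞ :=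
    ENNReal.add_ne_top.2 ⟨fxV, ENNReal.mul_ne_top (rp _ fxV) (rp _ fYV)⟩
  have f2 : xU + xU ^ (1 / 2 : ℝ) * YU ^ (1 / 2 : ℝ) ≠ ∞ :=
    ENNReal.add_ne_top.2 ⟨fxU, ENNReal.mul_ne_top (rp _ fxU) (rp _ fYU)⟩
  have f3 := ENNReal.mul_ne_top fYU f1
  have f4 := ENNReal.mul_ne_top fYV f2
  have f5 := ENNReal.mul_ne_top fxU fxV
  have hreal := ENNReal.toReal_mono (ENNReal.mul_ne_top hC₀fin
    (ENNReal.add_ne_top.2 ⟨ENNReal.add_ne_top.2 ⟨f3, f4⟩, f5⟩)) key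
  refine hreal.trans ?_
  rw [ENNReal.toReal_mul, ENNReal.toReal_add (ENNReal.add_ne_top.2 ⟨f3, f4⟩) f5,
    ENNReal.toReal_add f3 f4, ENNReal.toReal_mul, ENNReal.toReal_mul, ENNReal.toReal_mul,
    ENNReal.toReal_add fxV (ENNReal.mul_ne_top (rp _ fxV) (rp _ fYV)),
    ENNReal.toReal_add fxU (ENNReal.mul_ne_top (rp _ fxU) (rp _ fYU)),
    ENNReal.toReal_mul, ENNReal.toReal_mul]
  simp only [← ENNReal.toReal_rpow]
  set Q₁ := YU.toReal * (xV.toReal + xV.toReal ^ (1 / 2 : ℝ) * YV.toReal ^ (1 / 2 : ℝ)) with hQ₁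
  set Q₂ := YV.toReal * (xU.toReal + xU.toReal ^ (1 / 2 : ℝ) * YU.toReal ^ (1 / 2 : ℝ)) with hQ₂
  have q1 : 0 ≤ Q₁ := by positivity
  have q2 : 0 ≤ Q₂ := by positivity
  have q3 : 0 ≤ xU.toReal * xV.toReal := by positivity
  calc C₀.toReal * (Q₁ + Q₂ + xU.toReal * xV.toReal)
      ≤ (C₀.toReal + 1) * (Q₁ + Q₂ + xU.toReal * xV.toReal) := by gcongr; linarith
    _ = _ := by rw [hQ₁, hQ₂]; ring
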